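/- arXiv:1611.09719 — 2 statements merged into one kernel-verified Lean document; each statement's English description precedes it below -/
import Mathlib

section
/- Let T ∈ (0,1], β > −2, ρ ∈ (−2,0], let n ∈ ℕ satisfy β+1 ≤ n < β+2, let r ∈ ℕ satisfy r > |β|, and let M > 0. For ε = 2^{−N} let ζ^ε : (ε²ℤ ∩ (0,T]) × 𝕋_ε → ℝ (1-periodic in space) satisfy |t|_ε^{−ρ} λ^{−β} |⟨ζ^ε(t,·), φ_x^λ⟩_ε| ≤ M for all t ∈ ε²ℤ ∩ (0,T], x ∈ 𝕋_ε, λ ∈ [ε,1] and φ ∈ B^r_0. Set P^{(ε,n)} := D_{x,ε}^n P^ε and (P^{(ε,n)} ∗_ε ζ^ε)(t,x) := ε² Σ_{s ∈ ε²ℤ ∩ (0,t]} ⟨ζ^ε(s,·), P^{(ε,n)}(t−s, x−·)⟩_ε. Then for every θ₁ ∈ (0, β−n+2) and θ₂ ∈ ℝ with θ := θ₁ − θ₂ > 0, setting β̄ := β+2−n−θ₁ and ρ̄ := ρ+θ₂, there is a constant C independent of ε, M, T and ζ^ε such that sup_{z=(t,x)} |t|_ε^{−(ρ̄+β̄)}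 |(P^{(ε,n)} ∗_ε ζ^ε)(z)| + sup_{z=(t,x)} sup_{z̄=(t̄,x̄)≠z, |t̄−t|≤|t,t̄|_ε²} |(P^{(ε,n)} ∗_ε ζ^ε)(z̄) − (P^{(ε,n)} ∗_ε ζ^ε)(z)| / (|t,t̄|_ε^{ρ̄} ‖z̄−z‖_s^{β̄}) ≤ C M |T|_ε^{θ}, where the suprema run over (ε²ℤ ∩ (0,T]) × 𝕋_ε, |t,t̄|_ε := |t|_ε ∧ |t̄|_ε and |T|_ε := T^{1/2} ∨ ε. -/
open Real

noncomputable section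

/-- `φ ∈ B^r_0`: a smooth function supported in `[-1,1]` whose derivatives up to
order `r` are bounded by `1`. -/
def IsTestFunction (r : ℕ) (φ : ℝ → ℝ) : Prop :=
  ContDiff ℝ (⊤ : ℕ∞) φ ∧ (∀ y : ℝ, y ∉ Set.Icc (-1 : ℝ) 1 → φ y = 0) ∧
    ∀ j ≤ r, ∀ y : ℝ, |iteratedDeriv j φ y| ≤ 1

/-- One step of the operator `Id + ε²Δ_ε` on grid functions (indexed form; the
powers of `ε` cancel). Here `Δ_ε φ(x) = (2ν̄ε²)⁻¹ Σ_k a(k) φ(x+εk)` with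
`ν̄ = Σ_k |a(k)|`. -/
def gridStep (a : ℤ →₀ ℝ) (f : ℤ → ℝ) : ℤ → ℝ :=
  fun j => f j + (2 * ∑ k ∈ a.support, |a k|)⁻¹ * ∑ k ∈ a.support, a k * f (j + k)

/-- `(Id + ε²Δ_ε)^n δ₀` on grid indices, so that the grid discrete heat kernel
is `P^ε(nε², εj) = ε⁻¹ · gridHeat a n j`. -/
def gridHeat (a : ℤ →₀ ℝ) (n : ℕ) : ℤ → ℝ :=
  (gridStep a)^[n] (fun j => if j = 0 then 1 else 0)

/-- `ε · D_{x,ε}` on grid functions (indexed form), i.e. `f ↦ Σ_k b(k) f(·+k)`. -/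
def gridDerivStep (b : ℤ →₀ ℝ) (f : ℤ → ℝ) : ℤ → ℝ :=
  fun j => ∑ k ∈ b.support, b k * f (j + k)

/-- `P^{(ε,n)}(Mε², εj) = ε^{-1-n} · gridHeatDeriv a b n M j`, the `n`-th
discrete spatial derivative of the grid discrete heat kernel (up to the factor
`ε^{-1-n}`). -/
def gridHeatDeriv (a b : ℤ →₀ ℝ) (n M : ℕ) : ℤ → ℝ :=
  (gridDerivStep b)^[n] (gridHeat a M)

/-- `|t|_ε = |t|^{1/2} ∨ ε`. -/
def teps (ε t : ℝ) : ℝ := max (Real.sqrt |t|) ε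

/-- The discrete space-time convolution
`(P^{(ε,n)} ∗_ε ζ)(ε²M, εk) = ε² Σ_{s∈ε²ℤ∩(0,ε²M]} ⟨ζ(s,·), P^{(ε,n)}(ε²M-s, εk-·)⟩_ε`,
where `ζ m j` is the value of `ζ` at the grid point `(ε² m, ε j)`. -/
def dheatConv (a b : ℤ →₀ ℝ) (n : ℕ) (ε : ℝ) (ζ : ℕ → ℤ → ℝ) (M : ℕ) (k : ℤ) : ℝ :=
  ε ^ 2 * ∑ m ∈ Finset.Icc 1 M,
    ε * ∑' j : ℤ, ζ m j * ((ε ^ (n + 1))⁻¹ * gridHeatDeriv a b n (M - m) (k - j))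

/-!
Let `p` be the Laurent polynomial of one step of the heat flow; functions on the grid are convolved
with Laurent polynomials, whose size is measured by the `ℓ¹` norm of the coefficients.

*Pairing with the noise.* Truncating the Green function `|i| / 2` at scale `2 ^ L` gives
`1 = (T - 2 + T⁻¹) * G + R`, where `G` and `R` are sampled from compactly supported functions.
Hence pairing the noise with a kernel `f` costs `‖f‖₁ + 4 ^ L * ‖(T - 1) ^ 2 * f‖₁` times the size
of the noise at scale `2 ^ L`: the dyadic shells of `G` are rescaled test functions, and their
contributions add up to that of the largest one because `β > -2`.

*The kernel.* The symbol of `p ^ m` is bounded by a Gaussian `exp (-c * m * θ ^ 2)`, so Carlson's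
inequality gives `‖(T - 1) ^ κ * p ^ m‖₁ ≲ (m + 1) ^ (-κ / 2)`. With `2 ^ L ≈ √(m + 1)`, the
pairing with `(T - 1) ^ κ * p ^ m` is of order `(m + 1) ^ ((β - κ) / 2)`.

*The convolution.* For the sup bound, sum over the times of the noise. A spatial increment of the
kernel is a multiple of `T - 1` and a temporal one of `p - 1`, hence of `(T - 1) ^ 2`; interpolating
between the bounds with and without the extra differences gives the Hölder bound. The times that
only the later of the two points sees contribute little because `n < β + 2`.
-/

section LaurentPolynomial

open LaurentPolynomial

/-- The `ℓ¹` norm of the coefficients. A Laurent polynomial stands for the finitely supported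
convolution kernel on `ℤ` formed by its coefficients; the product is then convolution of kernels. -/
def l1Norm : Seminorm ℝ ℝ[T;T⁻¹] :=
  Seminorm.of (fun f => f.coeff.sum fun _ c => |c|)
    (fun f g => by
      classical
      have hf := Finsupp.sum_of_support_subset f.coeff
        (Finset.subset_union_left (s₂ := g.coeff.support)) (fun _ c => |c|) (by simp)
      have hg := Finsupp.sum_of_support_subset g.coeff
        (Finset.subset_union_right (s₁ := f.coeff.support)) (fun _ c => |c|) (by simp)
      have hfg := Finsupp.sum_of_support_subset (f + g).coeff
        (AddMonoidAlgebra.coeff_add f g ▸ Finsupp.support_add) (fun _ c => |c|) (by simp)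
      rw [hf, hg, hfg, ← Finset.sum_add_distrib]
      exact Finset.sum_le_sum fun i _ => abs_add_le _ _)
    (fun c f => by
      rw [AddMonoidAlgebra.coeff_smul, Finsupp.sum_smul_index (by simp), Real.norm_eq_abs,
        Finsupp.mul_sum]
      simp only [abs_mul])

lemma l1Norm_apply (f : ℝ[T;T⁻¹]) : l1Norm f = ∑ k ∈ f.coeff.support, |f.coeff k| := rfl

lemma l1Norm_sum_le {ι : Type*} (s : Finset ι) (f : ι → ℝ[T;T⁻¹]) :
    l1Norm (∑ i ∈ s, f i) ≤ ∑ i ∈ s, l1Norm (f i) :=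
  Finset.le_sum_of_subadditive l1Norm (map_zero _).le (map_add_le_add _) s f

@[simp]
lemma l1Norm_T (k : ℤ) : l1Norm (T k) = 1 := by
  exact (Finsupp.sum_single_index abs_zero).trans abs_one

@[simp]
lemma l1Norm_one : l1Norm 1 = 1 := by
  rw [← T_zero, l1Norm_T]

lemma sum_smul_T (f : ℝ[T;T⁻¹]) : ∑ k ∈ f.coeff.support, f.coeff k • T k = f := by
  simpa only [Finsupp.sum, T, AddMonoidAlgebra.smul_single, smul_eq_mul, mul_one] using
    AddMonoidAlgebra.sum_coeff_single f

lemma l1Norm_T_mul_le (k : ℤ) (g : ℝ[T;T⁻¹]) : l1Norm (T k * g) ≤ l1Norm g := by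
  conv_lhs => rw [← sum_smul_T g, Finset.mul_sum]
  refine (l1Norm_sum_le _ _).trans (Finset.sum_le_sum fun j _ => le_of_eq ?_)
  rw [mul_smul_comm, map_smul_eq_mul, ← T_add, l1Norm_T, mul_one, Real.norm_eq_abs]

lemma l1Norm_mul_le (f g : ℝ[T;T⁻¹]) : l1Norm (f * g) ≤ l1Norm f * l1Norm g := by
  conv_lhs => rw [← sum_smul_T f, Finset.sum_mul]
  rw [l1Norm_apply f, Finset.sum_mul]
  refine (l1Norm_sum_le _ _).trans (Finset.sum_le_sum fun j _ => ?_)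
  rw [smul_mul_assoc, map_smul_eq_mul, Real.norm_eq_abs]
  exact mul_le_mul_of_nonneg_left (l1Norm_T_mul_le j g) (abs_nonneg _)

/-- The value at `k` of the convolution of the function `Z` on `ℤ` with the kernel encoded by a
Laurent polynomial. -/
def convAt (Z : ℤ → ℝ) (k : ℤ) : ℝ[T;T⁻¹] →ₗ[ℝ] ℝ :=
  Finsupp.linearCombination ℝ (fun i => Z (k - i)) ∘ₗ
    (AddMonoidAlgebra.coeffLinearEquiv ℝ).toLinearMap

lemma convAt_apply (Z : ℤ → ℝ) (k : ℤ) (f : ℝ[T;T⁻¹]) :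
    convAt Z k f = ∑ i ∈ f.coeff.support, f.coeff i * Z (k - i) := rfl

lemma convAt_T (Z : ℤ → ℝ) (k i : ℤ) : convAt Z k (T i) = Z (k - i) := by
  exact (Finsupp.linearCombination_single ℝ 1 i).trans (one_smul ℝ _)

lemma convAt_T_mul (Z : ℤ → ℝ) (k i : ℤ) (f : ℝ[T;T⁻¹]) :
    convAt Z k (T i * f) = convAt Z (k - i) f := by
  rw [← sum_smul_T f]
  simp only [Finset.mul_sum, mul_smul_comm, map_sum, map_smul, ← T_add, convAt_T, sub_sub]

lemma abs_convAt_mul_le (Z : ℤ → ℝ) {g : ℝ[T;T⁻¹]} {B : ℝ} (hB : ∀ k, |convAt Z k g| ≤ B)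
    (f : ℝ[T;T⁻¹]) (k : ℤ) : |convAt Z k (f * g)| ≤ l1Norm f * B := by
  conv_lhs => rw [← sum_smul_T f, Finset.sum_mul, map_sum]
  rw [l1Norm_apply, Finset.sum_mul]
  refine (Finset.abs_sum_le_sum_abs _ _).trans (Finset.sum_le_sum fun j _ => ?_)
  rw [smul_mul_assoc, map_smul, smul_eq_mul, convAt_T_mul, abs_mul]
  exact mul_le_mul_of_nonneg_left (hB _) (abs_nonneg _)

lemma tsum_mul_coeff_sub (Z : ℤ → ℝ) (k : ℤ) (f : ℝ[T;T⁻¹]) :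
    ∑' j : ℤ, Z j * f.coeff (k - j) = convAt Z k f := by
  rw [← (Equiv.subLeft k).tsum_eq, convAt_apply, tsum_eq_sum (s := f.coeff.support)]
  · exact Finset.sum_congr rfl fun i _ => by simp [mul_comm]
  · intro i hi
    simp [Finsupp.notMem_support_iff.mp hi]

/-! ### Stencils and the discrete heat kernel -/

/-- The Laurent polynomial of the difference operator `f ↦ ∑ k, b k * f (· + k)`. -/
def stencil (b : ℤ →₀ ℝ) : ℝ[T;T⁻¹] :=
  ∑ k ∈ b.support, b k • T (-k)

/-- The Laurent polynomial of one step `Id + ε²Δ_ε` of the discrete heat flow. -/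
def heatStep (a : ℤ →₀ ℝ) : ℝ[T;T⁻¹] :=
  1 + (2 * ∑ k ∈ a.support, |a k|)⁻¹ • stencil a

lemma coeff_stencil_mul (b : ℤ →₀ ℝ) (f : ℝ[T;T⁻¹]) (j : ℤ) :
    (stencil b * f).coeff j = ∑ k ∈ b.support, b k * f.coeff (j + k) := by
  rw [stencil, Finset.sum_mul, AddMonoidAlgebra.coeff_sum, Finset.sum_apply']
  refine Finset.sum_congr rfl fun k _ => ?_
  rw [smul_mul_assoc, AddMonoidAlgebra.coeff_smul, Finsupp.smul_apply, T,
    AddMonoidAlgebra.coeff_single_mul_apply, neg_neg, one_mul, smul_eq_mul, add_comm]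

lemma gridHeat_eq_coeff (a : ℤ →₀ ℝ) (m : ℕ) :
    gridHeat a m = fun j => (heatStep a ^ m).coeff j := by
  induction m with
  | zero =>
    funext j
    rw [pow_zero, ← T_zero, T_apply]
    simp only [gridHeat, Function.iterate_zero, id, eq_comm]
  | succ m ih =>
    rw [gridHeat, Function.iterate_succ_apply', ← gridHeat, ih]
    funext j
    rw [gridStep, pow_succ', heatStep, add_mul, one_mul, smul_mul_assoc,
      AddMonoidAlgebra.coeff_add, Finsupp.add_apply, AddMonoidAlgebra.coeff_smul,
      Finsupp.smul_apply, coeff_stencil_mul, smul_eq_mul]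

lemma gridHeatDeriv_eq_coeff (a b : ℤ →₀ ℝ) (n m : ℕ) :
    gridHeatDeriv a b n m = fun j => (stencil b ^ n * heatStep a ^ m).coeff j := by
  induction n with
  | zero => simp [gridHeatDeriv, gridHeat_eq_coeff]
  | succ n ih =>
    rw [gridHeatDeriv, Function.iterate_succ_apply', ← gridHeatDeriv, ih]
    funext j
    rw [gridDerivStep, pow_succ', mul_assoc, coeff_stencil_mul]

lemma dheatConv_eq_sum_convAt (a b : ℤ →₀ ℝ) (n : ℕ) (ε : ℝ) (ζ : ℕ → ℤ → ℝ) (M : ℕ) (k : ℤ) :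
    dheatConv a b n ε ζ M k = ε ^ 3 * (ε ^ (n + 1))⁻¹ *
      ∑ m ∈ Finset.Icc 1 M, convAt (ζ m) k (stencil b ^ n * heatStep a ^ (M - m)) := by
  simp only [dheatConv, gridHeatDeriv_eq_coeff, ← tsum_mul_coeff_sub, mul_left_comm _ (_)⁻¹,
    tsum_mul_left, Finset.mul_sum]
  exact Finset.sum_congr rfl fun m _ => by ring

/-! ### Divisibility by powers of `T 1 - 1` -/

lemma exists_T_sub_one_eq_mul (h : ℤ) :
    ∃ w : ℝ[T;T⁻¹], T h - 1 = (T 1 - 1) * w ∧ l1Norm w ≤ |(h : ℝ)| := by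
  have of_nat (n : ℕ) : ∃ w : ℝ[T;T⁻¹], T n - 1 = (T 1 - 1) * w ∧ l1Norm w ≤ n := by
    refine ⟨∑ i ∈ Finset.range n, T 1 ^ i, ?_, (l1Norm_sum_le _ _).trans ?_⟩
    · rw [mul_geom_sum, T_pow, mul_one]
    · simp [T_pow]
  obtain ⟨n, rfl | rfl⟩ := h.eq_nat_or_neg <;> obtain ⟨w, hw, hwn⟩ := of_nat n
  · exact ⟨w, hw, by simpa using hwn⟩
  · refine ⟨-(T (-n) * w), ?_, ?_⟩
    · rw [mul_neg, mul_left_comm, ← hw, mul_sub, ← T_add, neg_add_cancel, T_zero]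
      ring
    · rw [map_neg_eq_map]
      simpa using (l1Norm_T_mul_le _ w).trans hwn

lemma stencil_eq_sum_T_sub_one {b : ℤ →₀ ℝ} (hb : ∑ k ∈ b.support, b k = 0) :
    stencil b = ∑ k ∈ b.support, b k • (T (-k) - 1) := by
  simp only [stencil, smul_sub, Finset.sum_sub_distrib, ← Finset.sum_smul, hb, zero_smul, sub_zero]

lemma T_sub_one_dvd_stencil {b : ℤ →₀ ℝ} (hb : ∑ k ∈ b.support, b k = 0) :
    T 1 - 1 ∣ stencil b := by
  rw [stencil_eq_sum_T_sub_one hb]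
  refine Finset.dvd_sum fun k _ => dvd_smul_of_dvd _ ?_
  obtain ⟨w, hw, -⟩ := exists_T_sub_one_eq_mul (-k)
  exact ⟨w, hw⟩

lemma stencil_eq_sum_T_sub_one_sq {a : ℤ →₀ ℝ} (ha_symm : ∀ k, a (-k) = a k)
    (ha0 : ∑ k ∈ a.support, a k = 0) :
    stencil a = ∑ k ∈ a.support, (a k / 2) • (T (-k) * (T k - 1) ^ 2) := by
  have reflect : ∑ k ∈ a.support, a k • (T k : ℝ[T;T⁻¹]) = stencil a :=
    Finset.sum_nbij' Neg.neg Neg.neg (by simp [ha_symm]) (by simp [ha_symm]) (by simp) (by simp)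
      (by simp [ha_symm])
  have square (k : ℤ) : (T (-k) * (T k - 1) ^ 2 : ℝ[T;T⁻¹]) = T k + T (-k) - 2 := by
    have : (T (-k) * T k : ℝ[T;T⁻¹]) = 1 := by rw [← T_add, neg_add_cancel, T_zero]
    linear_combination (T k - 2) * this
  calc stencil a = (2 : ℝ)⁻¹ • (stencil a + stencil a - (2 * ∑ k ∈ a.support, a k) • 1) := by
        rw [ha0, mul_zero, zero_smul, sub_zero, ← two_smul ℝ, smul_smul,
          inv_mul_cancel₀ two_ne_zero, one_smul]
    _ = ∑ k ∈ a.support, (a k / 2) • (T (-k) * (T k - 1) ^ 2) := by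
        nth_rw 1 [← reflect]
        rw [stencil, ← Finset.sum_add_distrib, Finset.mul_sum, Finset.sum_smul,
          ← Finset.sum_sub_distrib, Finset.smul_sum]
        refine Finset.sum_congr rfl fun k _ => ?_
        rw [square]
        have two_eq : (2 : ℝ[T;T⁻¹]) = (2 : ℝ) • 1 := by rw [ofNat_smul_eq_nsmul]; simp
        rw [two_eq]
        module

lemma T_sub_one_sq_dvd_stencil {a : ℤ →₀ ℝ} (ha_symm : ∀ k, a (-k) = a k)
    (ha0 : ∑ k ∈ a.support, a k = 0) : (T 1 - 1) ^ 2 ∣ stencil a := by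
  rw [stencil_eq_sum_T_sub_one_sq ha_symm ha0]
  refine Finset.dvd_sum fun k _ => dvd_smul_of_dvd _ (Dvd.dvd.mul_left (pow_dvd_pow_of_dvd ?_ 2) _)
  obtain ⟨w, hw, -⟩ := exists_T_sub_one_eq_mul k
  exact ⟨w, hw⟩

end LaurentPolynomial

section Fourier

open LaurentPolynomial MeasureTheory

/-! ### Fourier symbols -/

/-- The Fourier symbol `θ ↦ ∑ k, f_k e^{2πikθ}` of the kernel encoded by a Laurent polynomial. -/
def symbol : ℝ[T;T⁻¹] →ₐ[ℝ] (ℝ → ℂ) :=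
  AddMonoidAlgebra.lift ℝ (ℝ → ℂ) ℤ
    { toFun := fun k θ => fourier k.toAdd (θ : UnitAddCircle)
      map_one' := by
        funext θ
        exact fourier_zero
      map_mul' := fun k l => by
        funext θ
        exact fourier_add }

lemma symbol_T (k : ℤ) : symbol (T k) = fun θ : ℝ => fourier k (θ : UnitAddCircle) :=
  (AddMonoidAlgebra.lift_single _ k (1 : ℝ)).trans (one_smul ℝ _)

lemma symbol_T_apply (k : ℤ) (θ : ℝ) :
    symbol (T k) θ = Complex.exp (Complex.I * ((2 * π * k * θ : ℝ) : ℂ)) := by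
  rw [symbol_T]
  refine fourier_coe_apply.trans ?_
  congr 1
  push_cast
  ring

lemma norm_symbol_T (k : ℤ) (θ : ℝ) : ‖symbol (T k) θ‖ = 1 := by
  rw [symbol_T_apply, mul_comm, Complex.norm_exp_ofReal_mul_I]

lemma hasDerivAt_symbol_T (k : ℤ) (θ : ℝ) :
    HasDerivAt (symbol (T k)) (2 * π * Complex.I * k * symbol (T k) θ) θ := by
  simpa [symbol_T] using hasDerivAt_fourier 1 k θ

lemma symbol_apply (f : ℝ[T;T⁻¹]) (θ : ℝ) :
    symbol f θ = ∑ k ∈ f.coeff.support, (f.coeff k : ℂ) * symbol (T k) θ := by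
  conv_lhs => rw [← sum_smul_T f]
  simp [Finset.sum_apply]

lemma hasDerivAt_symbol (f : ℝ[T;T⁻¹]) (θ : ℝ) :
    HasDerivAt (symbol f)
      (∑ k ∈ f.coeff.support, (f.coeff k : ℂ) * (2 * π * Complex.I * k) * symbol (T k) θ) θ := by
  rw [funext (symbol_apply f)]
  refine HasDerivAt.fun_sum fun k _ => ?_
  rw [mul_assoc]
  exact (hasDerivAt_symbol_T k θ).const_mul _

lemma differentiable_symbol (f : ℝ[T;T⁻¹]) : Differentiable ℝ (symbol f) :=
  fun θ => (hasDerivAt_symbol f θ).differentiableAt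

lemma deriv_symbol (f : ℝ[T;T⁻¹]) :
    deriv (symbol f) = fun θ => ∑ k ∈ f.coeff.support,
      (f.coeff k : ℂ) * (2 * π * Complex.I * k) * symbol (T k) θ :=
  funext fun θ => (hasDerivAt_symbol f θ).deriv

lemma continuous_deriv_symbol (f : ℝ[T;T⁻¹]) : Continuous (deriv (symbol f)) := by
  rw [deriv_symbol]
  exact continuous_finsetSum _ fun k _ => (differentiable_symbol (T k)).continuous.const_mul _

lemma integral_norm_sq_sum_symbol_T (s : Finset ℤ) (c : ℤ → ℂ) :
    ∫ θ in (-(1 / 2) : ℝ)..(1 / 2), ‖∑ k ∈ s, c k * symbol (T k) θ‖ ^ 2 = ∑ k ∈ s, ‖c k‖ ^ 2 := by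
  set F : C(UnitAddCircle, ℂ) := ∑ k ∈ s, c k • fourier k
  have toLp_F :
      ContinuousMap.toLp 2 AddCircle.haarAddCircle ℂ F = ∑ k ∈ s, c k • fourierLp 2 k := by
    simp [F, fourierLp]
  have inner_F := ContinuousMap.inner_toLp (𝕜 := ℂ) AddCircle.haarAddCircle F F
  rw [toLp_F, orthonormal_fourier.inner_sum] at inner_F
  have F_apply (θ : ℝ) : F θ = ∑ k ∈ s, c k * symbol (T k) θ := by simp [F, symbol_T]
  have volume_eq : (volume : Measure UnitAddCircle) = AddCircle.haarAddCircle := by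
    simp [AddCircle.volume_eq_smul_haarAddCircle]
  have integral_F : ∫ θ in (-(1 / 2) : ℝ)..(1 / 2), ‖∑ k ∈ s, c k * symbol (T k) θ‖ ^ 2 =
      ∫ x, ‖F x‖ ^ 2 ∂AddCircle.haarAddCircle := by
    simp only [← F_apply]
    rw [← volume_eq, ← UnitAddCircle.intervalIntegral_preimage (-(1 / 2))]
    norm_num
  rw [integral_F]
  simp only [Complex.mul_conj', Complex.conj_mul'] at inner_F
  exact_mod_cast inner_F.symm

lemma integral_norm_sq_symbol (f : ℝ[T;T⁻¹]) :
    ∫ θ in (-(1 / 2) : ℝ)..(1 / 2), ‖symbol f θ‖ ^ 2 =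
      ∑ k ∈ f.coeff.support, f.coeff k ^ 2 := by
  simpa [symbol_apply f] using integral_norm_sq_sum_symbol_T f.coeff.support (fun k => f.coeff k)

lemma integral_norm_sq_deriv_symbol (f : ℝ[T;T⁻¹]) :
    ∫ θ in (-(1 / 2) : ℝ)..(1 / 2), ‖deriv (symbol f) θ‖ ^ 2 =
      ∑ k ∈ f.coeff.support, (2 * π * k) ^ 2 * f.coeff k ^ 2 := by
  rw [deriv_symbol, integral_norm_sq_sum_symbol_T]
  refine Finset.sum_congr rfl fun k _ => ?_
  simp only [norm_mul, Complex.norm_real, Complex.norm_I, Complex.norm_intCast, Complex.norm_ofNat,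
    Real.norm_eq_abs, mul_pow, sq_abs, mul_one]
  ring

/-! ### The Carlson inequality -/

/-- Telescoping, after comparison with `1 / ((A + i) ^ 2 - 1 / 4)`. -/
lemma sum_range_inv_sq_add_sq_le {A : ℝ} (hA : 1 ≤ A) (n : ℕ) :
    ∑ i ∈ Finset.range n, (A ^ 2 + (i : ℝ) ^ 2)⁻¹ ≤ 2 / (A - 1 / 2) - 2 / (A + n - 1 / 2) := by
  induction n with
  | zero => simp
  | succ n ih =>
    have step : (A ^ 2 + (n : ℝ) ^ 2)⁻¹ ≤ 2 / (A + n - 1 / 2) - 2 / (A + n + 1 / 2) := by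
      rw [div_sub_div _ _ (by linarith) (by linarith), inv_eq_one_div,
        div_le_div_iff₀ (by positivity) (by apply mul_pos <;> linarith)]
      nlinarith [sq_nonneg (A - n)]
    rw [Finset.sum_range_succ, Nat.cast_succ, show A + (n + 1) - 1 / 2 = A + n + 1 / 2 by ring]
    linarith

lemma sum_int_inv_sq_add_sq_le {A : ℝ} (hA : 1 ≤ A) (s : Finset ℤ) :
    ∑ k ∈ s, (A ^ 2 + (k : ℝ) ^ 2)⁻¹ ≤ 8 / A := by
  have partial_sum_le (n : ℕ) : ∑ i ∈ Finset.range n, (A ^ 2 + (i : ℝ) ^ 2)⁻¹ ≤ 4 / A := by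
    refine (sum_range_inv_sq_add_sq_le hA n).trans ?_
    have : 0 ≤ 2 / (A + n - 1 / 2) := div_nonneg two_pos.le (by linarith [n.cast_nonneg (α := ℝ)])
    have : 2 / (A - 1 / 2) ≤ 4 / A := by
      rw [div_le_div_iff₀ (by linarith) (by linarith)]
      linarith
    linarith
  let f : ℤ → ℝ := fun k => (A ^ 2 + (k : ℝ) ^ 2)⁻¹
  have f_nonneg (k : ℤ) : 0 ≤ f k := by positivity
  have f_reflect (i : ℕ) : f (-(i + 1)) = f (i + 1 : ℕ) := by
    simp only [f, Int.cast_neg, neg_sq, Nat.cast_succ]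
  have summable_nat : Summable fun i : ℕ => f i :=
    summable_of_sum_range_le (fun i => f_nonneg i) partial_sum_le
  have tsum_nat_le : ∑' i : ℕ, f i ≤ 4 / A := summable_nat.tsum_le_of_sum_range_le partial_sum_le
  have summable_neg : Summable fun i : ℕ => f (-(i + 1)) := by
    simp only [f_reflect]
    exact (summable_nat_add_iff (f := fun i : ℕ => f i) 1).mpr summable_nat
  have tsum_neg_le : ∑' i : ℕ, f (-(i + 1)) ≤ 4 / A := by
    simp only [f_reflect]
    rw [summable_nat.tsum_eq_zero_add] at tsum_nat_le
    exact (le_add_of_nonneg_left (f_nonneg _)).trans tsum_nat_le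
  calc ∑ k ∈ s, f k ≤ ∑' k, f k :=
        (summable_nat.of_nat_of_neg_add_one summable_neg).sum_le_tsum s fun k _ => f_nonneg k
    _ = ∑' i : ℕ, f i + ∑' i : ℕ, f (-(i + 1)) :=
        tsum_of_nat_of_neg_add_one summable_nat summable_neg
    _ ≤ 8 / A := (add_le_add tsum_nat_le tsum_neg_le).trans_eq (by ring)

/-- Carlson's inequality, by Cauchy-Schwarz with weights `A² + k²` and Parseval's identity. -/
lemma sq_l1Norm_le {A : ℝ} (hA : 1 ≤ A) (f : ℝ[T;T⁻¹]) :
    l1Norm f ^ 2 ≤ 8 / A * (A ^ 2 * (∫ θ in (-(1 / 2) : ℝ)..(1 / 2), ‖symbol f θ‖ ^ 2) +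
      ∫ θ in (-(1 / 2) : ℝ)..(1 / 2), ‖deriv (symbol f) θ‖ ^ 2) := by
  have one_le_two_pi_sq : 1 ≤ (2 * π) ^ 2 := one_le_pow₀ (by linarith [Real.pi_gt_three])
  have cauchy_schwarz : l1Norm f ^ 2 ≤ (∑ k ∈ f.coeff.support, (A ^ 2 + (k : ℝ) ^ 2)⁻¹) *
      ∑ k ∈ f.coeff.support, (A ^ 2 + (k : ℝ) ^ 2) * f.coeff k ^ 2 := by
    rw [l1Norm_apply]
    refine Finset.sum_sq_le_sum_mul_sum_of_sq_le_mul _ (fun k _ => by positivity)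
      (fun k _ => by positivity) fun k _ => ?_
    rw [sq_abs, inv_mul_cancel_left₀ (by positivity)]
  refine cauchy_schwarz.trans (mul_le_mul (sum_int_inv_sq_add_sq_le hA _) ?_
    (Finset.sum_nonneg fun k _ => by positivity) (by positivity))
  rw [integral_norm_sq_symbol, integral_norm_sq_deriv_symbol, Finset.mul_sum,
    ← Finset.sum_add_distrib]
  refine Finset.sum_le_sum fun k _ => ?_
  rw [add_mul, mul_pow (2 * π)]
  gcongr
  exact le_mul_of_one_le_left (sq_nonneg _) one_le_two_pi_sq

lemma integral_norm_sq_le_of_gaussian {c B : ℝ} (hc : 0 < c) {F : ℝ → ℂ} (hF : Continuous F)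
    (h : ∀ θ ∈ Set.Icc (-(1 / 2) : ℝ) (1 / 2), ‖F θ‖ ≤ B * exp (-c * θ ^ 2)) :
    ∫ θ in (-(1 / 2) : ℝ)..(1 / 2), ‖F θ‖ ^ 2 ≤ B ^ 2 * √(π / (2 * c)) := by
  have gaussian_le :
      ∫ θ in (-(1 / 2) : ℝ)..(1 / 2), exp (-(2 * c) * θ ^ 2) ≤ √(π / (2 * c)) := by
    rw [← integral_gaussian, intervalIntegral.integral_of_le (by norm_num)]
    exact setIntegral_le_integral (integrable_exp_neg_mul_sq (by positivity))
      (.of_forall fun _ => (exp_pos _).le)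
  calc ∫ θ in (-(1 / 2) : ℝ)..(1 / 2), ‖F θ‖ ^ 2
      ≤ ∫ θ in (-(1 / 2) : ℝ)..(1 / 2), B ^ 2 * exp (-(2 * c) * θ ^ 2) := by
        refine intervalIntegral.integral_mono_on (by norm_num)
          (Continuous.intervalIntegrable (by fun_prop) _ _)
          (Continuous.intervalIntegrable (by fun_prop) _ _) fun θ hθ => ?_
        refine (pow_le_pow_left₀ (norm_nonneg _) (h θ hθ) 2).trans_eq ?_
        rw [mul_pow, ← Real.exp_nat_mul]
        push_cast
        ring_nf
    _ ≤ B ^ 2 * √(π / (2 * c)) := by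
        rw [intervalIntegral.integral_const_mul]
        exact mul_le_mul_of_nonneg_left gaussian_le (sq_nonneg _)

lemma l1Norm_le_of_gaussian {c s B : ℝ} (hc : 0 < c) (hs : 1 ≤ s) (hB : 0 ≤ B) (f : ℝ[T;T⁻¹])
    (h₀ : ∀ θ ∈ Set.Icc (-(1 / 2) : ℝ) (1 / 2), ‖symbol f θ‖ ≤ B * exp (-(c * s) * θ ^ 2))
    (h₁ : ∀ θ ∈ Set.Icc (-(1 / 2) : ℝ) (1 / 2),
      ‖deriv (symbol f) θ‖ ≤ √s * B * exp (-(c * s) * θ ^ 2)) :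
    l1Norm f ≤ √(16 * √(π / (2 * c))) * B := by
  have bound := (sq_l1Norm_le (Real.one_le_sqrt.mpr hs) f).trans <|
    mul_le_mul_of_nonneg_left (add_le_add
      (mul_le_mul_of_nonneg_left
        (integral_norm_sq_le_of_gaussian (by positivity) (differentiable_symbol f).continuous h₀)
        (sq_nonneg _))
      (integral_norm_sq_le_of_gaussian (by positivity) (continuous_deriv_symbol f) h₁))
      (by positivity)
  have scaling : √(π / (2 * (c * s))) = √(π / (2 * c)) / √s := by
    rw [← mul_assoc, ← div_div, Real.sqrt_div (by positivity)]
  calc l1Norm f ≤ √(16 * √(π / (2 * c)) * B ^ 2) := by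
        refine Real.le_sqrt_of_sq_le (bound.trans_eq ?_)
        rw [scaling]
        field_simp
        ring
    _ = √(16 * √(π / (2 * c))) * B := by rw [Real.sqrt_mul (by positivity), Real.sqrt_sq hB]

end Fourier

section EllipticStencil

open LaurentPolynomial

/-! ### Decay of the discrete heat kernel -/

lemma norm_symbol_T_one_sub_one_le (θ : ℝ) : ‖symbol (T 1 - 1) θ‖ ≤ 2 * π * |θ| := by
  have := Real.norm_exp_I_mul_ofReal_sub_one_le (x := 2 * π * ((1 : ℤ) : ℝ) * θ)
  rw [← symbol_T_apply] at this
  simpa [abs_of_pos Real.pi_pos] using this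

lemma norm_deriv_symbol_T_one_sub_one (θ : ℝ) : ‖deriv (symbol (T 1 - 1)) θ‖ = 2 * π := by
  have has_deriv : HasDerivAt (symbol (T 1 - 1))
      (2 * π * Complex.I * (1 : ℤ) * symbol (T 1) θ) θ := by
    rw [map_sub, map_one]
    exact (hasDerivAt_symbol_T 1 θ).sub_const 1
  rw [has_deriv.deriv]
  simp [norm_symbol_T, abs_of_pos Real.pi_pos]

/-- The coefficients `a` of a discrete Laplacian: they are symmetric, annihilate constants, have a
positive second moment, and their symbol vanishes only where it must, namely on `ℤ`. -/
structure IsEllipticStencil (a : ℤ →₀ ℝ) : Prop where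
  symm : ∀ k, a (-k) = a k
  sum_eq_zero : ∑ k ∈ a.support, a k = 0
  secondMoment_pos : 0 < ∑ k ∈ a.support, (k : ℝ) ^ 2 * a k
  symbol_ne_zero : ∀ θ : ℝ, symbol (stencil a) θ = 0 → ∃ z : ℤ, θ = z

/-- The factor `g` in the factorisation `-θ² g(θ)` of the symbol of a symmetric stencil that
annihilates constants. -/
def reducedSymbol (a : ℤ →₀ ℝ) (θ : ℝ) : ℝ :=
  2 * ∑ k ∈ a.support, a k * (π * k * sinc (π * k * θ)) ^ 2

lemma continuous_reducedSymbol (a : ℤ →₀ ℝ) : Continuous (reducedSymbol a) := by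
  have := Real.continuous_sinc
  unfold reducedSymbol
  fun_prop

lemma mul_sinc (x : ℝ) : x * sinc x = sin x := by
  rcases eq_or_ne x 0 with rfl | hx
  · simp
  · rw [Real.sinc_of_ne_zero hx, mul_div_cancel₀ _ hx]

lemma symbol_T_neg_mul_T_sub_one_sq (k : ℤ) (θ : ℝ) :
    symbol (T (-k) * (T k - 1) ^ 2) θ = ((-4 * sin (π * k * θ) ^ 2 : ℝ) : ℂ) := by
  have exp_mul_exp : symbol (T (-k)) θ * symbol (T k) θ = 1 := by
    rw [← Pi.mul_apply, ← map_mul, ← T_add, neg_add_cancel, T_zero, map_one, Pi.one_apply]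
  have exp_add_exp : symbol (T (-k)) θ + symbol (T k) θ = 2 * Complex.cos (2 * (π * k * θ)) := by
    rw [Complex.two_cos, symbol_T_apply, symbol_T_apply, add_comm]
    push_cast
    ring_nf
  rw [map_mul, map_pow, map_sub, map_one, Pi.mul_apply, Pi.pow_apply, Pi.sub_apply, Pi.one_apply]
  push_cast
  rw [Complex.sin_sq, Complex.cos_sq]
  linear_combination exp_add_exp + (symbol (T k) θ - 2) * exp_mul_exp

lemma symbol_stencil (a : ℤ →₀ ℝ) (θ : ℝ) :
    symbol (stencil a) θ = ∑ k ∈ a.support, (a k : ℂ) * symbol (T (-k)) θ := by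
  simp [stencil, Finset.sum_apply]

lemma norm_symbol_stencil_le (a : ℤ →₀ ℝ) (θ : ℝ) :
    ‖symbol (stencil a) θ‖ ≤ ∑ k ∈ a.support, |a k| := by
  rw [symbol_stencil]
  refine (norm_sum_le _ _).trans_eq (Finset.sum_congr rfl fun k _ => ?_)
  rw [norm_mul, norm_symbol_T, mul_one, Complex.norm_real, Real.norm_eq_abs]

lemma symbol_stencil_eq_neg_sq_mul {a : ℤ →₀ ℝ} (ha_symm : ∀ k, a (-k) = a k)
    (ha0 : ∑ k ∈ a.support, a k = 0) (θ : ℝ) :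
    symbol (stencil a) θ = ((-(θ ^ 2 * reducedSymbol a θ) : ℝ) : ℂ) := by
  rw [stencil_eq_sum_T_sub_one_sq ha_symm ha0, map_sum, Finset.sum_apply, reducedSymbol,
    Finset.mul_sum, Finset.mul_sum, ← Finset.sum_neg_distrib, Complex.ofReal_sum]
  refine Finset.sum_congr rfl fun k _ => ?_
  rw [map_smul, Pi.smul_apply, symbol_T_neg_mul_T_sub_one_sq, Complex.real_smul,
    ← Complex.ofReal_mul, ← mul_sinc (π * k * θ)]
  ring_nf

/-- The first moment of a symmetric stencil vanishes, so `e^{-2πikθ}` may be replaced by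
`e^{-2πikθ} - 1` in the derivative of its symbol. -/
lemma norm_deriv_symbol_stencil_le {a : ℤ →₀ ℝ} (ha_symm : ∀ k, a (-k) = a k) (θ : ℝ) :
    ‖deriv (symbol (stencil a)) θ‖ ≤ (∑ k ∈ a.support, |a k| * (2 * π * k) ^ 2) * |θ| := by
  have first_moment : ∑ k ∈ a.support, a k * k = 0 := by
    have reflect : ∑ k ∈ a.support, a k * k = ∑ k ∈ a.support, -(a k * k) :=
      Finset.sum_nbij' Neg.neg Neg.neg (by simp [ha_symm]) (by simp [ha_symm]) (by simp) (by simp)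
        (by simp [ha_symm])
    rw [Finset.sum_neg_distrib] at reflect
    linarith
  have deriv_eq : deriv (symbol (stencil a)) θ = ∑ k ∈ a.support,
      (a k : ℂ) * (2 * π * Complex.I * (-k : ℤ)) * (symbol (T (-k)) θ - 1) := by
    have has_deriv : HasDerivAt (symbol (stencil a)) (∑ k ∈ a.support,
        (a k : ℂ) * (2 * π * Complex.I * (-k : ℤ)) * symbol (T (-k)) θ) θ := by
      rw [funext (symbol_stencil a)]
      simp only [mul_assoc (Complex.ofReal _)]
      exact HasDerivAt.fun_sum fun k _ => (hasDerivAt_symbol_T (-k) θ).const_mul _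
    have constant_part :
        ∑ k ∈ a.support, (a k : ℂ) * (2 * π * Complex.I * (-k : ℤ)) = 0 := by
      rw [← mul_zero (-(2 * π * Complex.I)), ← Complex.ofReal_zero, ← first_moment,
        Complex.ofReal_sum, Finset.mul_sum]
      refine Finset.sum_congr rfl fun k _ => ?_
      push_cast
      ring
    simp only [has_deriv.deriv, mul_sub, mul_one, Finset.sum_sub_distrib, constant_part, sub_zero]
  rw [deriv_eq, Finset.sum_mul]
  refine (norm_sum_le _ _).trans (Finset.sum_le_sum fun k _ => ?_)
  have exp_sub_one : ‖symbol (T (-k)) θ - 1‖ ≤ |2 * π * k| * |θ| := by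
    have := Real.norm_exp_I_mul_ofReal_sub_one_le (x := 2 * π * ((-k : ℤ) : ℝ) * θ)
    rw [← symbol_T_apply] at this
    simpa [abs_mul] using this
  have norm_factor : ‖(a k : ℂ) * (2 * π * Complex.I * (-k : ℤ))‖ = |a k| * |2 * π * k| := by
    simp [abs_mul]
  calc ‖(a k : ℂ) * (2 * π * Complex.I * (-k : ℤ)) * (symbol (T (-k)) θ - 1)‖
      ≤ |a k| * |2 * π * k| * (|2 * π * k| * |θ|) := by
        rw [norm_mul, norm_factor]
        gcongr
    _ = |a k| * (2 * π * k) ^ 2 * |θ| := by rw [← sq_abs (2 * π * k)]; ring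

namespace IsEllipticStencil

variable {a : ℤ →₀ ℝ}

lemma reducedSymbol_zero_pos (ha : IsEllipticStencil a) : 0 < reducedSymbol a 0 := by
  have eq : reducedSymbol a 0 = 2 * π ^ 2 * ∑ k ∈ a.support, (k : ℝ) ^ 2 * a k := by
    rw [reducedSymbol, Finset.mul_sum, Finset.mul_sum]
    refine Finset.sum_congr rfl fun k _ => ?_
    rw [mul_zero, Real.sinc_zero]
    ring
  rw [eq]
  exact mul_pos (by positivity) ha.secondMoment_pos

lemma reducedSymbol_ne_zero (ha : IsEllipticStencil a) {θ : ℝ}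
    (hθ : θ ∈ Set.Icc (-(1 / 2) : ℝ) (1 / 2)) :
    reducedSymbol a θ ≠ 0 := by
  intro h
  obtain ⟨z, rfl⟩ := ha.symbol_ne_zero θ (by
    rw [symbol_stencil_eq_neg_sq_mul ha.symm ha.sum_eq_zero, h, mul_zero, neg_zero,
      Complex.ofReal_zero])
  have z_lt : (z : ℝ) < 1 := by linarith [hθ.2]
  have lt_z : (-1 : ℝ) < z := by linarith [hθ.1]
  norm_cast at z_lt lt_z
  obtain rfl : z = 0 := by lia
  exact ha.reducedSymbol_zero_pos.ne' (by simpa using h)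

lemma exists_le_reducedSymbol (ha : IsEllipticStencil a) :
    ∃ c, 0 < c ∧ ∀ θ ∈ Set.Icc (-(1 / 2) : ℝ) (1 / 2), c ≤ reducedSymbol a θ := by
  have zero_mem : (0 : ℝ) ∈ Set.Icc (-(1 / 2) : ℝ) (1 / 2) := by norm_num
  have continuousOn := (continuous_reducedSymbol a).continuousOn (s := Set.Icc (-(1 / 2)) (1 / 2))
  obtain ⟨x, hx, x_isMin⟩ := isCompact_Icc.exists_isMinOn ⟨0, zero_mem⟩ continuousOn
  refine ⟨reducedSymbol a x, ?_, x_isMin⟩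
  by_contra! nonpos
  obtain ⟨y, hy, y_root⟩ := isPreconnected_Icc.intermediate_value hx zero_mem continuousOn
    ⟨nonpos, ha.reducedSymbol_zero_pos.le⟩
  exact ha.reducedSymbol_ne_zero hy y_root

lemma sum_abs_pos (ha : IsEllipticStencil a) : 0 < ∑ k ∈ a.support, |a k| := by
  refine Finset.sum_pos (fun k hk => abs_pos.mpr (Finsupp.mem_support_iff.mp hk)) ?_
  by_contra! h
  simpa [h] using ha.secondMoment_pos

lemma exists_norm_symbol_heatStep_le (ha : IsEllipticStencil a) :
    ∃ c, 0 < c ∧ ∀ θ ∈ Set.Icc (-(1 / 2) : ℝ) (1 / 2),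
      ‖symbol (heatStep a) θ‖ ≤ exp (-c * θ ^ 2) := by
  obtain ⟨c, hc, c_le⟩ := ha.exists_le_reducedSymbol
  obtain ⟨ν, ν_eq⟩ : ∃ ν, ν = ∑ k ∈ a.support, |a k| := ⟨_, rfl⟩
  have hν : 0 < ν := ν_eq ▸ ha.sum_abs_pos
  refine ⟨(2 * ν)⁻¹ * c, by positivity, fun θ hθ => ?_⟩
  have symbol_eq : symbol (heatStep a) θ =
      ((1 - (2 * ν)⁻¹ * (θ ^ 2 * reducedSymbol a θ) : ℝ) : ℂ) := by
    rw [heatStep, map_add, map_one, map_smul, Pi.add_apply, Pi.one_apply, Pi.smul_apply,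
      symbol_stencil_eq_neg_sq_mul ha.symm ha.sum_eq_zero, Complex.real_smul, ← ν_eq]
    push_cast
    ring
  have upper : θ ^ 2 * reducedSymbol a θ ≤ 2 * ν := by
    have := norm_symbol_stencil_le a θ
    rw [symbol_stencil_eq_neg_sq_mul ha.symm ha.sum_eq_zero, Complex.norm_real, norm_neg,
      ← ν_eq] at this
    linarith [Real.le_norm_self (θ ^ 2 * reducedSymbol a θ)]
  have nonneg : 0 ≤ 1 - (2 * ν)⁻¹ * (θ ^ 2 * reducedSymbol a θ) :=
    sub_nonneg.mpr ((inv_mul_le_iff₀ (by positivity)).mpr (by rwa [mul_one]))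
  rw [symbol_eq, Complex.norm_real, Real.norm_of_nonneg nonneg]
  calc 1 - (2 * ν)⁻¹ * (θ ^ 2 * reducedSymbol a θ) ≤ 1 - (2 * ν)⁻¹ * (θ ^ 2 * c) := by
        gcongr
        exact c_le θ hθ
    _ = -((2 * ν)⁻¹ * c) * θ ^ 2 + 1 := by ring
    _ ≤ exp (-((2 * ν)⁻¹ * c) * θ ^ 2) := Real.add_one_le_exp _

end IsEllipticStencil

lemma exists_norm_deriv_symbol_heatStep_le {a : ℤ →₀ ℝ} (ha_symm : ∀ k, a (-k) = a k) :
    ∃ D, 0 ≤ D ∧ ∀ θ, ‖deriv (symbol (heatStep a)) θ‖ ≤ D * |θ| := by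
  refine ⟨(2 * ∑ k ∈ a.support, |a k|)⁻¹ * ∑ k ∈ a.support, |a k| * (2 * π * k) ^ 2,
    by positivity, fun θ => ?_⟩
  set c := (2 * ∑ k ∈ a.support, |a k|)⁻¹
  have c_nonneg : 0 ≤ c := by positivity
  have has_deriv : HasDerivAt (symbol (heatStep a)) (c • deriv (symbol (stencil a)) θ) θ := by
    rw [heatStep, map_add, map_one, map_smul]
    exact ((differentiable_symbol (stencil a) θ).hasDerivAt.const_smul c).const_add 1
  rw [has_deriv.deriv, norm_smul, Real.norm_of_nonneg c_nonneg, mul_assoc]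
  exact mul_le_mul_of_nonneg_left (norm_deriv_symbol_stencil_le ha_symm θ) c_nonneg

lemma exists_pow_mul_exp_neg_sq_le {c : ℝ} (hc : 0 < c) (j : ℕ) :
    ∃ K, 0 < K ∧ ∀ s θ : ℝ, 0 ≤ s →
      (√s * |θ|) ^ j * exp (-(c * s) * θ ^ 2) ≤ K * exp (-(c / 2 * s) * θ ^ 2) := by
  refine ⟨1 + j.factorial / (c / 2) ^ j, by positivity, fun s θ hs => ?_⟩
  have sq_eq : (√s * |θ|) ^ 2 = s * θ ^ 2 := by rw [mul_pow, Real.sq_sqrt hs, sq_abs]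
  have pow_le : (√s * |θ|) ^ j ≤ 1 + (s * θ ^ 2) ^ j := by
    rw [← sq_eq, ← pow_mul, mul_comm 2 j, pow_mul]
    nlinarith [sq_nonneg ((√s * |θ|) ^ j - 1), sq_nonneg ((√s * |θ|) ^ j)]
  have pow_le_exp : (s * θ ^ 2) ^ j ≤ j.factorial / (c / 2) ^ j * exp (c / 2 * s * θ ^ 2) := by
    have := Real.pow_div_factorial_le_exp (c / 2 * (s * θ ^ 2)) (by positivity) j
    rw [mul_pow, div_le_iff₀ (by positivity)] at this
    rw [div_mul_eq_mul_div, le_div_iff₀ (by positivity), mul_comm ((s * θ ^ 2) ^ j), mul_assoc]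
    linarith
  have one_le_exp : 1 ≤ exp (c / 2 * s * θ ^ 2) := Real.one_le_exp (by positivity)
  calc (√s * |θ|) ^ j * exp (-(c * s) * θ ^ 2)
      ≤ ((1 + j.factorial / (c / 2) ^ j) * exp (c / 2 * s * θ ^ 2)) *
          exp (-(c * s) * θ ^ 2) := by
        gcongr
        linarith
    _ = (1 + j.factorial / (c / 2) ^ j) * exp (-(c / 2 * s) * θ ^ 2) := by
        rw [mul_assoc, ← Real.exp_add]
        ring_nf

section GaussianSymbol

variable {p : ℝ[T;T⁻¹]} {c D : ℝ}

lemma norm_symbol_pow_le (hc : 0 ≤ c) {θ : ℝ} (hθ : θ ∈ Set.Icc (-(1 / 2) : ℝ) (1 / 2))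
    (hp : ‖symbol p θ‖ ≤ exp (-c * θ ^ 2)) {m j : ℕ} (hj : m ≤ j + 1) :
    ‖symbol p θ‖ ^ j ≤ exp (2 * c) * exp (-(c * (m + 1)) * θ ^ 2) := by
  have θ_sq_le : θ ^ 2 ≤ 1 := by nlinarith [hθ.1, hθ.2]
  have hj' : (m : ℝ) ≤ j + 1 := by exact_mod_cast hj
  calc ‖symbol p θ‖ ^ j ≤ exp (-c * θ ^ 2) ^ j := by gcongr
    _ = exp (j * (-c * θ ^ 2)) := (Real.exp_nat_mul _ _).symm
    _ ≤ exp (2 * c + -(c * (m + 1)) * θ ^ 2) := by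
        gcongr
        nlinarith [mul_nonneg (mul_nonneg hc (sub_nonneg.mpr hj')) (sq_nonneg θ),
          mul_nonneg hc (sub_nonneg.mpr θ_sq_le)]
    _ = exp (2 * c) * exp (-(c * (m + 1)) * θ ^ 2) := Real.exp_add _ _

lemma norm_symbol_mul_pow_le (hc : 0 ≤ c) {θ : ℝ} (hθ : θ ∈ Set.Icc (-(1 / 2) : ℝ) (1 / 2))
    (hp : ‖symbol p θ‖ ≤ exp (-c * θ ^ 2)) (κ m : ℕ) :
    √(m + 1) ^ κ * ‖symbol ((T 1 - 1) ^ κ * p ^ m) θ‖ ≤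
      (2 * π) ^ κ * exp (2 * c) *
        ((√(m + 1) * |θ|) ^ κ * exp (-(c * (m + 1)) * θ ^ 2)) := by
  rw [map_mul, map_pow, map_pow, Pi.mul_apply, Pi.pow_apply, Pi.pow_apply, norm_mul, norm_pow,
    norm_pow]
  calc √(m + 1) ^ κ * (‖symbol (T 1 - 1) θ‖ ^ κ * ‖symbol p θ‖ ^ m)
      ≤ √(m + 1) ^ κ * ((2 * π * |θ|) ^ κ *
          (exp (2 * c) * exp (-(c * (m + 1)) * θ ^ 2))) := by
        gcongr
        · exact norm_symbol_T_one_sub_one_le θ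
        · exact norm_symbol_pow_le hc hθ hp m.le_succ
    _ = _ := by ring

lemma norm_deriv_symbol_mul_pow_le (hc : 0 ≤ c) {θ : ℝ}
    (hθ : θ ∈ Set.Icc (-(1 / 2) : ℝ) (1 / 2)) (hp : ‖symbol p θ‖ ≤ exp (-c * θ ^ 2))
    (hp' : ‖deriv (symbol p) θ‖ ≤ D * |θ|) (κ m : ℕ) :
    √(m + 1) ^ κ * ‖deriv (symbol ((T 1 - 1) ^ κ * p ^ m)) θ‖ ≤
      √(m + 1) * ((2 * π) ^ κ * exp (2 * c) *
        (κ * ((√(m + 1) * |θ|) ^ (κ - 1) * exp (-(c * (m + 1)) * θ ^ 2)) +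
          D * ((√(m + 1) * |θ|) ^ (κ + 1) * exp (-(c * (m + 1)) * θ ^ 2)))) := by
  have has_deriv : HasDerivAt (symbol ((T 1 - 1) ^ κ * p ^ m))
      (κ * symbol (T 1 - 1) θ ^ (κ - 1) * deriv (symbol (T 1 - 1)) θ * symbol p θ ^ m +
        symbol (T 1 - 1) θ ^ κ * (m * symbol p θ ^ (m - 1) * deriv (symbol p) θ)) θ := by
    rw [map_mul, map_pow, map_pow]
    exact ((differentiable_symbol (T 1 - 1) θ).hasDerivAt.pow κ).mul
      ((differentiable_symbol p θ).hasDerivAt.pow m)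
  have hσ : √((m : ℝ) + 1) ^ 2 = m + 1 := Real.sq_sqrt (by positivity)
  set σ := √((m : ℝ) + 1)
  set G := exp (-(c * (m + 1)) * θ ^ 2)
  have norm_deriv_le : ‖deriv (symbol ((T 1 - 1) ^ κ * p ^ m)) θ‖ ≤
      κ * (2 * π * |θ|) ^ (κ - 1) * (2 * π) * (exp (2 * c) * G) +
        (2 * π * |θ|) ^ κ * (σ ^ 2 * (exp (2 * c) * G) * (D * |θ|)) := by
    rw [has_deriv.deriv]
    refine (norm_add_le _ _).trans ?_
    simp only [norm_mul, norm_pow, Complex.norm_natCast, norm_deriv_symbol_T_one_sub_one]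
    gcongr
    · exact norm_symbol_T_one_sub_one_le θ
    · exact norm_symbol_pow_le hc hθ hp m.le_succ
    · exact norm_symbol_T_one_sub_one_le θ
    · linarith
    · exact norm_symbol_pow_le hc hθ hp (by lia)
  refine (mul_le_mul_of_nonneg_left norm_deriv_le (by positivity)).trans_eq ?_
  cases κ with
  | zero => simp; ring
  | succ κ => rw [Nat.add_sub_cancel]; ring

/-- Each difference `T 1 - 1` gains a factor `|θ|`, which the Gaussian `exp (-c (m + 1) θ²)` turns
into `(m + 1)^(-1/2)`. -/
lemma exists_l1Norm_mul_pow_le (hc : 0 < c)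
    (hp : ∀ θ ∈ Set.Icc (-(1 / 2) : ℝ) (1 / 2), ‖symbol p θ‖ ≤ exp (-c * θ ^ 2))
    (hD : 0 ≤ D)
    (hp' : ∀ θ ∈ Set.Icc (-(1 / 2) : ℝ) (1 / 2), ‖deriv (symbol p) θ‖ ≤ D * |θ|) (κ : ℕ) :
    ∃ C, 0 < C ∧ ∀ m : ℕ, l1Norm ((T 1 - 1) ^ κ * p ^ m) ≤ C / √(m + 1) ^ κ := by
  choose K K_pos hK using exists_pow_mul_exp_neg_sq_le hc
  set B := (2 * π) ^ κ * exp (2 * c) * (K κ + κ * K (κ - 1) + D * K (κ + 1)) with B_eq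
  have K_pos₀ := K_pos κ
  have K_pos₁ := K_pos (κ - 1)
  have K_pos₂ := K_pos (κ + 1)
  refine ⟨√(16 * √(π / (2 * (c / 2)))) * B, by positivity, fun m => ?_⟩
  have one_le : (1 : ℝ) ≤ m + 1 := by linarith [m.cast_nonneg (α := ℝ)]
  have σ_pos : 0 < √((m : ℝ) + 1) ^ κ := by positivity
  rw [mul_div_assoc]
  refine l1Norm_le_of_gaussian (half_pos hc) one_le (by positivity) _ (fun θ hθ => ?_)
    (fun θ hθ => ?_) <;>
    rw [← mul_le_mul_iff_of_pos_left σ_pos]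
  · refine (norm_symbol_mul_pow_le hc.le hθ (hp θ hθ) κ m).trans ?_
    calc _ ≤ (2 * π) ^ κ * exp (2 * c) * ((K κ + κ * K (κ - 1) + D * K (κ + 1)) *
          exp (-(c / 2 * (m + 1)) * θ ^ 2)) := by
          gcongr _ * ?_
          refine (hK κ _ θ (by positivity)).trans ?_
          gcongr
          linarith [show 0 ≤ κ * K (κ - 1) + D * K (κ + 1) by positivity]
      _ = _ := by rw [B_eq]; field_simp
  · refine (norm_deriv_symbol_mul_pow_le hc.le hθ (hp θ hθ) (hp' θ hθ) κ m).trans ?_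
    calc _ ≤ √(m + 1) * ((2 * π) ^ κ * exp (2 * c) *
          (κ * (K (κ - 1) * exp (-(c / 2 * (m + 1)) * θ ^ 2)) +
            D * (K (κ + 1) * exp (-(c / 2 * (m + 1)) * θ ^ 2)))) := by
          gcongr _ * (_ * (_ * ?_ + _ * ?_))
          · exact hK _ _ θ (by positivity)
          · exact hK _ _ θ (by positivity)
      _ ≤ √(m + 1) * ((2 * π) ^ κ * exp (2 * c) * ((K κ + κ * K (κ - 1) + D * K (κ + 1)) *
          exp (-(c / 2 * (m + 1)) * θ ^ 2))) := by
          gcongr _ * (_ * ?_)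
          nlinarith [mul_pos K_pos₀ (exp_pos (-(c / 2 * (m + 1)) * θ ^ 2))]
      _ = _ := by rw [B_eq]; field_simp

end GaussianSymbol

end EllipticStencil

section TestFunctions

open scoped ContDiff

/-! ### Cutoffs, the truncated Green function and test functions -/

lemma exists_abs_iteratedDeriv_le {F : ℝ → ℝ} (hF : ContDiff ℝ ∞ F) (hc : HasCompactSupport F)
    (r : ℕ) : ∃ B, 0 < B ∧ ∀ j ≤ r, ∀ y, |iteratedDeriv j F y| ≤ B := by
  have bounded (j : ℕ) : ∃ B, ∀ y, |iteratedDeriv j F y| ≤ B := by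
    have compact : HasCompactSupport (iteratedDeriv j F) := by
      rw [iteratedDeriv_eq_iterate]
      exact Function.Iterate.rec HasCompactSupport hc (fun _ h => h.deriv) j
    exact (hF.continuous_iteratedDeriv j (mod_cast le_top)).bounded_above_of_compact_support compact
  choose B hB using bounded
  refine ⟨∑ j ∈ Finset.range (r + 1), |B j| + 1, by positivity, fun j hj y => ?_⟩
  have := Finset.single_le_sum (f := fun j => |B j|) (fun i _ => abs_nonneg _)
    (Finset.mem_range.mpr (Nat.lt_succ_of_le hj))
  linarith [hB j y, le_abs_self (B j)]

lemma hasCompactSupport_of_eq_zero_off_Icc {F : ℝ → ℝ}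
    (hF : ∀ y ∉ Set.Icc (-1 : ℝ) 1, F y = 0) : HasCompactSupport F :=
  HasCompactSupport.intro isCompact_Icc fun y hy => hF y hy

lemma isTestFunction_inv_mul {r : ℕ} {F : ℝ → ℝ} {B : ℝ} (hF : ContDiff ℝ ∞ F)
    (h0 : ∀ y ∉ Set.Icc (-1 : ℝ) 1, F y = 0) (hB : 0 < B)
    (bound : ∀ j ≤ r, ∀ y, |iteratedDeriv j F y| ≤ B) :
    IsTestFunction r (fun y => B⁻¹ * F y) := by
  refine ⟨contDiff_const.mul hF, fun y hy => by simp only [h0 y hy, mul_zero], fun j hj y => ?_⟩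
  rw [iteratedDeriv_const_mul B⁻¹ (contDiff_infty.mp hF j).contDiffAt, abs_mul,
    abs_of_pos (inv_pos.mpr hB), inv_mul_le_iff₀ hB, mul_one]
  exact bound j hj y

lemma exists_isTestFunction_inv_mul {F : ℝ → ℝ} (hF : ContDiff ℝ ∞ F)
    (h0 : ∀ y ∉ Set.Icc (-1 : ℝ) 1, F y = 0) (r : ℕ) :
    ∃ B, 0 < B ∧ IsTestFunction r (fun y => B⁻¹ * F y) := by
  obtain ⟨B, hB, bound⟩ :=
    exists_abs_iteratedDeriv_le hF (hasCompactSupport_of_eq_zero_off_Icc h0) r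
  exact ⟨B, hB, isTestFunction_inv_mul hF h0 hB bound⟩

/-- A smooth cutoff, equal to `1` on `[-1/4, 1/4]` and to `0` off `(-1/2, 1/2)`. -/
def cutoff : ContDiffBump (0 : ℝ) := ⟨1 / 4, 1 / 2, by norm_num, by norm_num⟩

lemma cutoff_eq_one {u : ℝ} (h : |u| ≤ 1 / 4) : cutoff u = 1 :=
  cutoff.one_of_mem_closedBall (by simpa [cutoff] using h)

lemma cutoff_eq_zero {u : ℝ} (h : 1 / 2 ≤ |u|) : cutoff u = 0 :=
  cutoff.zero_of_le_dist (by simpa [cutoff] using h)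

lemma contDiff_abs_mul {ψ : ℝ → ℝ} (hψ : ContDiff ℝ ∞ ψ) {c : ℝ} (hc : 0 < c)
    (h0 : ∀ u, |u| ≤ c → ψ u = 0) : ContDiff ℝ ∞ (fun u => |u| * ψ u) := by
  rw [contDiff_iff_contDiffAt]
  intro u
  rcases eq_or_ne u 0 with rfl | hu
  · have eventually_zero : (fun u => |u| * ψ u) =ᶠ[nhds 0] fun _ => 0 := by
      filter_upwards [Metric.closedBall_mem_nhds (0 : ℝ) hc] with x hx
      rw [h0 x (by simpa using hx), mul_zero]
    exact contDiffAt_const.congr_of_eventuallyEq eventually_zero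
  · exact (contDiffAt_abs hu).mul hψ.contDiffAt

/-- The difference of two consecutive truncations `|u| χ(u)` and `|u| χ(2u)`. -/
def dyadicShell (u : ℝ) : ℝ := |u| * (cutoff u - cutoff (2 * u))

lemma exists_isTestFunction_dyadicShell (r : ℕ) :
    ∃ B, 0 < B ∧ IsTestFunction r (fun u => B⁻¹ * dyadicShell u) := by
  have smooth : ContDiff ℝ ∞ dyadicShell := by
    refine contDiff_abs_mul (c := 1 / 8)
      (cutoff.contDiff.sub (cutoff.contDiff.comp (contDiff_const.mul contDiff_id)))
      (by norm_num) fun u hu => ?_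
    rw [cutoff_eq_one (by linarith),
      cutoff_eq_one (by rw [abs_mul, abs_two]; linarith), sub_self]
  refine exists_isTestFunction_inv_mul smooth (fun u hu => ?_) r
  have one_lt : 1 < |u| := by rwa [Set.mem_Icc, ← abs_le, not_le] at hu
  rw [dyadicShell, cutoff_eq_zero (by linarith),
    cutoff_eq_zero (by rw [abs_mul, abs_two]; linarith), sub_zero, mul_zero]

/-- The Green function `|u| / 2` of the second derivative, with its singularity at the origin cut
out. -/
def farGreen (u : ℝ) : ℝ := 1 / 2 * (|u| * (1 - cutoff u))

lemma contDiff_farGreen : ContDiff ℝ ∞ farGreen :=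
  contDiff_const.mul (contDiff_abs_mul (c := 1 / 4) (contDiff_const.sub cutoff.contDiff)
    (by norm_num) fun u hu => by rw [cutoff_eq_one hu, sub_self])

lemma farGreen_of_half_le {u : ℝ} (h : 1 / 2 ≤ u) : farGreen u = 1 / 2 * u := by
  rw [farGreen, cutoff_eq_zero (h.trans (le_abs_self u)), abs_of_nonneg (by linarith), sub_zero,
    mul_one]

lemma farGreen_of_le_neg_half {u : ℝ} (h : u ≤ -(1 / 2)) : farGreen u = -(1 / 2) * u := by
  rw [farGreen, cutoff_eq_zero (by linarith [neg_le_abs u]), abs_of_nonpos (by linarith)]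
  ring

/-- The second difference quotient of `F` with step `h`. -/
def secondDiff (h : ℝ) (F : ℝ → ℝ) (u : ℝ) : ℝ :=
  (h ^ 2)⁻¹ * (F (u + h) - 2 * F u + F (u - h))

lemma abs_secondDiff_le {F : ℝ → ℝ} (hF : ContDiff ℝ 2 F) {B : ℝ}
    (hB : ∀ u, |deriv (deriv F) u| ≤ B) {h : ℝ} (hh : 0 < h) (u : ℝ) : |secondDiff h F u| ≤ B := by
  have hF_diff : Differentiable ℝ F := hF.differentiable (by norm_num)
  have hF'_diff : Differentiable ℝ (deriv F) :=
    ((contDiff_succ_iff_deriv (n := 1)).mp (by rwa [one_add_one_eq_two])).2.2.differentiable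
      (by norm_num)
  have deriv_increment_le (v : ℝ) : ‖deriv F (v + h) - deriv F v‖ ≤ B * h := by
    have := convex_univ.norm_image_sub_le_of_norm_deriv_le (f := deriv F)
      (fun x _ => hF'_diff x) (fun x _ => hB x) (Set.mem_univ v) (Set.mem_univ (v + h))
    rwa [add_sub_cancel_left, Real.norm_of_nonneg hh.le] at this
  have increment_le := convex_univ.norm_image_sub_le_of_norm_hasDerivWithin_le
    (f := fun v => F (v + h) - F v)
    (fun v _ => (((hF_diff (v + h)).hasDerivAt.comp_add_const v h).sub
      (hF_diff v).hasDerivAt).hasDerivWithinAt)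
    (fun v _ => deriv_increment_le v) (Set.mem_univ (u - h)) (Set.mem_univ u)
  rw [sub_add_cancel, sub_sub_cancel, Real.norm_eq_abs, Real.norm_of_nonneg hh.le] at increment_le
  rw [secondDiff, abs_mul, abs_of_pos (by positivity), inv_mul_le_iff₀ (by positivity)]
  calc |F (u + h) - 2 * F u + F (u - h)| = |F (u + h) - F u - (F u - F (u - h))| := by ring_nf
    _ ≤ B * h * h := increment_le
    _ = h ^ 2 * B := by ring

lemma contDiff_secondDiff {F : ℝ → ℝ} {n : ℕ∞} (hF : ContDiff ℝ n F) (h : ℝ) :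
    ContDiff ℝ n (secondDiff h F) := by
  unfold secondDiff
  fun_prop

lemma iteratedDeriv_secondDiff {F : ℝ → ℝ} {j : ℕ} (hF : ContDiff ℝ j F) (h : ℝ) :
    iteratedDeriv j (secondDiff h F) = secondDiff h (iteratedDeriv j F) := by
  ext y
  have right : ContDiffAt ℝ j (fun u => F (u + h)) y := by fun_prop
  have left : ContDiffAt ℝ j (fun u => F (u - h)) y := by fun_prop
  have middle : ContDiffAt ℝ j (fun u => 2 * F u) y := by fun_prop
  unfold secondDiff
  rw [iteratedDeriv_const_mul _ ((right.sub middle).add left),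
    iteratedDeriv_fun_add (right.sub middle) left, iteratedDeriv_fun_sub right middle,
    iteratedDeriv_const_mul _ hF.contDiffAt, iteratedDeriv_comp_add_const,
    iteratedDeriv_comp_sub_const]

lemma secondDiff_farGreen_eq_zero {h : ℝ} (h_pos : 0 < h) (h_le : h ≤ 1 / 2) {u : ℝ}
    (hu : u ∉ Set.Icc (-1 : ℝ) 1) : secondDiff h farGreen u = 0 := by
  rw [Set.mem_Icc, not_and_or, not_le, not_le] at hu
  rcases hu with hu | hu
  · rw [secondDiff, farGreen_of_le_neg_half (by linarith), farGreen_of_le_neg_half (by linarith),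
      farGreen_of_le_neg_half (by linarith)]
    ring
  · rw [secondDiff, farGreen_of_half_le (by linarith), farGreen_of_half_le (by linarith),
      farGreen_of_half_le (by linarith)]
    ring

lemma deriv_deriv_farGreen_eq_zero {u : ℝ} (hu : u ∉ Set.Icc (-1 : ℝ) 1) :
    deriv (deriv farGreen) u = 0 := by
  have deriv_deriv_linear (c : ℝ) (h : farGreen =ᶠ[nhds u] fun x => c * x) :
      deriv (deriv farGreen) u = 0 := by
    rw [h.deriv.deriv_eq]
    simp
  rw [Set.mem_Icc, not_and_or, not_le, not_le] at hu
  rcases hu with hu | hu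
  · refine deriv_deriv_linear (-(1 / 2)) ?_
    filter_upwards [Iio_mem_nhds hu] with x hx
    exact farGreen_of_le_neg_half (by linarith [Set.mem_Iio.mp hx])
  · refine deriv_deriv_linear (1 / 2) ?_
    filter_upwards [Ioi_mem_nhds hu] with x hx
    exact farGreen_of_half_le (by linarith [Set.mem_Ioi.mp hx])

lemma exists_isTestFunction_secondDiff_farGreen (r : ℕ) :
    ∃ B, 0 < B ∧ ∀ h, 0 < h → h ≤ 1 / 2 →
      IsTestFunction r (fun u => B⁻¹ * secondDiff h farGreen u) := by
  have smooth : ContDiff ℝ ∞ (deriv (deriv farGreen)) :=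
    (contDiff_infty_iff_deriv.mp (contDiff_infty_iff_deriv.mp contDiff_farGreen).2).2
  obtain ⟨B, hB, bound⟩ := exists_abs_iteratedDeriv_le smooth
    (hasCompactSupport_of_eq_zero_off_Icc fun _ => deriv_deriv_farGreen_eq_zero) r
  refine ⟨B, hB, fun h h_pos h_le => isTestFunction_inv_mul
    (contDiff_secondDiff contDiff_farGreen h)
    (fun _ => secondDiff_farGreen_eq_zero h_pos h_le) hB fun j hj y => ?_⟩
  rw [iteratedDeriv_secondDiff (contDiff_infty.mp contDiff_farGreen j)]
  refine abs_secondDiff_le ?_ (fun u => ?_) h_pos y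
  · rw [iteratedDeriv_eq_iterate]
    exact ContDiff.iterate_deriv' 2 j (contDiff_infty.mp contDiff_farGreen (2 + j))
  · rw [← iteratedDeriv_succ, ← iteratedDeriv_succ, iteratedDeriv_succ', iteratedDeriv_succ']
    exact bound j hj u

end TestFunctions

section Pairing

open LaurentPolynomial

/-! ### Pairing with grid functions of negative Hölder regularity -/

/-- The grid function `Z` has Hölder regularity `β` with constant `K`: at every scale `lam` between
the grid size `ε` and `1`, its average against any test function is at most `K lam ^ β`. -/
def IsHolderOnGrid (ε β : ℝ) (r : ℕ) (K : ℝ) (Z : ℤ → ℝ) : Prop :=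
  ∀ k : ℤ, ∀ lam ∈ Set.Icc ε 1, ∀ φ : ℝ → ℝ, IsTestFunction r φ →
    |ε * ∑' j : ℤ, Z j * (lam⁻¹ * φ (lam⁻¹ * (ε * j - ε * k)))| ≤ K * lam ^ β

/-- The Green function `|i| / 2` of the discrete second difference, truncated at scale `2 ^ L`. -/
def greenTrunc (L : ℕ) : ℝ[T;T⁻¹] :=
  ∑ i ∈ Finset.Icc (-(2 ^ L : ℤ)) (2 ^ L), (1 / 2 * (|(i : ℝ)| * cutoff (-i / 2 ^ L))) • T i

lemma coeff_greenTrunc (L : ℕ) (j : ℤ) :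
    (greenTrunc L).coeff j = 1 / 2 * (|(j : ℝ)| * cutoff (-j / 2 ^ L)) := by
  rw [greenTrunc, AddMonoidAlgebra.coeff_sum, Finset.sum_apply']
  simp only [AddMonoidAlgebra.coeff_smul, Finsupp.smul_apply, T, AddMonoidAlgebra.coeff_single,
    Finsupp.single_apply, smul_eq_mul, mul_ite, mul_one, mul_zero, Finset.sum_ite_eq']
  split_ifs with hj
  · rfl
  rw [Finset.mem_Icc, ← abs_le, not_le] at hj
  have two_pow_lt : (2 : ℝ) ^ L < |(j : ℝ)| := by exact_mod_cast hj
  rw [cutoff_eq_zero, mul_zero, mul_zero]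
  rw [abs_div, abs_neg, abs_of_pos (by positivity : (0 : ℝ) < 2 ^ L), le_div_iff₀ (by positivity)]
  linarith [show (0 : ℝ) < 2 ^ L by positivity]

lemma cutoff_neg_intCast (i : ℤ) : cutoff (-(i : ℝ)) = if i = 0 then 1 else 0 := by
  split_ifs with hi
  · rw [hi, Int.cast_zero, neg_zero, cutoff_eq_one (by norm_num)]
  · have one_le : (1 : ℝ) ≤ |(i : ℝ)| := by exact_mod_cast Int.one_le_abs hi
    exact cutoff_eq_zero (by rw [abs_neg]; linarith)

lemma greenTrunc_zero : greenTrunc 0 = 0 := by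
  ext i
  rw [coeff_greenTrunc, pow_zero, div_one, cutoff_neg_intCast]
  split_ifs with hi <;> simp [hi]

lemma coeff_greenTrunc_succ_sub (l : ℕ) (i : ℤ) :
    (greenTrunc (l + 1) - greenTrunc l).coeff i = 2 ^ l * dyadicShell (-i / 2 ^ (l + 1)) := by
  have double : 2 * (-(i : ℝ) / 2 ^ (l + 1)) = -i / 2 ^ l := by
    rw [pow_succ]
    field_simp
  rw [AddMonoidAlgebra.coeff_sub, Finsupp.sub_apply, coeff_greenTrunc, coeff_greenTrunc,
    dyadicShell, double, abs_div, abs_neg, abs_of_pos (by positivity : (0 : ℝ) < 2 ^ (l + 1)),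
    pow_succ]
  field_simp

/-- The Laurent polynomial of the second difference `f ↦ f(· + 1) - 2 f + f(· - 1)`. -/
def secondDifference : ℝ[T;T⁻¹] := T (-1) * (T 1 - 1) ^ 2

lemma coeff_secondDifference_mul (f : ℝ[T;T⁻¹]) (j : ℤ) :
    (secondDifference * f).coeff j = f.coeff (j - 1) + f.coeff (j + 1) - 2 * f.coeff j := by
  have expand : secondDifference * f = T 1 * f + T (-1) * f - (2 : ℝ) • f := by
    have inverse : (T (-1) * T 1 : ℝ[T;T⁻¹]) = 1 := by rw [← T_add, neg_add_cancel, T_zero]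
    rw [secondDifference, two_smul]
    linear_combination ((T 1 - 2) * f) * inverse
  rw [expand]
  simp only [AddMonoidAlgebra.coeff_sub, AddMonoidAlgebra.coeff_add, AddMonoidAlgebra.coeff_smul,
    Finsupp.sub_apply, Finsupp.add_apply, Finsupp.smul_apply, T,
    AddMonoidAlgebra.coeff_single_mul_apply, one_mul, neg_neg, smul_eq_mul]
  ring_nf

lemma coeff_one_eq_second_difference_abs (j : ℤ) : (1 : ℝ[T;T⁻¹]).coeff j =
    1 / 2 * (|((j - 1 : ℤ) : ℝ)| + |((j + 1 : ℤ) : ℝ)| - 2 * |(j : ℝ)|) := by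
  rw [← T_zero, T, AddMonoidAlgebra.coeff_single, Finsupp.single_apply]
  norm_cast
  split_ifs with hj
  · subst hj
    norm_num
  · have : |j - 1| + |j + 1| = 2 * |j| := by grind
    rw [this, sub_self]
    simp

/-- Away from the origin `|i|` is harmonic, so that `1 - secondDifference * greenTrunc L` is a
sampled smooth function at scale `2 ^ L`. -/
lemma coeff_one_sub_secondDifference_mul_greenTrunc (L : ℕ) (j : ℤ) :
    (1 - secondDifference * greenTrunc L).coeff j =
      (2 ^ L : ℝ)⁻¹ * secondDiff ((2 ^ L : ℝ)⁻¹) farGreen (-j / 2 ^ L) := by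
  have scale_pos : (0 : ℝ) < 2 ^ L := by positivity
  have left : -(j : ℝ) / 2 ^ L + (2 ^ L)⁻¹ = -((j - 1 : ℤ) : ℝ) / 2 ^ L := by
    push_cast
    field_simp
    ring
  have right : -(j : ℝ) / 2 ^ L - (2 ^ L)⁻¹ = -((j + 1 : ℤ) : ℝ) / 2 ^ L := by
    push_cast
    field_simp
    ring
  have abs_scaled (i : ℤ) : |-(i : ℝ) / 2 ^ L| = |(i : ℝ)| / 2 ^ L := by
    rw [abs_div, abs_neg, abs_of_pos scale_pos]
  rw [AddMonoidAlgebra.coeff_sub, Finsupp.sub_apply, coeff_secondDifference_mul,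
    coeff_one_eq_second_difference_abs, coeff_greenTrunc, coeff_greenTrunc, coeff_greenTrunc,
    secondDiff, left, right, farGreen, farGreen, farGreen, abs_scaled, abs_scaled, abs_scaled]
  field_simp
  ring

section HolderOnGrid

variable {ε β K : ℝ} {r : ℕ} {Z : ℤ → ℝ}

lemma IsHolderOnGrid.abs_convAt_le (hZ : IsHolderOnGrid ε β r K Z) (hε : 0 < ε)
    {φ : ℝ → ℝ} {B : ℝ} (hB : 0 < B) (hφ : IsTestFunction r (fun u => B⁻¹ * φ u)) {L : ℕ}
    (hL : ε * 2 ^ L ≤ 1) {c : ℝ} {f : ℝ[T;T⁻¹]} (hf : ∀ i : ℤ, f.coeff i = c * φ (-i / 2 ^ L))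
    (k : ℤ) : |convAt Z k f| ≤ |c| * 2 ^ L * (B * (K * (ε * 2 ^ L) ^ β)) := by
  have ε_le : ε ≤ ε * 2 ^ L := le_mul_of_one_le_right hε.le (one_le_pow₀ one_le_two)
  have convAt_eq : convAt Z k f = c * 2 ^ L * B * (ε * ∑' j : ℤ, Z j *
      ((ε * 2 ^ L)⁻¹ * (B⁻¹ * φ ((ε * 2 ^ L)⁻¹ * (ε * j - ε * k))))) := by
    rw [← tsum_mul_coeff_sub, ← tsum_mul_left, ← tsum_mul_left]
    refine tsum_congr fun j => ?_
    have argument : -((k - j : ℤ) : ℝ) / 2 ^ L = (ε * 2 ^ L)⁻¹ * (ε * j - ε * k) := by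
      push_cast
      field_simp
      ring
    rw [hf, argument]
    field_simp
  have average_le := hZ k (ε * 2 ^ L) ⟨ε_le, hL⟩ _ hφ
  calc |convAt Z k f| ≤ |c * 2 ^ L * B| * (K * (ε * 2 ^ L) ^ β) := by
        rw [convAt_eq, abs_mul]
        gcongr
    _ = |c| * 2 ^ L * (B * (K * (ε * 2 ^ L) ^ β)) := by
        rw [abs_mul, abs_mul, abs_of_pos hB, abs_of_pos (by positivity : (0 : ℝ) < 2 ^ L)]
        ring

end HolderOnGrid

/-- `greenTrunc L` is the sum of its dyadic shells, whose contributions grow geometrically because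
`β > -2`. -/
lemma exists_abs_convAt_greenTrunc_le {β : ℝ} (hβ : -2 < β) (r : ℕ) :
    ∃ C, 0 < C ∧ ∀ {ε K : ℝ} {Z : ℤ → ℝ}, 0 < ε → 0 ≤ K → IsHolderOnGrid ε β r K Z →
      ∀ L : ℕ, ε * 2 ^ L ≤ 1 → ∀ k : ℤ,
        |convAt Z k (greenTrunc L)| ≤ C * (K * (ε * 2 ^ L) ^ β * (2 ^ L) ^ 2) := by
  obtain ⟨B, hB, test⟩ := exists_isTestFunction_dyadicShell r
  set q : ℝ := 2 ^ (β + 2) with q_eq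
  have one_lt_q : 1 < q := Real.one_lt_rpow one_lt_two (by linarith)
  refine ⟨B * q / (q - 1), by positivity, fun {ε K Z} hε hK hZ L hL k => ?_⟩
  have scale (l : ℕ) : (ε * 2 ^ l) ^ β * (2 ^ l) ^ 2 = ε ^ β * q ^ l := by
    rw [Real.mul_rpow hε.le (by positivity), mul_assoc, ← Real.rpow_two,
      ← Real.rpow_add (by positivity), q_eq, Real.rpow_pow_comm zero_le_two]
  have shell_le (l : ℕ) (hl : l < L) : |convAt Z k (greenTrunc (l + 1) - greenTrunc l)| ≤
      B * q * (K * ε ^ β) * q ^ l := by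
    have two_pow_le : (2 : ℝ) ^ (l + 1) ≤ 2 ^ L := pow_le_pow_right₀ one_le_two hl
    refine (hZ.abs_convAt_le hε hB test ((by gcongr : _ ≤ ε * 2 ^ L).trans hL)
      (coeff_greenTrunc_succ_sub l) k).trans ?_
    calc |(2 : ℝ) ^ l| * 2 ^ (l + 1) * (B * (K * (ε * 2 ^ (l + 1)) ^ β))
        = B * K * ((ε * 2 ^ (l + 1)) ^ β * (2 ^ (l + 1)) ^ 2) / 2 := by
          rw [abs_of_pos (by positivity), pow_succ]
          ring
      _ = B * q * (K * ε ^ β) * q ^ l / 2 := by rw [scale, pow_succ]; ring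
      _ ≤ B * q * (K * ε ^ β) * q ^ l := half_le_self (by positivity)
  calc |convAt Z k (greenTrunc L)|
      = |∑ l ∈ Finset.range L, convAt Z k (greenTrunc (l + 1) - greenTrunc l)| := by
        rw [← map_sum, Finset.sum_range_sub, greenTrunc_zero, sub_zero]
    _ ≤ ∑ l ∈ Finset.range L, B * q * (K * ε ^ β) * q ^ l :=
        (Finset.abs_sum_le_sum_abs _ _).trans
          (Finset.sum_le_sum fun l hl => shell_le l (Finset.mem_range.mp hl))
    _ = B * q * (K * ε ^ β) * ((q ^ L - 1) / (q - 1)) := by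
        rw [← Finset.mul_sum, geom_sum_eq one_lt_q.ne']
    _ ≤ B * q * (K * ε ^ β) * (q ^ L / (q - 1)) := by
        gcongr
        linarith
    _ = B * q / (q - 1) * (K * (ε * 2 ^ L) ^ β * (2 ^ L) ^ 2) := by
        rw [mul_assoc K, scale]
        ring

lemma exists_abs_convAt_one_sub_le (β : ℝ) (r : ℕ) :
    ∃ C, 0 < C ∧ ∀ {ε K : ℝ} {Z : ℤ → ℝ}, 0 < ε → 0 ≤ K → IsHolderOnGrid ε β r K Z →
      ∀ L : ℕ, ε * 2 ^ L ≤ 1 → ∀ k : ℤ,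
        |convAt Z k (1 - secondDifference * greenTrunc L)| ≤ C * (K * (ε * 2 ^ L) ^ β) := by
  obtain ⟨B, hB, test⟩ := exists_isTestFunction_secondDiff_farGreen r
  obtain ⟨B₀, hB₀, test₀⟩ := exists_isTestFunction_inv_mul cutoff.contDiff
    (fun u hu => cutoff_eq_zero (by
      rw [Set.mem_Icc, ← abs_le, not_le] at hu
      linarith)) r
  refine ⟨B + B₀, by positivity, fun {ε K Z} hε hK hZ L hL k => ?_⟩
  rcases L with _ | L
  · refine (hZ.abs_convAt_le hε hB₀ test₀ hL (c := 1) (fun i => ?_) k).trans ?_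
    · rw [greenTrunc_zero, mul_zero, sub_zero, pow_zero, div_one, cutoff_neg_intCast, one_mul,
        ← T_zero, T, AddMonoidAlgebra.coeff_single, Finsupp.single_apply]
      simp only [eq_comm]
    · rw [abs_one, pow_zero, one_mul, one_mul]
      gcongr
      linarith
  · have half_bound : ((2 : ℝ) ^ (L + 1))⁻¹ ≤ 1 / 2 := by
      rw [one_div]
      gcongr
      exact le_self_pow₀ one_le_two L.succ_ne_zero
    refine (hZ.abs_convAt_le hε hB (test _ (by positivity) half_bound) hL
      (coeff_one_sub_secondDifference_mul_greenTrunc (L + 1)) k).trans ?_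
    rw [abs_of_pos (by positivity), inv_mul_cancel₀ (by positivity), one_mul]
    gcongr
    linarith

lemma exists_abs_convAt_le {β : ℝ} (hβ : -2 < β) (r : ℕ) :
    ∃ C, 0 < C ∧ ∀ {ε K : ℝ} {Z : ℤ → ℝ}, 0 < ε → 0 ≤ K → IsHolderOnGrid ε β r K Z →
      ∀ L : ℕ, ε * 2 ^ L ≤ 1 → ∀ (k : ℤ) (f : ℝ[T;T⁻¹]),
        |convAt Z k f| ≤ C * (K * (ε * 2 ^ L) ^ β) *
          (l1Norm f + (2 ^ L) ^ 2 * l1Norm ((T 1 - 1) ^ 2 * f)) := by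
  obtain ⟨C₁, hC₁, green_le⟩ := exists_abs_convAt_greenTrunc_le hβ r
  obtain ⟨C₂, hC₂, one_sub_le⟩ := exists_abs_convAt_one_sub_le β r
  refine ⟨C₁ + C₂, by positivity, fun {ε K Z} hε hK hZ L hL k f => ?_⟩
  have split : f = secondDifference * f * greenTrunc L +
      f * (1 - secondDifference * greenTrunc L) := by ring
  have norm_le : l1Norm (secondDifference * f) ≤ l1Norm ((T 1 - 1) ^ 2 * f) := by
    rw [secondDifference, mul_assoc]
    exact l1Norm_T_mul_le _ _
  set E := K * (ε * 2 ^ L) ^ β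
  calc |convAt Z k f| ≤ l1Norm (secondDifference * f) * (C₁ * (E * (2 ^ L) ^ 2)) +
          l1Norm f * (C₂ * E) := by
        conv_lhs => rw [split, map_add]
        exact (abs_add_le _ _).trans (add_le_add
          (abs_convAt_mul_le Z (green_le hε hK hZ L hL) _ k)
          (abs_convAt_mul_le Z (one_sub_le hε hK hZ L hL) f k))
    _ ≤ l1Norm ((T 1 - 1) ^ 2 * f) * ((C₁ + C₂) * (E * (2 ^ L) ^ 2)) +
          l1Norm f * ((C₁ + C₂) * E) := by
        gcongr <;> linarith
    _ = _ := by ring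

lemma rpow_le_two_rpow_abs_mul {x y : ℝ} (hx : 0 < x) (hxy : x ≤ y) (hyx : y ≤ 2 * x) (s : ℝ) :
    x ^ s ≤ 2 ^ |s| * y ^ s := by
  have hy : 0 < y := hx.trans_le hxy
  rcases le_total 0 s with hs | hs
  · calc x ^ s ≤ y ^ s := Real.rpow_le_rpow hx.le hxy hs
      _ ≤ 2 ^ |s| * y ^ s := le_mul_of_one_le_left (by positivity)
          (Real.one_le_rpow one_le_two (abs_nonneg s))
  · calc x ^ s = 2 ^ |s| * (2 * x) ^ s := by
          rw [Real.mul_rpow zero_le_two hx.le, ← mul_assoc, ← Real.rpow_add two_pos,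
            abs_of_nonpos hs, neg_add_cancel, Real.rpow_zero, one_mul]
      _ ≤ 2 ^ |s| * y ^ s := by
          gcongr ?_ * ?_
          exact Real.rpow_le_rpow_of_nonpos hy hyx hs

lemma sqrt_rpow {x : ℝ} (hx : 0 ≤ x) (s : ℝ) : √x ^ s = x ^ (s / 2) := by
  rw [Real.sqrt_eq_rpow, ← Real.rpow_mul hx]
  congr 1
  ring

/-- The pairing is taken at the parabolic scale `2 ^ L ≈ √(m + 1)` of the kernel `p ^ m`. -/
lemma exists_abs_convAt_mul_pow_le {β : ℝ} (hβ : -2 < β) (r : ℕ) {p : ℝ[T;T⁻¹]}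
    (hp : ∀ κ : ℕ, ∃ C, 0 < C ∧ ∀ m : ℕ, l1Norm ((T 1 - 1) ^ κ * p ^ m) ≤ C / √(m + 1) ^ κ)
    (κ : ℕ) :
    ∃ C, 0 < C ∧ ∀ {ε K : ℝ} {Z : ℤ → ℝ}, 0 < ε → 0 ≤ K → IsHolderOnGrid ε β r K Z →
      ∀ m : ℕ, ε ^ 2 * (m + 1) ≤ 1 → ∀ (k : ℤ) (w : ℝ[T;T⁻¹]),
        |convAt Z k (w * ((T 1 - 1) ^ κ * p ^ m))| ≤
          C * (K * ε ^ β) * l1Norm w * ((m : ℝ) + 1) ^ ((β - κ) / 2) := by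
  obtain ⟨C₀, hC₀, pairing_le⟩ := exists_abs_convAt_le hβ r
  obtain ⟨C₁, hC₁, decay₁⟩ := hp κ
  obtain ⟨C₂, hC₂, decay₂⟩ := hp (κ + 2)
  refine ⟨C₀ * 2 ^ |β| * (C₁ + C₂), by positivity, fun {ε K Z} hε hK hZ m hm k w => ?_⟩
  have σ_pos : 0 < √((m : ℝ) + 1) := by positivity
  have one_le_σ : 1 ≤ √((m : ℝ) + 1) := Real.one_le_sqrt.mpr (by simp)
  have ε_σ_le : ε * √((m : ℝ) + 1) ≤ 1 := by
    rw [← abs_of_pos (by positivity : 0 < ε * √((m : ℝ) + 1)), ← sq_le_one_iff_abs_le_one, mul_pow,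
      Real.sq_sqrt (by positivity)]
    exact hm
  rw [← sqrt_rpow (by positivity), Real.rpow_sub_natCast σ_pos.ne']
  have decay₁ := decay₁ m
  have decay₂ := decay₂ m
  set σ := √((m : ℝ) + 1)
  obtain ⟨L, le_σ, σ_lt⟩ := exists_nat_pow_near one_le_σ one_lt_two
  have norm_le : l1Norm (w * ((T 1 - 1) ^ κ * p ^ m)) ≤ l1Norm w * (C₁ / σ ^ κ) :=
    (l1Norm_mul_le _ _).trans (by gcongr)
  have norm_le' : l1Norm ((T 1 - 1) ^ 2 * (w * ((T 1 - 1) ^ κ * p ^ m))) ≤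
      l1Norm w * (C₂ / σ ^ (κ + 2)) := by
    rw [show (T 1 - 1) ^ 2 * (w * ((T 1 - 1) ^ κ * p ^ m)) =
      w * ((T 1 - 1) ^ (κ + 2) * p ^ m) by ring]
    exact (l1Norm_mul_le _ _).trans (by gcongr)
  have scale_le : (ε * 2 ^ L) ^ β ≤ 2 ^ |β| * (ε * σ) ^ β :=
    rpow_le_two_rpow_abs_mul (by positivity) (by gcongr)
      (by rw [mul_left_comm, ← pow_succ']; gcongr) β
  refine (pairing_le hε hK hZ L ((by gcongr : _ ≤ ε * σ).trans ε_σ_le) k _).trans ?_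
  calc _ ≤ C₀ * (K * (2 ^ |β| * (ε * σ) ^ β)) *
        (l1Norm w * (C₁ / σ ^ κ) + σ ^ 2 * (l1Norm w * (C₂ / σ ^ (κ + 2)))) := by
        gcongr
    _ = _ := by
        rw [Real.mul_rpow hε.le σ_pos.le]
        field_simp
        ring

end Pairing

section Convolution

/-! ### Convolutions of power weights -/

variable {x y : ℝ}

lemma mul_rpow_le_rpow_add_one_sub (hx : -1 < x) (hx0 : x ≤ 0) (i : ℕ) :
    (x + 1) * ((i : ℝ) + 1) ^ x ≤ ((i : ℝ) + 1) ^ (x + 1) - (i : ℝ) ^ (x + 1) := by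
  have succ_pos : (0 : ℝ) < i + 1 := by positivity
  have inv_le : ((i : ℝ) + 1)⁻¹ ≤ 1 := inv_le_one_of_one_le₀ (by linarith [i.cast_nonneg (α := ℝ)])
  have bernoulli : (1 + -((i : ℝ) + 1)⁻¹) ^ (x + 1) ≤ 1 + (x + 1) * -((i : ℝ) + 1)⁻¹ :=
    rpow_one_add_le_one_add_mul_self (by linarith) (by linarith) (by linarith)
  have factor : (i : ℝ) = (i + 1) * (1 + -((i : ℝ) + 1)⁻¹) := by
    field_simp
    ring
  have rpow_le : (i : ℝ) ^ (x + 1) ≤ (i + 1) ^ (x + 1) * (1 + (x + 1) * -((i : ℝ) + 1)⁻¹) := by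
    conv_lhs => rw [factor, Real.mul_rpow succ_pos.le (by linarith)]
    gcongr
  rw [Real.rpow_add_one succ_pos.ne'] at rpow_le ⊢
  have expand : ((i : ℝ) + 1) ^ x * (i + 1) * (1 + (x + 1) * -((i : ℝ) + 1)⁻¹) =
      (i + 1) ^ x * (i + 1) - (x + 1) * (i + 1) ^ x := by
    field_simp
    ring
  linarith

lemma sum_range_add_one_rpow_le (hx : -1 < x) (hx0 : x ≤ 0) (M : ℕ) :
    ∑ i ∈ Finset.range M, ((i : ℝ) + 1) ^ x ≤ (M : ℝ) ^ (x + 1) / (x + 1) := by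
  have add_one_pos : 0 < x + 1 := by linarith
  rw [le_div_iff₀' add_one_pos, Finset.mul_sum]
  calc ∑ i ∈ Finset.range M, (x + 1) * ((i : ℝ) + 1) ^ x
      ≤ ∑ i ∈ Finset.range M, (((i + 1 : ℕ) : ℝ) ^ (x + 1) - (i : ℝ) ^ (x + 1)) := by
        gcongr with i
        rw [Nat.cast_succ]
        exact mul_rpow_le_rpow_add_one_sub hx hx0 i
    _ = (M : ℝ) ^ (x + 1) := by
        rw [Finset.sum_range_sub fun i : ℕ => (i : ℝ) ^ (x + 1), Nat.cast_zero,
          Real.zero_rpow add_one_pos.ne', sub_zero]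

lemma sum_Icc_one_reflect (f : ℕ → ℝ) (M : ℕ) :
    ∑ m ∈ Finset.Icc 1 M, f (M - m) = ∑ i ∈ Finset.range M, f i := by
  rw [← Finset.Ico_add_one_right_eq_Icc, Finset.sum_Ico_reflect f 1 le_rfl, Nat.sub_self,
    Nat.add_sub_cancel, Finset.range_eq_Ico]

lemma sum_Icc_one_eq_sum_range (f : ℕ → ℝ) (M : ℕ) :
    ∑ m ∈ Finset.Icc 1 M, f m = ∑ i ∈ Finset.range M, f (i + 1) := by
  rw [← Finset.Ico_add_one_right_eq_Icc, Finset.sum_Ico_eq_sum_range, Nat.add_sub_cancel]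
  simp only [add_comm]

/-- The constant with which a convolution of the weights `m ^ x` and `m ^ y` is bounded in
`sum_rpow_mul_rpow_le`. -/
def convConst (x y : ℝ) : ℝ := 2 ^ (-x) / (y + 1) + 2 ^ (-y) / (x + 1)

lemma convConst_pos (hx : -1 < x) (hy : -1 < y) : 0 < convConst x y := by
  have : 0 < x + 1 := by linarith
  have : 0 < y + 1 := by linarith
  unfold convConst
  positivity

lemma rpow_le_two_rpow_neg_mul {u R : ℝ} (hR : 0 < R) (hu : R / 2 ≤ u) (hx : x ≤ 0) :
    u ^ x ≤ 2 ^ (-x) * R ^ x :=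
  calc u ^ x ≤ (R / 2) ^ x := Real.rpow_le_rpow_of_nonpos (by positivity) hu hx
    _ = 2 ^ (-x) * R ^ x := by
      rw [Real.div_rpow hR.le zero_le_two, Real.rpow_neg zero_le_two, div_eq_inv_mul]

/-- In each term one of the two factors is evaluated at a point of size at least `M / 2`. -/
lemma sum_rpow_mul_rpow_le (hx : -1 < x) (hx0 : x ≤ 0) (hy : -1 < y) (hy0 : y ≤ 0) {M : ℕ}
    (hM : 1 ≤ M) :
    ∑ m ∈ Finset.Icc 1 M, (m : ℝ) ^ x * (((M - m : ℕ) : ℝ) + 1) ^ y ≤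
      convConst x y * (M : ℝ) ^ (x + y + 1) := by
  have M_pos : (0 : ℝ) < M := by exact_mod_cast hM
  have term_le : ∀ m ∈ Finset.Icc 1 M, (m : ℝ) ^ x * (((M - m : ℕ) : ℝ) + 1) ^ y ≤
      2 ^ (-x) * (M : ℝ) ^ x * (((M - m : ℕ) : ℝ) + 1) ^ y +
        2 ^ (-y) * (M : ℝ) ^ y * (m : ℝ) ^ x := by
    intro m hm
    have m_le : m ≤ M := (Finset.mem_Icc.mp hm).2
    rcases le_total ((M : ℝ) / 2) m with h | h
    · exact le_add_of_le_of_nonneg (by gcongr; exact rpow_le_two_rpow_neg_mul M_pos h hx0)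
        (by positivity)
    · refine le_add_of_nonneg_of_le (by positivity) ?_
      rw [mul_comm]
      gcongr
      refine rpow_le_two_rpow_neg_mul M_pos ?_ hy0
      rw [Nat.cast_sub m_le]
      linarith
  have sum_reflect_le :
      ∑ m ∈ Finset.Icc 1 M, (((M - m : ℕ) : ℝ) + 1) ^ y ≤ (M : ℝ) ^ (y + 1) / (y + 1) := by
    rw [sum_Icc_one_reflect fun i => ((i : ℝ) + 1) ^ y]
    exact sum_range_add_one_rpow_le hy hy0 M
  have sum_le : ∑ m ∈ Finset.Icc 1 M, (m : ℝ) ^ x ≤ (M : ℝ) ^ (x + 1) / (x + 1) := by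
    rw [sum_Icc_one_eq_sum_range fun m => (m : ℝ) ^ x]
    push_cast
    exact sum_range_add_one_rpow_le hx hx0 M
  calc _ ≤ 2 ^ (-x) * (M : ℝ) ^ x * ((M : ℝ) ^ (y + 1) / (y + 1)) +
        2 ^ (-y) * (M : ℝ) ^ y * ((M : ℝ) ^ (x + 1) / (x + 1)) := by
        refine (Finset.sum_le_sum term_le).trans ?_
        rw [Finset.sum_add_distrib, ← Finset.mul_sum, ← Finset.mul_sum]
        gcongr
    _ = convConst x y * (M : ℝ) ^ (x + y + 1) := by
        simp only [convConst, Real.rpow_add M_pos]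
        ring

lemma min_one_pow_le_rpow {b : ℝ} {γ : ℕ} (hx : 0 ≤ x) (hb : 0 < b) (hbγ : b ≤ γ) :
    min 1 (x ^ γ) ≤ x ^ b := by
  rcases le_total 1 x with h | h
  · exact (min_le_left _ _).trans (Real.one_le_rpow h hb.le)
  · refine (min_le_right _ _).trans ?_
    rw [← Real.rpow_natCast]
    exact Real.rpow_le_rpow_of_exponent_ge' hx h hb.le hbγ

end Convolution

section Duhamel

open LaurentPolynomial

/-! ### Duhamel sums -/

/-- The space-time convolution `∑ₘ p ^ (M - m) f ∗ Z m`, up to time `M`, of the grid function `Z`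
with the kernel whose value at time `m` is `p ^ m f`. -/
def duhamel (p f : ℝ[T;T⁻¹]) (Z : ℕ → ℤ → ℝ) (M : ℕ) (k : ℤ) : ℝ :=
  ∑ m ∈ Finset.Icc 1 M, convAt (Z m) k (f * p ^ (M - m))

/-- The bound on the pairing of `Z m`, for `1 ≤ m ≤ N`, with `κ` differences of the kernel `p ^ j`,
for `j < N`, in the case of a parabolic kernel `p` and of a grid function `Z` of spatial regularity
`β` whose size at time `m` is `m ^ (ρ / 2)`. -/
def HasParabolicBound (p : ℝ[T;T⁻¹]) (β ρ : ℝ) (κ : ℕ) (A : ℝ) (Z : ℕ → ℤ → ℝ) (N : ℕ) : Prop :=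
  ∀ m ∈ Finset.Icc 1 N, ∀ j < N, ∀ (k : ℤ) (w : ℝ[T;T⁻¹]),
    |convAt (Z m) k (w * ((T 1 - 1) ^ κ * p ^ j))| ≤
      A * (m : ℝ) ^ (ρ / 2) * l1Norm w * ((j : ℝ) + 1) ^ ((β - κ) / 2)

variable {p : ℝ[T;T⁻¹]} {β ρ θ A : ℝ} {n N M τ : ℕ} {Z : ℕ → ℤ → ℝ}

lemma duhamel_sub (p f g : ℝ[T;T⁻¹]) (Z : ℕ → ℤ → ℝ) (M : ℕ) (k : ℤ) :
    duhamel p (f - g) Z M k = duhamel p f Z M k - duhamel p g Z M k := by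
  simp only [duhamel, sub_mul, map_sub, Finset.sum_sub_distrib]

lemma duhamel_T_mul (p f : ℝ[T;T⁻¹]) (Z : ℕ → ℤ → ℝ) (M : ℕ) (i k : ℤ) :
    duhamel p (T i * f) Z M k = duhamel p f Z M (k - i) := by
  simp only [duhamel, mul_assoc, convAt_T_mul]

lemma duhamel_add (p f : ℝ[T;T⁻¹]) (Z : ℕ → ℤ → ℝ) (M τ : ℕ) (k : ℤ) :
    duhamel p f Z (M + τ) k =
      duhamel p (f * p ^ τ) Z M k + duhamel p f (fun m => Z (M + m)) τ k := by
  have recent : ∑ m ∈ Finset.Icc 1 τ, convAt (Z (M + m)) k (f * p ^ (τ - m)) =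
      ∑ i ∈ Finset.range τ, convAt (Z (M + i + 1)) k (f * p ^ (M + τ - (M + i + 1))) := by
    rw [sum_Icc_one_eq_sum_range fun m => convAt (Z (M + m)) k (f * p ^ (τ - m))]
    refine Finset.sum_congr rfl fun i _ => ?_
    rw [add_assoc, Nat.add_sub_add_left]
  rw [duhamel, duhamel, duhamel, recent,
    sum_Icc_one_eq_sum_range fun m => convAt (Z m) k (f * p ^ (M + τ - m)), Finset.sum_range_add,
    ← sum_Icc_one_eq_sum_range fun m => convAt (Z m) k (f * p ^ (M + τ - m))]
  congr 1
  refine Finset.sum_congr rfl fun m hm => ?_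
  rw [mul_assoc, ← pow_add, ← Nat.add_sub_assoc (Finset.mem_Icc.mp hm).2, add_comm τ]

namespace HasParabolicBound

lemma mono {κ : ℕ} {A' : ℝ} (h : HasParabolicBound p β ρ κ A Z N) (hA : A ≤ A') :
    HasParabolicBound p β ρ κ A' Z N := fun m hm j hj k w =>
  (h m hm j hj k w).trans (by gcongr)

lemma abs_duhamel_le (h : HasParabolicBound p β ρ n A Z N) (hρ : ρ ∈ Set.Ioc (-2 : ℝ) 0)
    (hn : (n : ℝ) ∈ Set.Ico (β + 1) (β + 2)) (hM : M ∈ Finset.Icc 1 N) (hA : 0 ≤ A) (k : ℤ)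
    (v : ℝ[T;T⁻¹]) :
    |duhamel p (v * (T 1 - 1) ^ n) Z M k| ≤
      convConst (ρ / 2) ((β - n) / 2) * l1Norm v * A * (M : ℝ) ^ ((ρ + β + 2 - n) / 2) := by
  obtain ⟨hρ₀, hρ₁⟩ := hρ
  obtain ⟨hn₀, hn₁⟩ := hn
  obtain ⟨one_le, M_le⟩ := Finset.mem_Icc.mp hM
  calc |duhamel p (v * (T 1 - 1) ^ n) Z M k|
      ≤ ∑ m ∈ Finset.Icc 1 M,
          A * l1Norm v * ((m : ℝ) ^ (ρ / 2) * (((M - m : ℕ) : ℝ) + 1) ^ ((β - n) / 2)) := by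
        refine (Finset.abs_sum_le_sum_abs _ _).trans (Finset.sum_le_sum fun m hm => ?_)
        rw [Finset.mem_Icc] at hm
        rw [mul_assoc v]
        refine (h m (Finset.mem_Icc.mpr (by omega)) (M - m) (by omega) k v).trans_eq ?_
        ring
    _ ≤ A * l1Norm v * (convConst (ρ / 2) ((β - n) / 2) *
          (M : ℝ) ^ (ρ / 2 + (β - n) / 2 + 1)) := by
        rw [← Finset.mul_sum]
        gcongr
        exact sum_rpow_mul_rpow_le (by linarith) (by linarith) (by linarith) (by linarith) one_le
    _ = _ := by
        rw [show ρ / 2 + (β - n) / 2 + 1 = (ρ + β + 2 - n) / 2 by ring]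
        ring

/-- Interpolates between the bounds for the `n`-th and the `(n + γ)`-th differences of the
kernel. -/
lemma abs_convAt_le {γ : ℕ} {b W Y : ℝ} {w u : ℝ[T;T⁻¹]}
    (h : HasParabolicBound p β ρ n A Z N) (h' : HasParabolicBound p β ρ (n + γ) A Z N)
    (hb : 0 < b) (hbγ : b ≤ γ) (hA : 0 ≤ A) (hY : 0 ≤ Y) (hw : l1Norm w ≤ W)
    (hu : l1Norm u ≤ W * Y ^ γ) (eq : w = u * (T 1 - 1) ^ γ) {m j : ℕ} (hm : m ∈ Finset.Icc 1 N)
    (hj : j < N) (k : ℤ) :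
    |convAt (Z m) k (w * ((T 1 - 1) ^ n * p ^ j))| ≤
      A * W * Y ^ b * ((m : ℝ) ^ (ρ / 2) * ((j : ℝ) + 1) ^ ((β - n - b) / 2)) := by
  have s_pos : (0 : ℝ) < j + 1 := by positivity
  have W_nonneg : 0 ≤ W := (apply_nonneg l1Norm w).trans hw
  have le₀ := h m hm j hj k w
  have le₁ := h' m hm j hj k u
  rw [pow_add, mul_assoc ((T 1 - 1) ^ n), mul_left_comm ((T 1 - 1) ^ n), ← mul_assoc u, ← eq,
    Nat.cast_add, ← sub_sub, sub_div _ (γ : ℝ), Real.rpow_sub s_pos, ← sqrt_rpow s_pos.le γ,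
    Real.rpow_natCast] at le₁
  rw [sub_div _ b, Real.rpow_sub s_pos, ← sqrt_rpow s_pos.le b]
  set s := (j : ℝ) + 1
  set V := |convAt (Z m) k (w * ((T 1 - 1) ^ n * p ^ j))|
  have le_min : V ≤ A * (m : ℝ) ^ (ρ / 2) * W * s ^ ((β - n) / 2) * min 1 ((Y / √s) ^ γ) := by
    rw [mul_min_of_nonneg _ _ (by positivity), mul_one]
    refine le_min (le₀.trans (by gcongr)) (le₁.trans ?_)
    calc _ ≤ A * (m : ℝ) ^ (ρ / 2) * (W * Y ^ γ) * (s ^ ((β - n) / 2) / √s ^ γ) := by gcongr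
      _ = _ := by
        rw [div_pow]
        ring
  calc V ≤ A * (m : ℝ) ^ (ρ / 2) * W * s ^ ((β - n) / 2) * (Y / √s) ^ b :=
        le_min.trans (by gcongr; exact min_one_pow_le_rpow (by positivity) hb hbγ)
    _ = _ := by
        rw [Real.div_rpow hY (Real.sqrt_nonneg s)]
        ring

lemma abs_duhamel_mul_le {γ : ℕ} {W Y : ℝ} {w u : ℝ[T;T⁻¹]}
    (h : HasParabolicBound p β ρ n A Z N) (h' : HasParabolicBound p β ρ (n + γ) A Z N)
    (hρ : ρ ∈ Set.Ioc (-2 : ℝ) 0) (hn : β + 1 ≤ n) (hθ : θ ∈ Set.Ioo 0 (β + 2 - n)) (hγ : 1 ≤ γ)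
    (hA : 0 ≤ A) (hY : 0 ≤ Y) (hw : l1Norm w ≤ W) (hu : l1Norm u ≤ W * Y ^ γ)
    (eq : w = u * (T 1 - 1) ^ γ) (hM : M ∈ Finset.Icc 1 N) (k : ℤ) :
    |duhamel p (w * (T 1 - 1) ^ n) Z M k| ≤
      convConst (ρ / 2) (θ / 2 - 1) * W * A * Y ^ (β + 2 - n - θ) * (M : ℝ) ^ ((ρ + θ) / 2) := by
  obtain ⟨hρ₀, hρ₁⟩ := hρ
  obtain ⟨hθ₀, hθ₁⟩ := hθ
  obtain ⟨one_le, M_le⟩ := Finset.mem_Icc.mp hM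
  have one_le_γ : (1 : ℝ) ≤ γ := by exact_mod_cast hγ
  have W_nonneg : 0 ≤ W := (apply_nonneg l1Norm w).trans hw
  calc |duhamel p (w * (T 1 - 1) ^ n) Z M k|
      ≤ ∑ m ∈ Finset.Icc 1 M, A * W * Y ^ (β + 2 - n - θ) *
          ((m : ℝ) ^ (ρ / 2) * (((M - m : ℕ) : ℝ) + 1) ^ (θ / 2 - 1)) := by
        refine (Finset.abs_sum_le_sum_abs _ _).trans (Finset.sum_le_sum fun m hm => ?_)
        rw [Finset.mem_Icc] at hm
        rw [mul_assoc w, show θ / 2 - 1 = (β - n - (β + 2 - n - θ)) / 2 by ring]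
        exact h.abs_convAt_le h' (by linarith) (by linarith) hA hY hw hu eq
          (Finset.mem_Icc.mpr (by omega)) (by omega) k
    _ ≤ A * W * Y ^ (β + 2 - n - θ) * (convConst (ρ / 2) (θ / 2 - 1) *
          (M : ℝ) ^ (ρ / 2 + (θ / 2 - 1) + 1)) := by
        rw [← Finset.mul_sum]
        gcongr
        exact sum_rpow_mul_rpow_le (by linarith) (by linarith) (by linarith) (by linarith) one_le
    _ = _ := by
        rw [show ρ / 2 + (θ / 2 - 1) + 1 = (ρ + θ) / 2 by ring]
        ring

lemma abs_duhamel_sub_space_le (h : HasParabolicBound p β ρ n A Z N)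
    (h' : HasParabolicBound p β ρ (n + 1) A Z N) (hρ : ρ ∈ Set.Ioc (-2 : ℝ) 0) (hn : β + 1 ≤ n)
    (hθ : θ ∈ Set.Ioo 0 (β + 2 - n)) (hA : 0 ≤ A) (hM : M ∈ Finset.Icc 1 N) (k k' : ℤ)
    (v : ℝ[T;T⁻¹]) :
    |duhamel p (v * (T 1 - 1) ^ n) Z M k' - duhamel p (v * (T 1 - 1) ^ n) Z M k| ≤
      convConst (ρ / 2) (θ / 2 - 1) * (2 * l1Norm v) * A * |(k' : ℝ) - k| ^ (β + 2 - n - θ) *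
        (M : ℝ) ^ ((ρ + θ) / 2) := by
  obtain ⟨q, q_eq, norm_q_le⟩ := exists_T_sub_one_eq_mul (k - k')
  rw [Int.cast_sub, abs_sub_comm] at norm_q_le
  have norm_nonneg := apply_nonneg l1Norm v
  have increment : duhamel p (v * (T 1 - 1) ^ n) Z M k' - duhamel p (v * (T 1 - 1) ^ n) Z M k =
      duhamel p ((T (k - k') - 1) * v * (T 1 - 1) ^ n) Z M k := by
    rw [sub_mul, sub_mul, duhamel_sub, mul_assoc, duhamel_T_mul, sub_sub_cancel, one_mul]
  rw [increment]
  refine h.abs_duhamel_mul_le (u := q * v) h' hρ hn hθ le_rfl hA (abs_nonneg _) ?_ ?_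
    (by rw [q_eq]; ring) hM k
  · have norm_le : l1Norm (T (k - k') - 1) ≤ 2 :=
      (map_sub_le_add l1Norm _ _).trans (by rw [l1Norm_T, l1Norm_one]; norm_num)
    exact (l1Norm_mul_le _ _).trans (by gcongr)
  · calc l1Norm (q * v) ≤ |(k' : ℝ) - k| * l1Norm v :=
          (l1Norm_mul_le _ _).trans (by gcongr)
      _ ≤ 2 * l1Norm v * |(k' : ℝ) - k| ^ 1 := by
          rw [pow_one]
          nlinarith [mul_nonneg (abs_nonneg ((k' : ℝ) - k)) norm_nonneg]

lemma abs_duhamel_pow_sub_one_le {q : ℝ[T;T⁻¹]} {D : ℝ} (h : HasParabolicBound p β ρ n A Z N)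
    (h' : HasParabolicBound p β ρ (n + 2) A Z N) (hρ : ρ ∈ Set.Ioc (-2 : ℝ) 0) (hn : β + 1 ≤ n)
    (hθ : θ ∈ Set.Ioo 0 (β + 2 - n)) (hA : 0 ≤ A) (hq : p - 1 = q * (T 1 - 1) ^ 2)
    (hD : ∀ m : ℕ, l1Norm (p ^ m) ≤ D) (hM : M ∈ Finset.Icc 1 N) (τ : ℕ) (k : ℤ) (v : ℝ[T;T⁻¹]) :
    |duhamel p (v * (p ^ τ - 1) * (T 1 - 1) ^ n) Z M k| ≤
      convConst (ρ / 2) (θ / 2 - 1) * (l1Norm v * ((D + 1) * (1 + l1Norm q))) * A *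
        √τ ^ (β + 2 - n - θ) * (M : ℝ) ^ ((ρ + θ) / 2) := by
  have norm_q_nonneg := apply_nonneg l1Norm q
  have D_nonneg : 0 ≤ D := (apply_nonneg l1Norm _).trans (hD 0)
  refine h.abs_duhamel_mul_le (u := v * (q * ∑ i ∈ Finset.range τ, p ^ i)) h' hρ hn hθ one_le_two hA
    (Real.sqrt_nonneg _) ?_ ?_ (by rw [← mul_geom_sum p τ, hq]; ring) hM k
  · have norm_le : l1Norm (p ^ τ - 1) ≤ D + 1 :=
      (map_sub_le_add l1Norm _ _).trans (by rw [l1Norm_one]; gcongr; exact hD τ)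
    refine (l1Norm_mul_le _ _).trans ?_
    gcongr
    exact norm_le.trans (le_mul_of_one_le_right (by positivity) (by linarith))
  · have norm_sum_le : l1Norm (∑ i ∈ Finset.range τ, p ^ i) ≤ τ * D :=
      (l1Norm_sum_le _ _).trans ((Finset.sum_le_sum fun i _ => hD i).trans_eq (by simp))
    rw [Real.sq_sqrt τ.cast_nonneg]
    calc l1Norm (v * (q * ∑ i ∈ Finset.range τ, p ^ i)) ≤ l1Norm v * (l1Norm q * (τ * D)) := by
          refine (l1Norm_mul_le _ _).trans ?_
          gcongr
          exact (l1Norm_mul_le _ _).trans (by gcongr)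
      _ ≤ l1Norm v * ((1 + l1Norm q) * (τ * (D + 1))) := by gcongr <;> linarith
      _ = l1Norm v * ((D + 1) * (1 + l1Norm q)) * τ := by ring

lemma abs_duhamel_shift_le (h : HasParabolicBound p β ρ n A Z N) (hρ : ρ ≤ 0)
    (hn : (n : ℝ) ∈ Set.Ico (β + 1) (β + 2)) (hA : 0 ≤ A) (hM : 1 ≤ M) (hMτ : M + τ ≤ N) (k : ℤ)
    (v : ℝ[T;T⁻¹]) :
    |duhamel p (v * (T 1 - 1) ^ n) (fun m => Z (M + m)) τ k| ≤
      l1Norm v / ((β - n) / 2 + 1) * A * (M : ℝ) ^ (ρ / 2) * (τ : ℝ) ^ ((β - n) / 2 + 1) := by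
  obtain ⟨hn₀, hn₁⟩ := hn
  have M_pos : (0 : ℝ) < M := by exact_mod_cast hM
  calc |duhamel p (v * (T 1 - 1) ^ n) (fun m => Z (M + m)) τ k|
      ≤ ∑ m ∈ Finset.Icc 1 τ,
          A * (M : ℝ) ^ (ρ / 2) * l1Norm v * (((τ - m : ℕ) : ℝ) + 1) ^ ((β - n) / 2) := by
        refine (Finset.abs_sum_le_sum_abs _ _).trans (Finset.sum_le_sum fun m hm => ?_)
        rw [Finset.mem_Icc] at hm
        rw [mul_assoc v]
        refine (h (M + m) (Finset.mem_Icc.mpr (by omega)) (τ - m) (by omega) k v).trans ?_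
        gcongr ?_ * ?_ * ?_ * ?_
        exact Real.rpow_le_rpow_of_nonpos M_pos (by exact_mod_cast M.le_add_right m) (by linarith)
    _ ≤ A * (M : ℝ) ^ (ρ / 2) * l1Norm v *
          ((τ : ℝ) ^ ((β - n) / 2 + 1) / ((β - n) / 2 + 1)) := by
        rw [← Finset.mul_sum, sum_Icc_one_reflect fun i => ((i : ℝ) + 1) ^ ((β - n) / 2)]
        gcongr
        exact sum_range_add_one_rpow_le (by linarith) (by linarith) τ
    _ = _ := by ring

lemma abs_duhamel_sub_time_le {q : ℝ[T;T⁻¹]} {D : ℝ} (h : HasParabolicBound p β ρ n A Z N)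
    (h' : HasParabolicBound p β ρ (n + 2) A Z N) (hρ : ρ ∈ Set.Ioc (-2 : ℝ) 0) (hn : β + 1 ≤ n)
    (hθ : θ ∈ Set.Ioo 0 (β + 2 - n)) (hA : 0 ≤ A) (hq : p - 1 = q * (T 1 - 1) ^ 2)
    (hD : ∀ m : ℕ, l1Norm (p ^ m) ≤ D) (hM : 1 ≤ M) (hMτ : M + τ ≤ N) (hτ : τ ≤ M) (k : ℤ)
    (v : ℝ[T;T⁻¹]) :
    |duhamel p (v * (T 1 - 1) ^ n) Z (M + τ) k - duhamel p (v * (T 1 - 1) ^ n) Z M k| ≤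
      (convConst (ρ / 2) (θ / 2 - 1) * (l1Norm v * ((D + 1) * (1 + l1Norm q))) +
        l1Norm v / ((β - n) / 2 + 1)) * A *
        √τ ^ (β + 2 - n - θ) * (M : ℝ) ^ ((ρ + θ) / 2) := by
  obtain ⟨hθ₀, hθ₁⟩ := hθ
  have M_pos : (0 : ℝ) < M := by exact_mod_cast hM
  have exponent_pos : 0 < (β - n) / 2 + 1 := by linarith
  have increment :
      duhamel p (v * (T 1 - 1) ^ n) Z (M + τ) k - duhamel p (v * (T 1 - 1) ^ n) Z M k =
        duhamel p (v * (p ^ τ - 1) * (T 1 - 1) ^ n) Z M k +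
          duhamel p (v * (T 1 - 1) ^ n) (fun m => Z (M + m)) τ k := by
    rw [duhamel_add, mul_sub, mul_one, sub_mul, duhamel_sub, mul_right_comm v]
    ring
  have weight_le : (M : ℝ) ^ (ρ / 2) * (τ : ℝ) ^ ((β - n) / 2 + 1) ≤
      √τ ^ (β + 2 - n - θ) * (M : ℝ) ^ ((ρ + θ) / 2) := by
    rw [show (β - n) / 2 + 1 = (β + 2 - n - θ) / 2 + θ / 2 by ring,
      Real.rpow_add_of_nonneg τ.cast_nonneg (by linarith) (by linarith),
      ← sqrt_rpow τ.cast_nonneg, add_div, Real.rpow_add M_pos, mul_left_comm]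
    gcongr
  rw [increment]
  have old_le := h.abs_duhamel_pow_sub_one_le (M := M) h' hρ hn ⟨hθ₀, hθ₁⟩ hA hq hD
    (Finset.mem_Icc.mpr (by omega)) τ k v
  have recent_le := h.abs_duhamel_shift_le hρ.2 ⟨hn, by linarith⟩ hA hM hMτ k v
  have weighted := mul_le_mul_of_nonneg_left weight_le
    (show 0 ≤ l1Norm v / ((β - n) / 2 + 1) * A by positivity)
  refine (abs_add_le _ _).trans ?_
  linear_combination old_le + recent_le + weighted

lemma abs_duhamel_sub_le {q : ℝ[T;T⁻¹]} {D : ℝ} (h : HasParabolicBound p β ρ n A Z N)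
    (h₁ : HasParabolicBound p β ρ (n + 1) A Z N) (h₂ : HasParabolicBound p β ρ (n + 2) A Z N)
    (hρ : ρ ∈ Set.Ioc (-2 : ℝ) 0) (hn : β + 1 ≤ n) (hθ : θ ∈ Set.Ioo 0 (β + 2 - n)) (hA : 0 ≤ A)
    (hq : p - 1 = q * (T 1 - 1) ^ 2) (hD : ∀ m : ℕ, l1Norm (p ^ m) ≤ D) (hM : 1 ≤ M)
    (hMτ : M + τ ≤ N) (hτ : τ ≤ M) (k k' : ℤ) (v : ℝ[T;T⁻¹]) :
    |duhamel p (v * (T 1 - 1) ^ n) Z (M + τ) k' - duhamel p (v * (T 1 - 1) ^ n) Z M k| ≤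
      (convConst (ρ / 2) (θ / 2 - 1) * (l1Norm v * ((D + 1) * (1 + l1Norm q))) +
        l1Norm v / ((β - n) / 2 + 1) + convConst (ρ / 2) (θ / 2 - 1) * (2 * l1Norm v)) * A *
        max √τ |(k' : ℝ) - k| ^ (β + 2 - n - θ) * (M : ℝ) ^ ((ρ + θ) / 2) := by
  have D_nonneg : 0 ≤ D := (apply_nonneg l1Norm _).trans (hD 0)
  have conv_pos : 0 < convConst (ρ / 2) (θ / 2 - 1) :=
    convConst_pos (by linarith [hρ.1]) (by linarith [hθ.1])
  have exponent_pos : 0 < (β - n) / 2 + 1 := by linarith [hθ.1, hθ.2]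
  have regularity_nonneg : 0 ≤ β + 2 - n - θ := by linarith [hθ.2]
  refine (abs_sub_le _ (duhamel p (v * (T 1 - 1) ^ n) Z M k') _).trans ?_
  rw [add_mul, add_mul, add_mul]
  refine add_le_add ?_ ?_
  · refine (h.abs_duhamel_sub_time_le h₂ hρ hn hθ hA hq hD hM hMτ hτ k' v).trans ?_
    gcongr
    exact le_max_left _ _
  · refine (h.abs_duhamel_sub_space_le h₁ hρ hn hθ hA
      (Finset.mem_Icc.mpr ⟨hM, by omega⟩) k k' v).trans ?_
    gcongr
    exact le_max_right _ _

end HasParabolicBound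

end Duhamel

section GridConvolution

open LaurentPolynomial

/-! ### The convolution with the discrete heat kernel -/

variable {a b : ℤ →₀ ℝ} {β ρ : ℝ} {n : ℕ}

lemma IsEllipticStencil.exists_l1Norm_mul_heatStep_pow_le (ha : IsEllipticStencil a) (κ : ℕ) :
    ∃ C, 0 < C ∧ ∀ m : ℕ, l1Norm ((T 1 - 1) ^ κ * heatStep a ^ m) ≤ C / √(m + 1) ^ κ := by
  obtain ⟨c, hc, symbol_le⟩ := ha.exists_norm_symbol_heatStep_le
  obtain ⟨D, hD, deriv_le⟩ := exists_norm_deriv_symbol_heatStep_le ha.symm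
  exact exists_l1Norm_mul_pow_le hc symbol_le hD (fun θ _ => deriv_le θ) κ

lemma exists_heatStep_sub_one_eq_mul (ha_symm : ∀ k, a (-k) = a k)
    (ha0 : ∑ k ∈ a.support, a k = 0) : ∃ q, heatStep a - 1 = q * (T 1 - 1) ^ 2 := by
  obtain ⟨q, hq⟩ := T_sub_one_sq_dvd_stencil ha_symm ha0
  exact ⟨(2 * ∑ k ∈ a.support, |a k|)⁻¹ • q, by
    rw [heatStep, add_sub_cancel_left, hq, smul_mul_assoc, mul_comm q]⟩

lemma dheatConv_eq_duhamel (a : ℤ →₀ ℝ) {d : ℝ[T;T⁻¹]} (hd : stencil b = (T 1 - 1) * d) (n : ℕ)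
    {ε : ℝ} (hε : 0 < ε) (ζ : ℕ → ℤ → ℝ) (M : ℕ) (k : ℤ) :
    dheatConv a b n ε ζ M k =
      ε ^ (2 - n : ℝ) * duhamel (heatStep a) (d ^ n * (T 1 - 1) ^ n) ζ M k := by
  rw [dheatConv_eq_sum_convAt, hd, mul_comm _ d, mul_pow, Real.rpow_sub hε, Real.rpow_two,
    Real.rpow_natCast, duhamel]
  field_simp
  ring

lemma rpow_mul_rpow_half {ε x : ℝ} (hε : 0 < ε) (hx : 0 ≤ x) (s : ℝ) :
    ε ^ s * x ^ (s / 2) = (ε * √x) ^ s := by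
  rw [Real.mul_rpow hε.le (Real.sqrt_nonneg x), sqrt_rpow hx]

lemma IsEllipticStencil.exists_hasParabolicBound (ha : IsEllipticStencil a) (hβ : -2 < β)
    (ρ : ℝ) (r κ : ℕ) :
    ∃ C, 0 < C ∧ ∀ {ε K : ℝ} {Z : ℕ → ℤ → ℝ} {N : ℕ}, 0 < ε → 0 ≤ K → ε ^ 2 * N ≤ 1 →
      (∀ m ∈ Finset.Icc 1 N, IsHolderOnGrid ε β r (K * (ε * √m) ^ ρ) (Z m)) →
        HasParabolicBound (heatStep a) β ρ κ (C * K * ε ^ (ρ + β)) Z N := by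
  obtain ⟨C, hC, pairing_le⟩ :=
    exists_abs_convAt_mul_pow_le hβ r ha.exists_l1Norm_mul_heatStep_pow_le κ
  refine ⟨C, hC, fun {ε K Z N} hε hK hN hZ m hm j hj k w => ?_⟩
  have le_one : ε ^ 2 * ((j : ℝ) + 1) ≤ 1 := by
    have : (j : ℝ) + 1 ≤ N := by exact_mod_cast hj
    exact le_trans (by gcongr) hN
  refine (pairing_le hε (by positivity) (hZ m hm) j le_one k w).trans_eq ?_
  rw [← rpow_mul_rpow_half hε m.cast_nonneg, Real.rpow_add hε]
  ring

lemma exists_abs_dheatConv_le (ha : IsEllipticStencil a) (hb : ∑ k ∈ b.support, b k = 0)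
    (hρ : ρ ∈ Set.Ioc (-2 : ℝ) 0) (hn : (n : ℝ) ∈ Set.Ico (β + 1) (β + 2)) (r : ℕ) :
    ∃ C, 0 ≤ C ∧ ∀ {ε K : ℝ} {Z : ℕ → ℤ → ℝ} {M : ℕ}, 0 < ε → 0 ≤ K → 1 ≤ M → ε ^ 2 * M ≤ 1 →
      (∀ m ∈ Finset.Icc 1 M, IsHolderOnGrid ε β r (K * (ε * √m) ^ ρ) (Z m)) →
        ∀ k : ℤ, |dheatConv a b n ε Z M k| ≤ C * K * (ε * √M) ^ (ρ + β + 2 - n) := by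
  have β_gt : -2 < β := by linarith [hn.2, n.cast_nonneg (α := ℝ)]
  obtain ⟨d, hd⟩ := T_sub_one_dvd_stencil hb
  obtain ⟨C, hC, parabolic⟩ := ha.exists_hasParabolicBound β_gt ρ r n
  have conv_pos : 0 < convConst (ρ / 2) ((β - n) / 2) :=
    convConst_pos (by linarith [hρ.1]) (by linarith [hn.2])
  refine ⟨convConst (ρ / 2) ((β - n) / 2) * l1Norm (d ^ n) * C, by positivity,
    fun {ε K Z M} hε hK hM hM₁ hZ k => ?_⟩
  rw [dheatConv_eq_duhamel a hd n hε, abs_mul, abs_of_pos (by positivity)]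
  calc _ ≤ ε ^ (2 - n : ℝ) * (convConst (ρ / 2) ((β - n) / 2) * l1Norm (d ^ n) *
        (C * K * ε ^ (ρ + β)) * (M : ℝ) ^ ((ρ + β + 2 - n) / 2)) := by
        gcongr
        exact (parabolic hε hK hM₁ hZ).abs_duhamel_le hρ hn (Finset.mem_Icc.mpr ⟨hM, le_rfl⟩)
          (by positivity) k _
    _ = _ := by
        rw [← rpow_mul_rpow_half hε M.cast_nonneg, show
          ε ^ (ρ + β + 2 - n) = ε ^ (2 - n : ℝ) * ε ^ (ρ + β) by rw [← Real.rpow_add hε]; ring_nf]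
        ring

lemma exists_abs_dheatConv_add_sub_le (ha : IsEllipticStencil a)
    (hb : ∑ k ∈ b.support, b k = 0) (hρ : ρ ∈ Set.Ioc (-2 : ℝ) 0) (hn : β + 1 ≤ n) {θ : ℝ}
    (hθ : θ ∈ Set.Ioo 0 (β + 2 - n)) (r : ℕ) :
    ∃ C, 0 ≤ C ∧ ∀ {ε K : ℝ} {Z : ℕ → ℤ → ℝ} {M τ : ℕ}, 0 < ε → 0 ≤ K → 1 ≤ M → τ ≤ M →
      ε ^ 2 * (M + τ : ℕ) ≤ 1 →
      (∀ m ∈ Finset.Icc 1 (M + τ), IsHolderOnGrid ε β r (K * (ε * √m) ^ ρ) (Z m)) →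
        ∀ k k' : ℤ, |dheatConv a b n ε Z (M + τ) k' - dheatConv a b n ε Z M k| ≤
          C * K * (ε * √M) ^ (ρ + θ) * (ε * max √τ |(k' : ℝ) - k|) ^ (β + 2 - n - θ) := by
  have β_gt : -2 < β := by linarith [hθ.1, hθ.2, n.cast_nonneg (α := ℝ)]
  have β_sub_pos : 0 < (β - n) / 2 + 1 := by linarith [hθ.1, hθ.2]
  obtain ⟨d, hd⟩ := T_sub_one_dvd_stencil hb
  obtain ⟨q, hq⟩ := exists_heatStep_sub_one_eq_mul ha.symm ha.sum_eq_zero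
  obtain ⟨D, hD, norm_pow_le⟩ := ha.exists_l1Norm_mul_heatStep_pow_le 0
  simp only [pow_zero, one_mul, div_one] at norm_pow_le
  obtain ⟨C₀, hC₀, parabolic₀⟩ := ha.exists_hasParabolicBound β_gt ρ r n
  obtain ⟨C₁, _, parabolic₁⟩ := ha.exists_hasParabolicBound β_gt ρ r (n + 1)
  obtain ⟨C₂, _, parabolic₂⟩ := ha.exists_hasParabolicBound β_gt ρ r (n + 2)
  have conv_pos : 0 < convConst (ρ / 2) (θ / 2 - 1) :=
    convConst_pos (by linarith [hρ.1]) (by linarith [hθ.1])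
  set C := max C₀ (max C₁ C₂)
  set B := convConst (ρ / 2) (θ / 2 - 1) * (l1Norm (d ^ n) * ((D + 1) * (1 + l1Norm q))) +
    l1Norm (d ^ n) / ((β - n) / 2 + 1) + convConst (ρ / 2) (θ / 2 - 1) * (2 * l1Norm (d ^ n))
  refine ⟨B * C, by positivity, fun {ε K Z M τ} hε hK hM hτ hN hZ k k' => ?_⟩
  have parabolic {κ : ℕ} {C' : ℝ} (hC' : C' ≤ C)
      (h : HasParabolicBound (heatStep a) β ρ κ (C' * K * ε ^ (ρ + β)) Z (M + τ)) :
      HasParabolicBound (heatStep a) β ρ κ (C * K * ε ^ (ρ + β)) Z (M + τ) :=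
    h.mono (by gcongr)
  rw [dheatConv_eq_duhamel a hd n hε, dheatConv_eq_duhamel a hd n hε, ← mul_sub, abs_mul,
    abs_of_pos (by positivity)]
  calc _ ≤ ε ^ (2 - n : ℝ) * (B * (C * K * ε ^ (ρ + β)) *
        max √τ |(k' : ℝ) - k| ^ (β + 2 - n - θ) * (M : ℝ) ^ ((ρ + θ) / 2)) := by
        gcongr
        exact (parabolic (by simp [C]) (parabolic₀ hε hK hN hZ)).abs_duhamel_sub_le
          (parabolic (by simp [C]) (parabolic₁ hε hK hN hZ))
          (parabolic (by simp [C]) (parabolic₂ hε hK hN hZ)) hρ hn hθ (by positivity) hq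
          norm_pow_le hM le_rfl hτ k k' _
    _ = _ := by
        rw [← rpow_mul_rpow_half hε M.cast_nonneg, Real.mul_rpow hε.le (by positivity), show
          ε ^ (2 - n : ℝ) = ε ^ (ρ + θ) * ε ^ (β + 2 - n - θ) / ε ^ (ρ + β) by
            rw [← Real.rpow_add hε, ← Real.rpow_sub hε]; ring_nf]
        field_simp

end GridConvolution

section Weights

/-! ### Parabolic weights -/

variable {a b : ℤ →₀ ℝ} {β ρ ε K : ℝ} {n r : ℕ}

lemma teps_sq_mul (hε : 0 < ε) {m : ℕ} (hm : 1 ≤ m) : teps ε (ε ^ 2 * m) = ε * √m := by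
  have one_le : 1 ≤ √(m : ℝ) := Real.one_le_sqrt.mpr (by exact_mod_cast hm)
  rw [teps, abs_of_nonneg (by positivity), Real.sqrt_mul (by positivity), Real.sqrt_sq hε.le]
  exact max_eq_left (le_mul_of_one_le_right hε.le one_le)

lemma teps_pos (hε : 0 < ε) (t : ℝ) : 0 < teps ε t :=
  hε.trans_le (le_max_right _ _)

lemma teps_le_teps {s t : ℝ} (hs : 0 ≤ s) (hst : s ≤ t) : teps ε s ≤ teps ε t := by
  unfold teps
  gcongr

lemma isHolderOnGrid_of_weighted {x : ℝ} {Z : ℤ → ℝ} (hε : 0 < ε) (hx : 0 < x)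
    (h : ∀ k : ℤ, ∀ lam ∈ Set.Icc ε 1, ∀ φ, IsTestFunction r φ →
      x ^ (-ρ) * lam ^ (-β) *
        |ε * ∑' j : ℤ, Z j * (lam⁻¹ * φ (lam⁻¹ * (ε * j - ε * k)))| ≤ K) :
    IsHolderOnGrid ε β r (K * x ^ ρ) Z := by
  intro k lam hlam φ hφ
  have lam_pos : 0 < lam := hε.trans_le hlam.1
  have weighted := h k lam hlam φ hφ
  rw [Real.rpow_neg hx.le, Real.rpow_neg lam_pos.le, ← mul_inv, inv_mul_le_iff₀ (by positivity)]
    at weighted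
  linarith

lemma div_rpow_mul_le {x X y B D s t : ℝ} (hx : 0 < x) (hxX : x ≤ X) (hy : 0 ≤ y) (hB : 0 ≤ B)
    (ht : 0 ≤ t) (h : D ≤ B * x ^ (s + t) * y) : D / (x ^ s * y) ≤ B * X ^ t := by
  have X_pos := hx.trans_le hxX
  refine div_le_of_le_mul₀ (by positivity) (by positivity) (h.trans ?_)
  calc B * x ^ (s + t) * y = B * x ^ t * (x ^ s * y) := by
        rw [Real.rpow_add hx]
        ring
    _ ≤ B * X ^ t * (x ^ s * y) := by gcongr

lemma rpow_neg_mul_le {x X B D s t : ℝ} (hx : 0 < x) (hxX : x ≤ X) (hB : 0 ≤ B) (ht : 0 ≤ t)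
    (h : D ≤ B * x ^ (s + t)) : x ^ (-s) * D ≤ B * X ^ t := by
  have := div_rpow_mul_le (s := s) (D := D) hx hxX zero_le_one hB ht (by rwa [mul_one])
  rwa [mul_one, div_eq_inv_mul, ← Real.rpow_neg hx.le] at this

lemma exists_abs_dheatConv_le_teps (ha : IsEllipticStencil a) (hb : ∑ k ∈ b.support, b k = 0)
    (hρ : ρ ∈ Set.Ioc (-2 : ℝ) 0) (hn : (n : ℝ) ∈ Set.Ico (β + 1) (β + 2)) (r : ℕ) :
    ∃ C, 0 ≤ C ∧ ∀ {ε K T : ℝ} {Z : ℕ → ℤ → ℝ}, 0 < ε → 0 ≤ K → T ≤ 1 →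
      (∀ m : ℕ, 1 ≤ m → ε ^ 2 * m ≤ T →
        IsHolderOnGrid ε β r (K * teps ε (ε ^ 2 * m) ^ ρ) (Z m)) →
      ∀ (M : ℕ) (k : ℤ), 1 ≤ M → ε ^ 2 * M ≤ T →
        |dheatConv a b n ε Z M k| ≤ C * K * teps ε (ε ^ 2 * M) ^ (ρ + β + 2 - n) := by
  obtain ⟨C, hC, conv_le⟩ := exists_abs_dheatConv_le ha hb hρ hn r
  refine ⟨C, hC, fun {ε K T Z} hε hK hT hZ M k hM hMT => ?_⟩
  rw [teps_sq_mul hε hM]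
  refine conv_le hε hK hM (hMT.trans hT) (fun m hm => ?_) k
  obtain ⟨one_le, m_le⟩ := Finset.mem_Icc.mp hm
  rw [← teps_sq_mul hε one_le]
  exact hZ m one_le (le_trans (by gcongr) hMT)

lemma exists_abs_dheatConv_sub_le_teps (ha : IsEllipticStencil a)
    (hb : ∑ k ∈ b.support, b k = 0) (hρ : ρ ∈ Set.Ioc (-2 : ℝ) 0) (hn : β + 1 ≤ n) {θ : ℝ}
    (hθ : θ ∈ Set.Ioo 0 (β + 2 - n)) (r : ℕ) :
    ∃ C, 0 ≤ C ∧ ∀ {ε K T : ℝ} {Z : ℕ → ℤ → ℝ}, 0 < ε → 0 ≤ K → T ≤ 1 →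
      (∀ m : ℕ, 1 ≤ m → ε ^ 2 * m ≤ T →
        IsHolderOnGrid ε β r (K * teps ε (ε ^ 2 * m) ^ ρ) (Z m)) →
      ∀ (M : ℕ) (k : ℤ) (M' : ℕ) (k' : ℤ), 1 ≤ M → ε ^ 2 * M ≤ T → 1 ≤ M' → ε ^ 2 * M' ≤ T →
        |ε ^ 2 * (M' : ℝ) - ε ^ 2 * M| ≤
          min (teps ε (ε ^ 2 * M)) (teps ε (ε ^ 2 * M')) ^ 2 →
        |dheatConv a b n ε Z M' k' - dheatConv a b n ε Z M k| ≤
          C * K * min (teps ε (ε ^ 2 * M)) (teps ε (ε ^ 2 * M')) ^ (ρ + θ) *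
            max √|ε ^ 2 * (M' : ℝ) - ε ^ 2 * M| |ε * k' - ε * k| ^ (β + 2 - n - θ) := by
  obtain ⟨C, hC, conv_sub_le⟩ := exists_abs_dheatConv_add_sub_le ha hb hρ hn hθ r
  refine ⟨C, hC, fun {ε K T Z} hε hK hT hZ M k M' k' hM hMT hM' hMT' hclose => ?_⟩
  wlog hMM' : M ≤ M' generalizing M k M' k'
  · rw [min_comm, abs_sub_comm] at hclose
    rw [min_comm, abs_sub_comm, abs_sub_comm (ε ^ 2 * (M' : ℝ)), abs_sub_comm (ε * (k' : ℝ))]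
    exact this M' k' M k hM' hMT' hM hMT hclose (le_of_not_ge hMM')
  obtain ⟨τ, rfl⟩ := Nat.exists_eq_add_of_le hMM'
  have time_diff : |ε ^ 2 * ((M + τ : ℕ) : ℝ) - ε ^ 2 * M| = ε ^ 2 * τ := by
    rw [Nat.cast_add, ← mul_sub, add_sub_cancel_left, abs_of_nonneg (by positivity)]
  rw [min_eq_left (teps_le_teps (by positivity) (by gcongr)), teps_sq_mul hε hM, time_diff]
    at hclose ⊢
  rw [mul_pow, Real.sq_sqrt M.cast_nonneg, mul_le_mul_iff_right₀ (by positivity), Nat.cast_le]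
    at hclose
  rw [Real.sqrt_mul (by positivity), Real.sqrt_sq hε.le, ← mul_sub, abs_mul, abs_of_pos hε,
    ← mul_max_of_nonneg _ _ hε.le]
  refine conv_sub_le hε hK hM hclose (hMT'.trans hT) (fun m hm => ?_) k k'
  obtain ⟨one_le, m_le⟩ := Finset.mem_Icc.mp hm
  rw [← teps_sq_mul hε one_le]
  exact hZ m one_le (le_trans (by gcongr) hMT')

end Weights

lemma isEllipticStencil_of_secondMoment_eq_two {a : ℤ →₀ ℝ} (ha_symm : ∀ k : ℤ, a (-k) = a k)
    (ha0 : ∑ k ∈ a.support, a k = 0) (ha2 : ∑ k ∈ a.support, (k : ℝ) ^ 2 * a k = 2)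
    (ha_four : ∀ θ : ℝ,
      ∑ k ∈ a.support, (a k : ℂ) * Complex.exp (-(2 * Real.pi * k * θ) * Complex.I) = 0 →
        ∃ z : ℤ, θ = z) :
    IsEllipticStencil a where
  symm := ha_symm
  sum_eq_zero := ha0
  secondMoment_pos := by rw [ha2]; exact two_pos
  symbol_ne_zero θ hθ := by
    refine ha_four θ (Eq.trans ?_ hθ)
    rw [symbol_stencil]
    refine Finset.sum_congr rfl fun k _ => ?_
    rw [symbol_T_apply]
    push_cast
    ring_nf

theorem statement7_general {a b : ℤ →₀ ℝ} (ha : IsEllipticStencil a)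
    (hb0 : ∑ k ∈ b.support, b k = 0) {β ρ : ℝ} {n : ℕ} (hρ : ρ ∈ Set.Ioc (-2 : ℝ) 0)
    (hn1 : β + 1 ≤ (n : ℝ)) {θ₁ θ₂ : ℝ} (hθ₁ : θ₁ ∈ Set.Ioo 0 (β - (n : ℝ) + 2))
    (hθ : 0 ≤ θ₁ - θ₂) (r : ℕ) :
    ∃ C : ℝ, 0 < C ∧ ∀ ε : ℝ, 0 < ε → ∀ T : ℝ, T ≤ 1 → ∀ Mc : ℝ, 0 ≤ Mc →
      ∀ ζ : ℕ → ℤ → ℝ,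
        (∀ m : ℕ, 1 ≤ m → ε ^ 2 * m ≤ T → ∀ k : ℤ,
          ∀ lam : ℝ, lam ∈ Set.Icc ε 1 →
          ∀ φ : ℝ → ℝ, IsTestFunction r φ →
          teps ε (ε ^ 2 * m) ^ (-ρ) * lam ^ (-β) *
            |ε * ∑' j : ℤ, ζ m j * (lam⁻¹ * φ (lam⁻¹ * (ε * j - ε * k)))| ≤ Mc) →
        (∀ (M : ℕ) (k : ℤ), 1 ≤ M → ε ^ 2 * M ≤ T →
          teps ε (ε ^ 2 * M) ^ (-((ρ + θ₂) + (β + 2 - (n : ℝ) - θ₁))) *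
            |dheatConv a b n ε ζ M k| ≤
            C * Mc * teps ε T ^ (θ₁ - θ₂)) ∧
        (∀ (M : ℕ) (k : ℤ) (M' : ℕ) (k' : ℤ),
            1 ≤ M → ε ^ 2 * M ≤ T → 1 ≤ M' → ε ^ 2 * M' ≤ T →
            (M', k') ≠ (M, k) →
            |ε ^ 2 * (M' : ℝ) - ε ^ 2 * M| ≤
              min (teps ε (ε ^ 2 * M)) (teps ε (ε ^ 2 * M')) ^ 2 →
          |dheatConv a b n ε ζ M' k' - dheatConv a b n ε ζ M k| /
            (min (teps ε (ε ^ 2 * M)) (teps ε (ε ^ 2 * M')) ^ (ρ + θ₂) *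
              max (Real.sqrt |ε ^ 2 * (M' : ℝ) - ε ^ 2 * M|) |ε * k' - ε * k| ^
                (β + 2 - (n : ℝ) - θ₁)) ≤
            C * Mc * teps ε T ^ (θ₁ - θ₂)) := by
  rw [sub_add_eq_add_sub] at hθ₁
  obtain ⟨C₁, hC₁, conv_le⟩ :=
    exists_abs_dheatConv_le_teps ha hb0 hρ ⟨hn1, by linarith [hθ₁.1, hθ₁.2]⟩ r
  obtain ⟨C₂, hC₂, conv_sub_le⟩ := exists_abs_dheatConv_sub_le_teps ha hb0 hρ hn1 hθ₁ r
  refine ⟨C₁ + C₂ + 1, by positivity, fun ε hε T hT Mc hMc ζ hζ => ?_⟩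
  have holder (m : ℕ) (hm : 1 ≤ m) (hmT : ε ^ 2 * m ≤ T) :
      IsHolderOnGrid ε β r (Mc * teps ε (ε ^ 2 * m) ^ ρ) (ζ m) :=
    isHolderOnGrid_of_weighted hε (teps_pos hε _) (hζ m hm hmT)
  constructor
  · intro M k hM hMT
    refine rpow_neg_mul_le (teps_pos hε _) (teps_le_teps (by positivity) hMT) (by positivity) hθ
      ((conv_le hε hMc hT holder M k hM hMT).trans ?_)
    rw [show ρ + θ₂ + (β + 2 - n - θ₁) + (θ₁ - θ₂) = ρ + β + 2 - n by ring]
    have := teps_pos hε (ε ^ 2 * M)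
    gcongr
    linarith
  · intro M k M' k' hM hMT hM' hMT' _ hclose
    have min_pos : 0 < min (teps ε (ε ^ 2 * M)) (teps ε (ε ^ 2 * M')) :=
      lt_min (teps_pos hε _) (teps_pos hε _)
    refine div_rpow_mul_le min_pos
      (min_le_of_left_le (teps_le_teps (by positivity) hMT)) (by positivity) (by positivity) hθ
      ((conv_sub_le hε hMc hT holder M k M' k' hM hMT hM' hMT' hclose).trans ?_)
    rw [show ρ + θ₂ + (θ₁ - θ₂) = ρ + θ₁ by ring]
    gcongr
    linarith

/-- discrete Schauder-type estimate for the discrete space-time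
convolution of `P^{(ε,n)} = D_{x,ε}^n P^ε` with a grid function, uniformly in
`ε`.  The grid function `ζ^ε` is represented by its values `ζ m j` at the grid
points `(ε² m, ε j)`. -/
theorem statement7
    (a : ℤ →₀ ℝ) (ha_symm : ∀ k : ℤ, a (-k) = a k)
    (ha0 : ∑ k ∈ a.support, a k = 0)
    (ha2 : ∑ k ∈ a.support, ((k : ℝ)) ^ 2 * a k = 2)
    (ha_four : ∀ θ : ℝ,
      (∑ k ∈ a.support, (a k : ℂ) * Complex.exp (-(2 * Real.pi * k * θ) * Complex.I)) = 0 →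
      ∃ z : ℤ, θ = (z : ℝ))
    (b : ℤ →₀ ℝ) (hb0 : ∑ k ∈ b.support, b k = 0)
    (hb1 : ∑ k ∈ b.support, (k : ℝ) * b k = 1)
    (β ρ : ℝ) (n r : ℕ)
    (hβ : -2 < β) (hρ : ρ ∈ Set.Ioc (-2 : ℝ) 0)
    (hn1 : β + 1 ≤ (n : ℝ)) (hn2 : (n : ℝ) < β + 2) (hr : |β| < (r : ℝ))
    (θ₁ θ₂ : ℝ) (hθ₁ : θ₁ ∈ Set.Ioo 0 (β - (n : ℝ) + 2)) (hθ : 0 < θ₁ - θ₂) :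
    ∃ C : ℝ, 0 < C ∧
      ∀ (N : ℕ) (ε : ℝ), ε = ((2 : ℝ) ^ N)⁻¹ →
      ∀ T : ℝ, T ∈ Set.Ioc (0 : ℝ) 1 → ∀ Mc : ℝ, 0 < Mc →
      ∀ ζ : ℕ → ℤ → ℝ,
        (∀ (m : ℕ) (j : ℤ), ζ m (j + 2 ^ N) = ζ m j) →
        (∀ m : ℕ, 1 ≤ m → ε ^ 2 * m ≤ T → ∀ k : ℤ,
          ∀ lam : ℝ, lam ∈ Set.Icc ε 1 →
          ∀ φ : ℝ → ℝ, IsTestFunction r φ →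
          teps ε (ε ^ 2 * m) ^ (-ρ) * lam ^ (-β) *
            |ε * ∑' j : ℤ, ζ m j * (lam⁻¹ * φ (lam⁻¹ * (ε * j - ε * k)))| ≤ Mc) →
        (∀ (M : ℕ) (k : ℤ), 1 ≤ M → ε ^ 2 * M ≤ T →
          teps ε (ε ^ 2 * M) ^ (-((ρ + θ₂) + (β + 2 - (n : ℝ) - θ₁))) *
            |dheatConv a b n ε ζ M k| ≤
            C * Mc * teps ε T ^ (θ₁ - θ₂)) ∧
        (∀ (M : ℕ) (k : ℤ) (M' : ℕ) (k' : ℤ),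
            1 ≤ M → ε ^ 2 * M ≤ T → 1 ≤ M' → ε ^ 2 * M' ≤ T →
            (M', k') ≠ (M, k) →
            |ε ^ 2 * (M' : ℝ) - ε ^ 2 * M| ≤
              min (teps ε (ε ^ 2 * M)) (teps ε (ε ^ 2 * M')) ^ 2 →
          |dheatConv a b n ε ζ M' k' - dheatConv a b n ε ζ M k| /
            (min (teps ε (ε ^ 2 * M)) (teps ε (ε ^ 2 * M')) ^ (ρ + θ₂) *
              max (Real.sqrt |ε ^ 2 * (M' : ℝ) - ε ^ 2 * M|) |ε * k' - ε * k| ^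
                (β + 2 - (n : ℝ) - θ₁)) ≤
            C * Mc * teps ε T ^ (θ₁ - θ₂)) := by
  obtain ⟨C, hC, schauder⟩ := statement7_general
    (isEllipticStencil_of_secondMoment_eq_two ha_symm ha0 ha2 ha_four) hb0 hρ hn1 hθ₁ hθ.le r
  exact ⟨C, hC, fun N ε hε T hT Mc hMc ζ _ hζ =>
    schauder ε (hε ▸ by positivity) T hT.2 Mc hMc.le ζ hζ⟩
end
end

section
/- Let a : ℤ → ℝ be finitely supported with a(−k) = a(k), Σ_k a(k) = 0, Σ_k k² a(k) = 2, and ν̂(θ) := Σ_k a(k) e^{−2πikθ} vanishing only for θ ∈ ℤ, and let P^ε be the associated grid discrete heat kernel. Then for every m ∈ ℕ there exists a constant C such that for all ε = 2^{−N}, all k = (k₀,k₁) ∈ ℕ² with |k|_s := 2k₀ + k₁ ≤ m, and all z = (t,x) ∈ ε²ℤ × εℤ with ‖z‖_s := |t|^{1/2} ∨ |x| ≤ 1, one has |D̄_ε^k P^ε(z)| ≤ C ‖z‖_{s,ε}^{−1−|k|_s}, where ‖z‖_{s,ε} := ‖z‖_s ∨ ε. (In other words, the localized part of the discrete heat kernel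 is a discrete singular kernel of order −1, uniformly in ε.) -/
open Real

noncomputable section


/-- Forward time difference `D̄_{t,ε²}` on grid functions (indexed form:
`f m j` is the value at the point `(ε² m, ε j)`). -/
def fdT (ε : ℝ) (f : ℤ → ℤ → ℝ) : ℤ → ℤ → ℝ :=
  fun m j => (f (m + 1) j - f m j) / ε ^ 2

/-- Forward space difference `D̄_{x,ε}` on grid functions. -/
def fdX (ε : ℝ) (f : ℤ → ℤ → ℝ) : ℤ → ℤ → ℝ :=
  fun m j => (f m (j + 1) - f m j) / ε

/-- Iterated forward differences `D̄_ε^k = D̄_{t,ε²}^{k₀} D̄_{x,ε}^{k₁}`. -/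
def fdiff (ε : ℝ) (k₀ k₁ : ℕ) (f : ℤ → ℤ → ℝ) : ℤ → ℤ → ℝ :=
  (fdT ε)^[k₀] ((fdX ε)^[k₁] f)

/-- Parabolic norm `‖z‖_s` of the grid point `z = (ε² m, ε j)`. -/
def snorm (ε : ℝ) (m j : ℤ) : ℝ :=
  max (Real.sqrt |ε ^ 2 * (m : ℝ)|) |ε * (j : ℝ)|

/-- `‖z‖_{s,ε} = ‖z‖_s ∨ ε` for the grid point `z = (ε² m, ε j)`. -/
def snormE (ε : ℝ) (m j : ℤ) : ℝ := max (snorm ε m j) ε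

/-- The grid function `K` is supported in the parabolic ball of radius `R`
around the origin. -/
def SuppIn (ε R : ℝ) (K : ℤ → ℤ → ℝ) : Prop :=
  ∀ m j : ℤ, R < snorm ε m j → K m j = 0

/-- `⦀K⦀_{ζ;m}^{(ε)} ≤ M`, expressed through the defining bounds. -/
def SingBound (ε ζ : ℝ) (m : ℕ) (M : ℝ) (K : ℤ → ℤ → ℝ) : Prop :=
  ∀ k₀ k₁ : ℕ, 2 * k₀ + k₁ ≤ m → ∀ mz j : ℤ,
    |fdiff ε k₀ k₁ K mz j| ≤ M * snormE ε mz j ^ (ζ - (2 * (k₀ : ℝ) + (k₁ : ℝ)))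
/-- The Fourier transform `ν̂(θ) = Σ_k a(k) e^{-2πikθ}`. -/
def nuHat (a : ℤ →₀ ℝ) (θ : ℝ) : ℂ :=
  ∑ k ∈ a.support, (a k : ℂ) * Complex.exp (-(2 * Real.pi * k * θ) * Complex.I)

/-- The grid discrete heat kernel `P^ε`, at the point `(ε² m, ε j)`, extended
by `0` to negative times. -/
def PfullG (a : ℤ →₀ ℝ) (ε : ℝ) : ℤ → ℤ → ℝ :=
  fun m j => if 0 ≤ m then ε⁻¹ * gridHeat a m.toNat j else 0


/-!
Parabolic scaling reduces every `ε` to `ε = 1`. For every real `s`, the difference of order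
`(k₀, k₁)` of the kernel at time `n ≥ 0` is `(2π)⁻¹` times the integral of
`(q(z) - 1)^k₀ (e^z - 1)^k₁ q(z)^n e^(jz)` over `Re z = s`, `|Im z| ≤ π`, where
`q(z) = 1 + (2ν̄)⁻¹ Σ_k a(k) e^(kz)` is the multiplier of one heat step.

On the imaginary axis `q` is real, nonnegative by the choice of the factor `(2ν̄)⁻¹`, and at most
`1 - cθ²` at `z = iθ`: near `0` by the second moment of `a`, elsewhere because `ν̂` does not vanish.
By symmetry of `a`, moving to `s + iθ` with `|s| ≤ 1` costs only `O(s² + |s||θ|)`, whence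
`|q(s + iθ)| ≤ exp(Cs² - cθ²)`. For `|s| = 1/r` with `r² = n + 1`, the power `q^n` is therefore
dominated by a Gaussian in `θ` of width `1/r`: the difference factors gain `r^(-2k₀-k₁)`,
integration over `θ` gains another `r⁻¹`, and `e^(jz)` gives the decay `e^(-|j|/r)`. At negative
times the differences live on the finitely many steps just before time `0`.
-/
open Complex (I)

section Differences

variable (ε : ℝ) (f : ℤ → ℤ → ℝ) (m j : ℤ)

lemma fdiff_succ_left (k₀ k₁ : ℕ) :
    fdiff ε (k₀ + 1) k₁ f m j = (fdiff ε k₀ k₁ f (m + 1) j - fdiff ε k₀ k₁ f m j) / ε ^ 2 := by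
  simp only [fdiff, Function.iterate_succ_apply', fdT]

lemma fdiff_zero_succ (k₁ : ℕ) :
    fdiff ε 0 (k₁ + 1) f m j = (fdiff ε 0 k₁ f m (j + 1) - fdiff ε 0 k₁ f m j) / ε := by
  simp only [fdiff, Function.iterate_zero_apply, Function.iterate_succ_apply', fdX]

lemma fdiff_const_mul (c : ℝ) (k₀ k₁ : ℕ) :
    fdiff ε k₀ k₁ (fun m j => c * f m j) m j =
      c * ε⁻¹ ^ (2 * k₀ + k₁) * fdiff 1 k₀ k₁ f m j := by
  induction k₀ generalizing m with
  | zero =>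
    induction k₁ generalizing j with
    | zero => simp [fdiff]
    | succ k₁ ih =>
      simp only [fdiff_zero_succ, ih]
      ring
  | succ k₀ ih =>
    simp only [fdiff_succ_left, ih]
    ring

variable {f}

lemma fdiff_zero_left_eq_zero {m : ℤ} (hf : ∀ j, f m j = 0) (k₁ : ℕ) :
    fdiff ε 0 k₁ f m j = 0 := by
  induction k₁ generalizing j with
  | zero => exact hf j
  | succ k₁ ih => simp only [fdiff_zero_succ, ih, sub_zero, zero_div]

/- Each time difference at a negative time looks one step closer to time `0`, so that data at time
`0` propagate backwards with a loss of a factor `e` per step, absorbed by the constant. -/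
lemma exists_abs_fdiff_le_exp_of_nonpos {g : ℤ → ℝ} (hg : ∀ j, 0 ≤ g j)
    (hf : ∀ m < 0, ∀ j, f m j = 0) (k₁ : ℕ)
    (hf₀ : ∀ k₀, ∃ B, 0 ≤ B ∧ ∀ j, |fdiff 1 k₀ k₁ f 0 j| ≤ B * g j) (k₀ : ℕ) :
    ∃ B, 0 ≤ B ∧ ∀ m ≤ 0, ∀ j, |fdiff 1 k₀ k₁ f m j| ≤ B * (rexp m * g j) := by
  induction k₀ with
  | zero =>
    obtain ⟨B, hB, h₀⟩ := hf₀ 0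
    refine ⟨B, hB, fun m hm j => ?_⟩
    rcases hm.eq_or_lt with rfl | hm
    · simpa using h₀ j
    · rw [fdiff_zero_left_eq_zero 1 j (hf m hm), abs_zero]
      exact mul_nonneg hB (mul_nonneg (Real.exp_pos _).le (hg j))
  | succ k₀ ih =>
    obtain ⟨B, hB, h₀⟩ := hf₀ (k₀ + 1)
    obtain ⟨B', hB', hprev⟩ := ih
    refine ⟨B + B' * (rexp 1 + 1), by positivity, fun m hm j => ?_⟩
    have hgj := hg j
    rcases hm.eq_or_lt with rfl | hm
    · refine (h₀ j).trans ?_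
      rw [Int.cast_zero, Real.exp_zero, one_mul]
      gcongr
      exact le_add_of_nonneg_right (by positivity)
    · have hnext : |fdiff 1 k₀ k₁ f (m + 1) j| ≤ B' * (rexp 1 * rexp m * g j) := by
        simpa [Real.exp_add, mul_comm (rexp 1)] using hprev (m + 1) hm j
      rw [fdiff_succ_left, one_pow, div_one]
      calc |fdiff 1 k₀ k₁ f (m + 1) j - fdiff 1 k₀ k₁ f m j|
          ≤ |fdiff 1 k₀ k₁ f (m + 1) j| + |fdiff 1 k₀ k₁ f m j| := abs_sub _ _
        _ ≤ B' * (rexp 1 * rexp m * g j) + B' * (rexp m * g j) :=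
            add_le_add hnext (hprev m hm.le j)
        _ = B' * (rexp 1 + 1) * (rexp m * g j) := by ring
        _ ≤ (B + B' * (rexp 1 + 1)) * (rexp m * g j) := by
            gcongr
            exact le_add_of_nonneg_left hB

end Differences

lemma snormE_eq_mul_snormE_one {ε : ℝ} (hε : 0 < ε) (m j : ℤ) :
    snormE ε m j = ε * snormE 1 m j := by
  simp only [snormE, snorm, mul_max_of_nonneg _ _ hε.le, one_pow, one_mul, mul_one, abs_mul,
    abs_of_pos hε, abs_of_pos (pow_pos hε 2), Real.sqrt_mul (sq_nonneg ε), Real.sqrt_sq hε.le]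

lemma one_le_snormE_one (m j : ℤ) : 1 ≤ snormE 1 m j := le_max_right _ _

lemma snormE_one_le {r : ℝ} (hr : 1 ≤ r) {m : ℤ} (hm : |(m : ℝ)| ≤ r ^ 2) (j : ℤ) :
    snormE 1 m j ≤ r + |(j : ℝ)| := by
  have hj := abs_nonneg (j : ℝ)
  rw [snormE, snorm, one_pow, one_mul, one_mul]
  refine max_le (max_le ?_ ?_) ?_
  · exact (Real.sqrt_le_left (by linarith)).2 hm |>.trans (by linarith)
  · linarith
  · linarith

/-- `F` represents `f : ℤ → ℝ` by inverse Fourier transform along the line `Re z = s`, where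
`z = s + iθ` with `θ ∈ [-π, π]`. For `2πi`-periodic entire `F` all lines are equivalent, and the
freedom to choose `s` yields the exponential spatial decay. -/
structure IsFourierRep (s : ℝ) (F : ℂ → ℂ) (f : ℤ → ℝ) : Prop where
  continuous : Continuous F
  eq_integral (j : ℤ) : (f j : ℂ) =
    (2 * π : ℂ)⁻¹ * ∫ θ : ℝ in (-π)..π, F (s + θ * I) * Complex.exp (j * (s + θ * I))

lemma integral_exp_intCast_mul_add_mul_I (s : ℝ) (j : ℤ) :
    ∫ θ : ℝ in (-π)..π, Complex.exp (j * (s + θ * I)) =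
      (if j = 0 then 2 * π else 0 : ℂ) := by
  split_ifs with hj
  · simp [hj, two_mul]
  · have hjI : (j : ℂ) * I ≠ 0 := by simp [hj]
    have hfactor (θ : ℝ) : Complex.exp (j * (s + θ * I)) =
        Complex.exp (j * s) * Complex.exp (j * I * θ) := by
      rw [← Complex.exp_add]
      ring_nf
    have hperiod : Complex.exp (j * I * π) = Complex.exp (j * I * (-π : ℝ)) :=
      Complex.exp_eq_exp_iff_exists_int.2 ⟨j, by push_cast; ring⟩
    simp_rw [hfactor]
    rw [intervalIntegral.integral_const_mul, integral_exp_mul_complex hjI, hperiod, sub_self,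
      zero_div, mul_zero]

lemma integral_inv_one_add_mul_sq_le {r : ℝ} (hr : 0 < r) (b : ℝ) :
    ∫ x in (-b)..b, (1 + (r * x) ^ 2)⁻¹ ≤ π / r := by
  rw [intervalIntegral.integral_comp_mul_left (fun x => (1 + x ^ 2)⁻¹) hr.ne',
    integral_inv_one_add_sq, smul_eq_mul, div_eq_inv_mul]
  gcongr
  linarith [Real.arctan_lt_pi_div_two (r * b), Real.neg_pi_div_two_lt_arctan (r * -b)]

namespace IsFourierRep

variable {s : ℝ} {F G : ℂ → ℂ} {f g : ℤ → ℝ}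

lemma intervalIntegrable (hf : IsFourierRep s F f) (j : ℤ) :
    IntervalIntegrable (fun θ : ℝ => F (s + θ * I) * Complex.exp (j * (s + θ * I)))
      MeasureTheory.volume (-π) π := by
  have := hf.continuous
  exact Continuous.intervalIntegrable (by fun_prop) _ _

lemma kronecker (s : ℝ) : IsFourierRep s (fun _ => 1) (fun j => if j = 0 then 1 else 0) where
  continuous := continuous_const
  eq_integral j := by
    have hpi : (2 * π : ℂ) ≠ 0 := by exact_mod_cast Real.two_pi_pos.ne'
    simp only [one_mul, integral_exp_intCast_mul_add_mul_I, mul_ite, mul_zero, inv_mul_cancel₀ hpi,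
      apply_ite Complex.ofReal, Complex.ofReal_one, Complex.ofReal_zero]

lemma add (hf : IsFourierRep s F f) (hg : IsFourierRep s G g) :
    IsFourierRep s (fun z => F z + G z) (fun j => f j + g j) where
  continuous := hf.continuous.add hg.continuous
  eq_integral j := by
    simp only [add_mul]
    rw [intervalIntegral.integral_add (hf.intervalIntegrable j) (hg.intervalIntegrable j), mul_add,
      ← hf.eq_integral, ← hg.eq_integral, Complex.ofReal_add]

lemma const_mul (c : ℝ) (hf : IsFourierRep s F f) :
    IsFourierRep s (fun z => c * F z) (fun j => c * f j) where
  continuous := hf.continuous.const_mul _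
  eq_integral j := by
    simp only [mul_assoc (c : ℂ)]
    rw [intervalIntegral.integral_const_mul, mul_left_comm, ← hf.eq_integral, Complex.ofReal_mul]

lemma sub (hf : IsFourierRep s F f) (hg : IsFourierRep s G g) :
    IsFourierRep s (fun z => F z - G z) (fun j => f j - g j) := by
  simpa [sub_eq_add_neg] using hf.add (hg.const_mul (-1))

lemma sum {ι : Type*} (t : Finset ι) {F : ι → ℂ → ℂ} {f : ι → ℤ → ℝ}
    (hf : ∀ i, IsFourierRep s (F i) (f i)) :
    IsFourierRep s (fun z => ∑ i ∈ t, F i z) (fun j => ∑ i ∈ t, f i j) where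
  continuous := continuous_finsetSum _ fun i _ => (hf i).continuous
  eq_integral j := by
    simp only [Finset.sum_mul]
    rw [intervalIntegral.integral_finsetSum fun i _ => (hf i).intervalIntegrable j,
      Finset.mul_sum, Complex.ofReal_sum]
    exact Finset.sum_congr rfl fun i _ => (hf i).eq_integral j

lemma translate (k : ℤ) (hf : IsFourierRep s F f) :
    IsFourierRep s (fun z => F z * Complex.exp (k * z)) (fun j => f (j + k)) where
  continuous := by
    have := hf.continuous
    fun_prop
  eq_integral j := by
    rw [hf.eq_integral]
    simp only [mul_assoc, ← Complex.exp_add, ← add_mul, Int.cast_add, add_comm (j : ℂ)]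

/- Bounding the integrand by a Cauchy density of width `1 / r` gains the factor `1 / r`. -/
protected lemma abs_le (hf : IsFourierRep s F f) {M r : ℝ} (hr : 0 < r)
    (hF : ∀ θ : ℝ, |θ| ≤ π → ‖F (s + θ * I)‖ ≤ M * (1 + (r * θ) ^ 2)⁻¹) (j : ℤ) :
    |f j| ≤ M / (2 * r) * rexp (j * s) := by
  have hM : 0 ≤ M := by simpa using (norm_nonneg _).trans (hF 0 (by simpa using Real.pi_pos.le))
  have hexp (θ : ℝ) : ‖Complex.exp (j * (s + θ * I))‖ = rexp (j * s) := by
    simp [Complex.norm_exp]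
  have hintegral : ‖∫ θ : ℝ in (-π)..π, F (s + θ * I) * Complex.exp (j * (s + θ * I))‖ ≤
      ∫ θ : ℝ in (-π)..π, M * rexp (j * s) * (1 + (r * θ) ^ 2)⁻¹ := by
    refine intervalIntegral.norm_integral_le_of_norm_le (by linarith [Real.pi_pos])
      (.of_forall fun θ hθ => ?_) (Continuous.intervalIntegrable ?_ _ _)
    · rw [norm_mul, hexp, mul_right_comm]
      gcongr
      exact hF θ (abs_le.2 ⟨hθ.1.le, hθ.2⟩)
    · exact continuous_const.mul (Continuous.inv₀ (by fun_prop) fun θ => by positivity)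
  rw [intervalIntegral.integral_const_mul] at hintegral
  calc |f j| = ‖(f j : ℂ)‖ := (Complex.norm_real _).symm
    _ ≤ (2 * π)⁻¹ * (M * rexp (j * s) * (π / r)) := by
        rw [hf.eq_integral, norm_mul, norm_inv, norm_mul, Complex.norm_real, Complex.norm_ofNat,
          Real.norm_of_nonneg Real.pi_pos.le]
        gcongr
        refine hintegral.trans ?_
        gcongr
        exact integral_inv_one_add_mul_sq_le hr π
    _ = M / (2 * r) * rexp (j * s) := by
        field_simp

end IsFourierRep

/-- The analytic continuation `z ↦ Σ_k a(k) e^{kz}` of the Fourier transform of `a`, normalised so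
that `ν̂(θ) = nuSymbol a (-2πiθ)`. -/
def nuSymbol (a : ℤ →₀ ℝ) (z : ℂ) : ℂ := ∑ k ∈ a.support, a k * Complex.exp (k * z)

/-- The factor `(2ν̄)⁻¹` in front of `Σ_k a(k) φ(x + εk)` in `ε²Δ_ε`. -/
def stepRate (a : ℤ →₀ ℝ) : ℝ := (2 * ∑ k ∈ a.support, |a k|)⁻¹

/-- The Fourier multiplier of one step `Id + ε²Δ_ε` of the discrete heat flow. -/
def stepSymbol (a : ℤ →₀ ℝ) (z : ℂ) : ℂ := 1 + stepRate a * nuSymbol a z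

lemma gridHeat_succ (a : ℤ →₀ ℝ) (n : ℕ) : gridHeat a (n + 1) = gridStep a (gridHeat a n) :=
  Function.iterate_succ_apply' _ _ _

namespace IsFourierRep

variable {s : ℝ} {F : ℂ → ℂ} {f : ℤ → ℝ}

protected lemma gridStep (a : ℤ →₀ ℝ) (hf : IsFourierRep s F f) :
    IsFourierRep s (fun z => F z * stepSymbol a z) (gridStep a f) := by
  have hsum := sum a.support fun k => (hf.translate k).const_mul (a k)
  convert hf.add (hsum.const_mul (stepRate a)) using 1
  · ext z
    simp only [stepSymbol, nuSymbol, mul_add, mul_one, Finset.mul_sum]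
    congr! 2
    ring
  · rfl

protected lemma gridHeat (a : ℤ →₀ ℝ) (s : ℝ) (n : ℕ) :
    IsFourierRep s (fun z => stepSymbol a z ^ n) (gridHeat a n) := by
  induction n with
  | zero => simpa only [pow_zero, gridHeat] using! kronecker s
  | succ n ih => simpa only [pow_succ, gridHeat_succ] using ih.gridStep a

lemma fdiff_PfullG (a : ℤ →₀ ℝ) (s : ℝ) (k₀ k₁ n : ℕ) :
    IsFourierRep s
      (fun z => (stepSymbol a z - 1) ^ k₀ * (Complex.exp z - 1) ^ k₁ * stepSymbol a z ^ n)
      (fdiff 1 k₀ k₁ (PfullG a 1) n) := by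
  induction k₀ generalizing n with
  | zero =>
    induction k₁ with
    | zero =>
      have hslice : PfullG a 1 n = gridHeat a n := by ext; simp [PfullG]
      simpa [fdiff, hslice] using IsFourierRep.gridHeat a s n
    | succ k₁ ih =>
      convert (ih.translate 1).sub ih using 2 with z j
      · push_cast
        ring_nf
      · rw [fdiff_zero_succ, div_one]
  | succ k₀ ih =>
    convert (ih (n + 1)).sub (ih n) using 2 with z j
    · ring
    · rw [fdiff_succ_left, one_pow, div_one]
      push_cast
      rfl

end IsFourierRep

lemma sum_support_mul_eq_zero_of_odd {a : ℤ →₀ ℝ} (ha_symm : ∀ k, a (-k) = a k) {f : ℤ → ℝ}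
    (hf : f.Odd) : ∑ k ∈ a.support, a k * f k = 0 := by
  refine Function.Odd.finsetSum_eq_zero (f := fun k => a k * f k) (fun k => ?_) ?_
  · simp only [ha_symm, hf k, mul_neg]
  · ext k
    simp [Finset.mem_map_equiv, ha_symm]

/-- The constant in the Taylor estimates of order `n` for `nuSymbol a` on the ball of radius `R`. -/
def taylorConst (a : ℤ →₀ ℝ) (R : ℝ) (n : ℕ) : ℝ :=
  ∑ k ∈ a.support, |a k| * (|(k : ℝ)| ^ n * rexp (R * |(k : ℝ)|))

section TaylorEstimates

variable (a : ℤ →₀ ℝ)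

lemma taylorConst_nonneg (R : ℝ) (n : ℕ) : 0 ≤ taylorConst a R n :=
  Finset.sum_nonneg fun _ _ => by positivity

lemma norm_nuSymbol_sub_moments_le {R : ℝ} {z : ℂ} (hz : ‖z‖ ≤ R) (n : ℕ) :
    ‖nuSymbol a z - ∑ m ∈ Finset.range n,
        (∑ k ∈ a.support, (a k : ℂ) * (k : ℂ) ^ m) * (z ^ m / (m.factorial : ℂ))‖ ≤
      taylorConst a R n * ‖z‖ ^ n := by
  have hremainder : nuSymbol a z - ∑ m ∈ Finset.range n,
        (∑ k ∈ a.support, (a k : ℂ) * (k : ℂ) ^ m) * (z ^ m / (m.factorial : ℂ)) =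
      ∑ k ∈ a.support, (a k : ℂ) *
        (Complex.exp (k * z) - ∑ m ∈ Finset.range n, (k * z) ^ m / (m.factorial : ℂ)) := by
    simp only [nuSymbol, mul_sub, Finset.sum_sub_distrib, Finset.mul_sum, Finset.sum_mul]
    rw [Finset.sum_comm]
    congr! 3
    ring
  rw [hremainder, taylorConst, Finset.sum_mul]
  refine norm_sum_le_of_le _ fun k _ => ?_
  rw [norm_mul, Complex.norm_real, Real.norm_eq_abs, mul_assoc]
  gcongr
  calc ‖Complex.exp (k * z) - ∑ m ∈ Finset.range n, (k * z) ^ m / (m.factorial : ℂ)‖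
      ≤ ‖k * z‖ ^ n * rexp ‖k * z‖ := Complex.norm_exp_sub_sum_le_norm_mul_exp _ n
    _ = |(k : ℝ)| ^ n * rexp (‖z‖ * |(k : ℝ)|) * ‖z‖ ^ n := by
        rw [norm_mul, Complex.norm_intCast, mul_pow, mul_comm ‖z‖]
        ring
    _ ≤ |(k : ℝ)| ^ n * rexp (R * |(k : ℝ)|) * ‖z‖ ^ n := by gcongr

variable {a}

lemma norm_nuSymbol_le (ha_symm : ∀ k, a (-k) = a k) (ha0 : ∑ k ∈ a.support, a k = 0)
    {R : ℝ} {z : ℂ} (hz : ‖z‖ ≤ R) :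
    ‖nuSymbol a z‖ ≤ taylorConst a R 2 * ‖z‖ ^ 2 := by
  have hmoment₀ : ∑ k ∈ a.support, (a k : ℂ) = 0 := mod_cast ha0
  have hmoment₁ : ∑ k ∈ a.support, (a k : ℂ) * k = 0 :=
    mod_cast sum_support_mul_eq_zero_of_odd ha_symm (f := fun k => (k : ℝ)) (by intro; simp)
  simpa [Finset.sum_range_succ, hmoment₀, hmoment₁] using norm_nuSymbol_sub_moments_le a hz 2

lemma norm_nuSymbol_sub_sq_le (ha_symm : ∀ k, a (-k) = a k) (ha0 : ∑ k ∈ a.support, a k = 0)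
    (ha2 : ∑ k ∈ a.support, (k : ℝ) ^ 2 * a k = 2) {R : ℝ} {z : ℂ} (hz : ‖z‖ ≤ R) :
    ‖nuSymbol a z - z ^ 2‖ ≤ taylorConst a R 3 * ‖z‖ ^ 3 := by
  have hmoment₀ : ∑ k ∈ a.support, (a k : ℂ) = 0 := mod_cast ha0
  have hmoment₁ : ∑ k ∈ a.support, (a k : ℂ) * k = 0 :=
    mod_cast sum_support_mul_eq_zero_of_odd ha_symm (f := fun k => (k : ℝ)) (by intro; simp)
  have hmoment₂ : ∑ k ∈ a.support, (a k : ℂ) * (k : ℂ) ^ 2 = 2 := by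
    simp only [mul_comm (a _ : ℂ)]
    exact_mod_cast ha2
  simpa [Finset.sum_range_succ, hmoment₀, hmoment₁, hmoment₂, mul_div_cancel₀]
    using norm_nuSymbol_sub_moments_le a hz 3

end TaylorEstimates

/-- The real cosine polynomial `θ ↦ Σ_k a(k) cos(kθ)`, which for symmetric `a` is the restriction of
`nuSymbol a` to the imaginary axis. -/
def nuCos (a : ℤ →₀ ℝ) (θ : ℝ) : ℝ := ∑ k ∈ a.support, a k * Real.cos (k * θ)

section CosinePolynomial

variable (a : ℤ →₀ ℝ)

lemma continuous_nuCos : Continuous (nuCos a) := by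
  unfold nuCos
  fun_prop

lemma nuCos_neg (θ : ℝ) : nuCos a (-θ) = nuCos a θ := by
  simp only [nuCos, mul_neg, Real.cos_neg]

lemma neg_sum_abs_le_nuCos (θ : ℝ) : -∑ k ∈ a.support, |a k| ≤ nuCos a θ := by
  refine neg_le_of_abs_le <| Finset.abs_sum_le_sum_abs _ _ |>.trans <|
    Finset.sum_le_sum fun k _ => ?_
  rw [abs_mul]
  exact mul_le_of_le_one_right (abs_nonneg _) (Real.abs_cos_le_one _)

variable {a} (ha_symm : ∀ k, a (-k) = a k)
include ha_symm

lemma nuSymbol_ofReal_mul_I (θ : ℝ) : nuSymbol a (θ * I) = nuCos a θ := by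
  have hsin := sum_support_mul_eq_zero_of_odd ha_symm (f := fun k => Real.sin (k * θ))
    (by intro k; simp)
  have hsymbol : nuSymbol a (θ * I) =
      ∑ k ∈ a.support, (a k : ℂ) * Complex.exp ((k * θ : ℝ) * I) := by
    simp [nuSymbol, mul_assoc]
  rw [hsymbol]
  apply Complex.ext
  · simp only [nuCos, Complex.re_sum, Complex.re_ofReal_mul, Complex.exp_ofReal_mul_I_re,
      Complex.ofReal_re]
  · simpa only [Complex.im_sum, Complex.im_ofReal_mul, Complex.exp_ofReal_mul_I_im,
      Complex.ofReal_im] using hsin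

lemma nuHat_eq_nuCos (θ : ℝ) : nuHat a θ = nuCos a (2 * π * θ) := by
  rw [← nuCos_neg, ← nuSymbol_ofReal_mul_I ha_symm, nuHat, nuSymbol]
  congr! 3
  push_cast
  ring

lemma nuCos_le_neg_half_sq (ha0 : ∑ k ∈ a.support, a k = 0)
    (ha2 : ∑ k ∈ a.support, (k : ℝ) ^ 2 * a k = 2) {R θ : ℝ} (hθ : |θ| ≤ R)
    (hsmall : taylorConst a R 3 * |θ| ≤ 1 / 2) : nuCos a θ ≤ -(1 / 2) * θ ^ 2 := by
  have hnorm : ‖(θ * I : ℂ)‖ = |θ| := by simp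
  have htaylor := norm_nuSymbol_sub_sq_le ha_symm ha0 ha2 (hnorm.trans_le hθ)
  have hreal : (nuCos a θ : ℂ) - (θ * I) ^ 2 = ((nuCos a θ + θ ^ 2 : ℝ) : ℂ) := by
    push_cast
    rw [mul_pow, Complex.I_sq]
    ring
  rw [nuSymbol_ofReal_mul_I ha_symm, hreal, hnorm, Complex.norm_real, Real.norm_eq_abs] at htaylor
  have hcubic : taylorConst a R 3 * |θ| ^ 3 ≤ 1 / 2 * θ ^ 2 := by
    rw [← sq_abs θ, pow_succ' |θ| 2, ← mul_assoc]
    gcongr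
  linarith [le_of_abs_le htaylor]

lemma nuCos_ne_zero (ha_four : ∀ θ : ℝ, nuHat a θ = 0 → ∃ z : ℤ, θ = (z : ℝ)) {θ : ℝ}
    (hθ : θ ∈ Set.Ioc 0 π) : nuCos a θ ≠ 0 := by
  intro hzero
  have hpi := Real.pi_pos
  obtain ⟨z, hz⟩ := ha_four (θ / (2 * π)) <| by
    rw [nuHat_eq_nuCos ha_symm, mul_div_cancel₀ _ (by positivity), hzero, Complex.ofReal_zero]
  have hz_pos : (0 : ℝ) < z := hz ▸ div_pos hθ.1 (by positivity)
  have hz_lt : (z : ℝ) < 1 := by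
    rw [← hz, div_lt_one (by positivity)]
    linarith [hθ.2]
  norm_cast at hz_pos hz_lt
  lia

end CosinePolynomial

lemma exists_le_neg_mul_sq_of_ne_zero {f : ℝ → ℝ} (hf : Continuous f) {b c δ : ℝ} (hc : 0 < c)
    (hδ : 0 < δ) (hnear : ∀ x ∈ Set.Icc 0 δ, f x ≤ -c * x ^ 2) (hne : ∀ x ∈ Set.Ioc 0 b, f x ≠ 0) :
    ∃ c' : ℝ, 0 < c' ∧ ∀ x ∈ Set.Icc 0 b, f x ≤ -c' * x ^ 2 := by
  have hneg : ∀ x ∈ Set.Icc δ b, f x < 0 := by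
    intro x hx
    by_contra! hfx
    have hfδ : f δ ≤ 0 := (hnear δ ⟨hδ.le, le_rfl⟩).trans (by nlinarith)
    obtain ⟨y, hy, hfy⟩ := intermediate_value_Icc hx.1 hf.continuousOn ⟨hfδ, hfx⟩
    exact hne y ⟨hδ.trans_le hy.1, hy.2.trans hx.2⟩ hfy
  rcases lt_or_ge b δ with hbδ | hδb
  · exact ⟨c, hc, fun x hx => hnear x ⟨hx.1, hx.2.trans hbδ.le⟩⟩
  obtain ⟨x₀, hx₀, hmax⟩ := isCompact_Icc.exists_isMaxOn (Set.nonempty_Icc.2 hδb) hf.continuousOn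
  have hb : 0 < b := hδ.trans_le hδb
  have hc₀ : 0 < -f x₀ / b ^ 2 := div_pos (neg_pos.2 (hneg x₀ hx₀)) (by positivity)
  refine ⟨min c (-f x₀ / b ^ 2), lt_min hc hc₀, fun x hx => ?_⟩
  rcases le_total x δ with hxδ | hδx
  · refine (hnear x ⟨hx.1, hxδ⟩).trans ?_
    gcongr
    exact min_le_left _ _
  · have hfx : f x ≤ f x₀ := hmax ⟨hδx, hx.2⟩
    have hscaled : min c (-f x₀ / b ^ 2) * x ^ 2 ≤ -f x₀ / b ^ 2 * b ^ 2 :=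
      mul_le_mul (min_le_right _ _) (pow_le_pow_left₀ hx.1 hx.2 2) (sq_nonneg x) hc₀.le
    rw [div_mul_cancel₀ _ (by positivity)] at hscaled
    linarith

lemma exists_nuCos_le_neg_mul_sq {a : ℤ →₀ ℝ} (ha_symm : ∀ k, a (-k) = a k)
    (ha0 : ∑ k ∈ a.support, a k = 0) (ha2 : ∑ k ∈ a.support, (k : ℝ) ^ 2 * a k = 2)
    (ha_four : ∀ θ : ℝ, nuHat a θ = 0 → ∃ z : ℤ, θ = (z : ℝ)) :
    ∃ c : ℝ, 0 < c ∧ ∀ θ : ℝ, |θ| ≤ π → nuCos a θ ≤ -c * θ ^ 2 := by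
  have hT := taylorConst_nonneg a 1 3
  set δ : ℝ := (2 * (taylorConst a 1 3 + 1))⁻¹ with hδ
  have hδ_pos : 0 < δ := by positivity
  have hδ_le : δ ≤ 1 := inv_le_one_of_one_le₀ (by linarith)
  have hTδ : taylorConst a 1 3 * δ ≤ 1 / 2 := by
    rw [hδ, ← div_eq_mul_inv, div_le_iff₀ (by positivity)]
    linarith
  obtain ⟨c, hc, hle⟩ := exists_le_neg_mul_sq_of_ne_zero (continuous_nuCos a) one_half_pos hδ_pos
    (fun θ hθ => nuCos_le_neg_half_sq ha_symm ha0 ha2 (R := 1)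
      (by rw [abs_of_nonneg hθ.1]; exact hθ.2.trans hδ_le)
      (by rw [abs_of_nonneg hθ.1]; exact (mul_le_mul_of_nonneg_left hθ.2 hT).trans hTδ))
    (fun θ hθ => nuCos_ne_zero ha_symm ha_four hθ)
  refine ⟨c, hc, fun θ hθ => ?_⟩
  have heven : nuCos a |θ| = nuCos a θ := by
    rcases abs_choice θ with h | h <;> rw [h]
    exact nuCos_neg a θ
  simpa only [heven, sq_abs] using hle |θ| ⟨abs_nonneg θ, hθ⟩

lemma norm_exp_add_mul_I_sub_exp_sub_le (x y : ℝ) :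
    ‖Complex.exp (x + y * I) - Complex.exp (y * I) - x‖ ≤ (x ^ 2 + |x| * |y|) * rexp |x| := by
  have hsplit : Complex.exp (x + y * I) - Complex.exp (y * I) - x =
      Complex.exp (y * I) * (Complex.exp x - 1 - x) + x * (Complex.exp (y * I) - 1) := by
    rw [Complex.exp_add]
    ring
  have hexp : ‖Complex.exp x - 1 - x‖ ≤ x ^ 2 * rexp |x| := by
    simpa [Finset.sum_range_succ, sub_sub] using
      Complex.norm_exp_sub_sum_le_norm_mul_exp (x : ℂ) 2
  have hphase : ‖Complex.exp (y * I) - 1‖ ≤ |y| := by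
    simpa only [mul_comm I, Real.norm_eq_abs] using
      Real.norm_exp_I_mul_ofReal_sub_one_le (x := y)
  calc ‖Complex.exp (x + y * I) - Complex.exp (y * I) - x‖
      ≤ ‖Complex.exp x - 1 - x‖ + |x| * ‖Complex.exp (y * I) - 1‖ := by
        rw [hsplit]
        refine (norm_add_le _ _).trans_eq ?_
        rw [norm_mul, norm_mul, Complex.norm_exp_ofReal_mul_I, one_mul, Complex.norm_real,
          Real.norm_eq_abs]
    _ ≤ x ^ 2 * rexp |x| + |x| * |y| * rexp |x| := by
        refine add_le_add hexp ?_
        calc |x| * ‖Complex.exp (y * I) - 1‖ ≤ |x| * |y| := by gcongr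
          _ ≤ |x| * |y| * rexp |x| :=
            le_mul_of_one_le_right (by positivity) (Real.one_le_exp (abs_nonneg x))
    _ = (x ^ 2 + |x| * |y|) * rexp |x| := by ring

/- By symmetry of `a` the linear terms `k s` cancel in the sum. -/
lemma norm_nuSymbol_add_mul_I_sub_le {a : ℤ →₀ ℝ} (ha_symm : ∀ k, a (-k) = a k) {R s : ℝ}
    (hs : |s| ≤ R) (θ : ℝ) :
    ‖nuSymbol a (s + θ * I) - nuCos a θ‖ ≤ taylorConst a R 2 * (s ^ 2 + |s| * |θ|) := by
  have hmoment₁ : ∑ k ∈ a.support, (a k : ℂ) * (k * s : ℝ) = 0 :=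
    mod_cast sum_support_mul_eq_zero_of_odd ha_symm (f := fun k => k * s) (by intro; simp)
  have hsum : nuSymbol a (s + θ * I) - nuCos a θ =
      ∑ k ∈ a.support, (a k : ℂ) * (Complex.exp ((k * s : ℝ) + (k * θ : ℝ) * I) -
        Complex.exp ((k * θ : ℝ) * I) - (k * s : ℝ)) := by
    simp only [mul_sub, Finset.sum_sub_distrib, hmoment₁, sub_zero,
      ← nuSymbol_ofReal_mul_I ha_symm, nuSymbol]
    push_cast
    simp only [mul_add, mul_assoc]
  rw [hsum, taylorConst, Finset.sum_mul]
  refine norm_sum_le_of_le _ fun k _ => ?_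
  rw [norm_mul, Complex.norm_real, Real.norm_eq_abs, mul_assoc]
  gcongr
  calc _ ≤ ((k * s) ^ 2 + |k * s| * |k * θ|) * rexp |k * s| :=
        norm_exp_add_mul_I_sub_exp_sub_le _ _
    _ = |(k : ℝ)| ^ 2 * rexp (|s| * |(k : ℝ)|) * (s ^ 2 + |s| * |θ|) := by
        rw [abs_mul, abs_mul, sq_abs, mul_comm |s| |(k : ℝ)|]
        linear_combination |s| * |θ| * rexp (|(k : ℝ)| * |s|) * sq_abs (k : ℝ)
    _ ≤ |(k : ℝ)| ^ 2 * rexp (R * |(k : ℝ)|) * (s ^ 2 + |s| * |θ|) := by gcongr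

lemma stepRate_pos {a : ℤ →₀ ℝ} (ha2 : ∑ k ∈ a.support, (k : ℝ) ^ 2 * a k = 2) :
    0 < stepRate a := by
  have hsupport : a.support.Nonempty := by
    by_contra! hempty
    simp [hempty] at ha2
  exact inv_pos.2 <| mul_pos two_pos <|
    Finset.sum_pos (fun _ hk => abs_pos.2 (Finsupp.mem_support_iff.1 hk)) hsupport

lemma stepRate_nonneg (a : ℤ →₀ ℝ) : 0 ≤ stepRate a := by
  unfold stepRate
  positivity

lemma one_add_stepRate_mul_nuCos_nonneg (a : ℤ →₀ ℝ) (θ : ℝ) :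
    0 ≤ 1 + stepRate a * nuCos a θ := by
  have hrate : stepRate a * ∑ k ∈ a.support, |a k| ≤ 1 := by
    rw [stepRate, mul_inv, mul_assoc]
    linarith [inv_mul_le_one (a := ∑ k ∈ a.support, |a k|)]
  linarith [mul_le_mul_of_nonneg_left (neg_sum_abs_le_nuCos a θ) (stepRate_nonneg a)]

/- Off the imaginary axis the linear term `|s||θ|` of the perturbation is absorbed by Young's
inequality into the negative quadratic bound for `nuCos`. -/
lemma exists_norm_stepSymbol_le_exp {a : ℤ →₀ ℝ} (ha_symm : ∀ k, a (-k) = a k)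
    (ha0 : ∑ k ∈ a.support, a k = 0) (ha2 : ∑ k ∈ a.support, (k : ℝ) ^ 2 * a k = 2)
    (ha_four : ∀ θ : ℝ, nuHat a θ = 0 → ∃ z : ℤ, θ = (z : ℝ)) :
    ∃ c C : ℝ, 0 < c ∧ 0 ≤ C ∧ ∀ s θ : ℝ, |s| ≤ 1 → |θ| ≤ π →
      ‖stepSymbol a (s + θ * I)‖ ≤ rexp (C * s ^ 2 - c * θ ^ 2) := by
  obtain ⟨c, hc, hcos⟩ := exists_nuCos_le_neg_mul_sq ha_symm ha0 ha2 ha_four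
  have hrate := stepRate_pos ha2
  set T := taylorConst a 1 2
  have hT : 0 ≤ T := taylorConst_nonneg a 1 2
  refine ⟨stepRate a * (c / 2), stepRate a * (T + T ^ 2 / (2 * c)), by positivity, by positivity,
    fun s θ hs hθ => ?_⟩
  have hsplit : stepSymbol a (s + θ * I) = ((1 + stepRate a * nuCos a θ : ℝ) : ℂ) +
      stepRate a * (nuSymbol a (s + θ * I) - nuCos a θ) := by
    rw [stepSymbol]
    push_cast
    ring
  have hnorm : ‖stepSymbol a (s + θ * I)‖ ≤
      1 + stepRate a * nuCos a θ + stepRate a * (T * (s ^ 2 + |s| * |θ|)) := by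
    rw [hsplit]
    refine (norm_add_le _ _).trans ?_
    rw [norm_mul, Complex.norm_real, Complex.norm_real,
      Real.norm_of_nonneg (one_add_stepRate_mul_nuCos_nonneg a θ), Real.norm_of_nonneg hrate.le]
    gcongr
    exact norm_nuSymbol_add_mul_I_sub_le ha_symm hs θ
  have hyoung : T * (|s| * |θ|) ≤ T ^ 2 / (2 * c) * s ^ 2 + c / 2 * θ ^ 2 := by
    have hsq : T ^ 2 / (2 * c) * |s| ^ 2 + c / 2 * |θ| ^ 2 - T * (|s| * |θ|) =
        (T * |s| - c * |θ|) ^ 2 / (2 * c) := by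
      field_simp
      ring
    rw [← sub_nonneg, ← sq_abs s, ← sq_abs θ, hsq]
    positivity
  calc ‖stepSymbol a (s + θ * I)‖
      ≤ 1 + stepRate a * nuCos a θ + stepRate a * (T * (s ^ 2 + |s| * |θ|)) := hnorm
    _ = stepRate a * (nuCos a θ + T * s ^ 2 + T * (|s| * |θ|)) + 1 := by ring
    _ ≤ stepRate a * (-c * θ ^ 2 + T * s ^ 2 + (T ^ 2 / (2 * c) * s ^ 2 + c / 2 * θ ^ 2)) + 1 := by
        gcongr
        exact hcos θ hθ
    _ = stepRate a * (T + T ^ 2 / (2 * c)) * s ^ 2 - stepRate a * (c / 2) * θ ^ 2 + 1 := by ring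
    _ ≤ _ := Real.add_one_le_exp _

lemma one_add_pow_mul_exp_neg_le (p : ℕ) {x : ℝ} (hx : 0 ≤ x) :
    (1 + x) ^ p * rexp (-x) ≤ p.factorial * rexp 1 := by
  have hpow := Real.pow_div_factorial_le_exp (1 + x) (by positivity) p
  rw [div_le_iff₀' (by positivity)] at hpow
  calc (1 + x) ^ p * rexp (-x) ≤ p.factorial * rexp (1 + x) * rexp (-x) := by gcongr
    _ = p.factorial * rexp 1 := by rw [mul_assoc, ← Real.exp_add, add_neg_cancel_right]

lemma exists_one_add_pow_mul_exp_neg_mul_sq_le {c : ℝ} (hc : 0 < c) (p : ℕ) :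
    ∃ B : ℝ, 0 ≤ B ∧ ∀ u : ℝ, 0 ≤ u →
      (1 + u) ^ p * rexp (-c * u ^ 2) ≤ B * (1 + u ^ 2)⁻¹ := by
  refine ⟨(p + 2).factorial * rexp 1 * rexp (1 / (4 * c)), by positivity, fun u hu => ?_⟩
  have hexp : rexp (-c * u ^ 2) ≤ rexp (-u) * rexp (1 / (4 * c)) := by
    have hsq : 1 / (4 * c) - u + c * u ^ 2 = (2 * c * u - 1) ^ 2 / (4 * c) := by
      field_simp
      ring
    have hsq_nonneg : 0 ≤ (2 * c * u - 1) ^ 2 / (4 * c) := by positivity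
    rw [← Real.exp_add, Real.exp_le_exp]
    linarith
  rw [← div_eq_mul_inv, le_div_iff₀ (by positivity)]
  calc (1 + u) ^ p * rexp (-c * u ^ 2) * (1 + u ^ 2)
      ≤ (1 + u) ^ p * (rexp (-u) * rexp (1 / (4 * c))) * (1 + u) ^ 2 := by
        gcongr
        nlinarith
    _ = (1 + u) ^ (p + 2) * rexp (-u) * rexp (1 / (4 * c)) := by ring
    _ ≤ (p + 2).factorial * rexp 1 * rexp (1 / (4 * c)) :=
        mul_le_mul_of_nonneg_right (one_add_pow_mul_exp_neg_le (p + 2) hu)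
          (Real.exp_pos _).le

lemma mul_pow_le_of_le_exp_neg {A B r x ρ : ℝ} {p : ℕ} (hB : 0 ≤ B) (hr : 0 < r) (hx : 0 ≤ x)
    (hρ : 0 ≤ ρ) (hρ_le : ρ ≤ r * (1 + x)) (hA : A ≤ B * r⁻¹ ^ p * rexp (-x)) :
    A * ρ ^ p ≤ B * (p.factorial * rexp 1) := by
  calc A * ρ ^ p ≤ B * r⁻¹ ^ p * rexp (-x) * (r * (1 + x)) ^ p := by gcongr
    _ = B * (r⁻¹ * r) ^ p * ((1 + x) ^ p * rexp (-x)) := by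
        rw [mul_pow r, mul_pow _ r]
        ring
    _ = B * ((1 + x) ^ p * rexp (-x)) := by
        rw [inv_mul_cancel₀ hr.ne', one_pow, mul_one]
    _ ≤ B * (p.factorial * rexp 1) :=
        mul_le_mul_of_nonneg_left (one_add_pow_mul_exp_neg_le p hx) hB

lemma norm_differenceSymbols_le {a : ℤ →₀ ℝ} (ha_symm : ∀ k, a (-k) = a k)
    (ha0 : ∑ k ∈ a.support, a k = 0) {R : ℝ} {z : ℂ} (hz : ‖z‖ ≤ R) (k₀ k₁ : ℕ) :
    ‖(stepSymbol a z - 1) ^ k₀ * (Complex.exp z - 1) ^ k₁‖ ≤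
      (stepRate a * taylorConst a R 2) ^ k₀ * rexp R ^ k₁ * ‖z‖ ^ (2 * k₀ + k₁) := by
  have hrate := stepRate_nonneg a
  have hconst := taylorConst_nonneg a R 2
  have hstep : ‖stepSymbol a z - 1‖ ≤ stepRate a * taylorConst a R 2 * ‖z‖ ^ 2 := by
    rw [stepSymbol, add_sub_cancel_left, norm_mul, Complex.norm_real, Real.norm_of_nonneg hrate,
      mul_assoc]
    gcongr
    exact norm_nuSymbol_le ha_symm ha0 hz
  have hexp : ‖Complex.exp z - 1‖ ≤ rexp R * ‖z‖ := by
    calc ‖Complex.exp z - 1‖ ≤ ‖z‖ * rexp ‖z‖ := by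
          simpa using Complex.norm_exp_sub_sum_le_norm_mul_exp z 1
      _ ≤ rexp R * ‖z‖ := by
          rw [mul_comm]
          gcongr
  calc ‖(stepSymbol a z - 1) ^ k₀ * (Complex.exp z - 1) ^ k₁‖
      ≤ (stepRate a * taylorConst a R 2 * ‖z‖ ^ 2) ^ k₀ * (rexp R * ‖z‖) ^ k₁ := by
        rw [norm_mul, norm_pow, norm_pow]
        gcongr
    _ = (stepRate a * taylorConst a R 2) ^ k₀ * rexp R ^ k₁ * ‖z‖ ^ (2 * k₀ + k₁) := by
        rw [mul_pow _ (‖z‖ ^ 2), mul_pow _ ‖z‖, ← pow_mul, pow_add]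
        ring

section KernelBounds

variable {a : ℤ →₀ ℝ} (ha_symm : ∀ k, a (-k) = a k) (ha0 : ∑ k ∈ a.support, a k = 0)
  (ha2 : ∑ k ∈ a.support, (k : ℝ) ^ 2 * a k = 2)
  (ha_four : ∀ θ : ℝ, nuHat a θ = 0 → ∃ z : ℤ, θ = (z : ℝ))
include ha_symm ha0 ha2 ha_four

lemma exists_norm_stepSymbol_pow_le :
    ∃ c D : ℝ, 0 < c ∧ 0 ≤ D ∧ ∀ (n : ℕ) {r s θ : ℝ}, 1 ≤ r → r ^ 2 = n + 1 → |s| = r⁻¹ →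
      |θ| ≤ π → ‖stepSymbol a (s + θ * I) ^ n‖ ≤ D * rexp (-c * (r * |θ|) ^ 2) := by
  obtain ⟨c, C, hc, hC, hbound⟩ := exists_norm_stepSymbol_le_exp ha_symm ha0 ha2 ha_four
  refine ⟨c, rexp (C + c * π ^ 2), hc, (Real.exp_pos _).le, fun n r s θ hr hrn hs hθ => ?_⟩
  have hs_le : |s| ≤ 1 := hs ▸ inv_le_one_of_one_le₀ hr
  have hns : n * s ^ 2 ≤ 1 := by
    rw [← sq_abs, hs, inv_pow, ← div_eq_mul_inv, div_le_one (by positivity), hrn]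
    linarith
  have hθ_sq : θ ^ 2 ≤ π ^ 2 := sq_le_sq' (abs_le.1 hθ).1 (abs_le.1 hθ).2
  calc ‖stepSymbol a (s + θ * I) ^ n‖
      ≤ rexp (C * s ^ 2 - c * θ ^ 2) ^ n := by
        rw [norm_pow]
        exact pow_le_pow_left₀ (norm_nonneg _) (hbound s θ hs_le hθ) n
    _ ≤ rexp (C + c * π ^ 2 + -c * (r * |θ|) ^ 2) := by
        rw [← Real.exp_nat_mul, Real.exp_le_exp, mul_pow, sq_abs, hrn]
        linarith [mul_le_mul_of_nonneg_left hns hC, mul_le_mul_of_nonneg_left hθ_sq hc.le]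
    _ = rexp (C + c * π ^ 2) * rexp (-c * (r * |θ|) ^ 2) := Real.exp_add _ _

lemma exists_norm_fdiffSymbol_le (k₀ k₁ : ℕ) :
    ∃ W : ℝ, 0 ≤ W ∧ ∀ (n : ℕ) {r s θ : ℝ}, 1 ≤ r → r ^ 2 = n + 1 → |s| = r⁻¹ → |θ| ≤ π →
      ‖(stepSymbol a (s + θ * I) - 1) ^ k₀ * (Complex.exp (s + θ * I) - 1) ^ k₁ *
          stepSymbol a (s + θ * I) ^ n‖ ≤
        W * r⁻¹ ^ (2 * k₀ + k₁) * (1 + (r * θ) ^ 2)⁻¹ := by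
  obtain ⟨c, D, hc, hD, hpow⟩ := exists_norm_stepSymbol_pow_le ha_symm ha0 ha2 ha_four
  obtain ⟨B, hB, hpoly⟩ := exists_one_add_pow_mul_exp_neg_mul_sq_le hc (2 * k₀ + k₁)
  set A := (stepRate a * taylorConst a (1 + π) 2) ^ k₀ * rexp (1 + π) ^ k₁
  have hA : 0 ≤ A := by
    have := stepRate_nonneg a
    have := taylorConst_nonneg a (1 + π) 2
    positivity
  refine ⟨A * D * B, by positivity, fun n r s θ hr hrn hs hθ => ?_⟩
  have hr_pos : 0 < r := one_pos.trans_le hr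
  have hz : ‖(s + θ * I : ℂ)‖ ≤ |s| + |θ| := by simpa using norm_add_le (s : ℂ) (θ * I)
  have hz_scaled : ‖(s + θ * I : ℂ)‖ ≤ r⁻¹ * (1 + r * |θ|) := by
    rwa [mul_add, mul_one, inv_mul_cancel_left₀ hr_pos.ne', ← hs]
  have hz_le : ‖(s + θ * I : ℂ)‖ ≤ 1 + π :=
    hz.trans (add_le_add (hs ▸ inv_le_one_of_one_le₀ hr) hθ)
  calc _ ≤ A * ‖(s + θ * I : ℂ)‖ ^ (2 * k₀ + k₁) * (D * rexp (-c * (r * |θ|) ^ 2)) := by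
        rw [norm_mul]
        gcongr
        · exact norm_differenceSymbols_le ha_symm ha0 hz_le k₀ k₁
        · exact hpow n hr hrn hs hθ
    _ ≤ A * (r⁻¹ * (1 + r * |θ|)) ^ (2 * k₀ + k₁) * (D * rexp (-c * (r * |θ|) ^ 2)) := by gcongr
    _ = A * D * r⁻¹ ^ (2 * k₀ + k₁) *
          ((1 + r * |θ|) ^ (2 * k₀ + k₁) * rexp (-c * (r * |θ|) ^ 2)) := by
        rw [mul_pow]
        ring
    _ ≤ A * D * r⁻¹ ^ (2 * k₀ + k₁) * (B * (1 + (r * |θ|) ^ 2)⁻¹) :=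
        mul_le_mul_of_nonneg_left (hpoly (r * |θ|) (by positivity)) (by positivity)
    _ = A * D * B * r⁻¹ ^ (2 * k₀ + k₁) * (1 + (r * θ) ^ 2)⁻¹ := by
        rw [mul_pow r, sq_abs, ← mul_pow]
        ring

/- Shifting the contour by `s = -sign(j) / r` gives the exponential decay in `|j| / r`. -/
lemma exists_abs_fdiff_PfullG_one_le (k₀ k₁ : ℕ) :
    ∃ B : ℝ, 0 ≤ B ∧ ∀ (n : ℕ) (j : ℤ) {r : ℝ}, 1 ≤ r → r ^ 2 = n + 1 →
      |fdiff 1 k₀ k₁ (PfullG a 1) n j| ≤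
        B * r⁻¹ ^ (2 * k₀ + k₁ + 1) * rexp (-(|(j : ℝ)| / r)) := by
  obtain ⟨W, hW, hsymbol⟩ := exists_norm_fdiffSymbol_le ha_symm ha0 ha2 ha_four k₀ k₁
  refine ⟨W / 2, by positivity, fun n j r hr hrn => ?_⟩
  have hr_inv : 0 < r⁻¹ := inv_pos.2 (one_pos.trans_le hr)
  obtain ⟨s, hs, hjs⟩ : ∃ s : ℝ, |s| = r⁻¹ ∧ j * s = -(|(j : ℝ)| / r) := by
    rcases abs_cases (j : ℝ) with ⟨hj, -⟩ | ⟨hj, -⟩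
    · exact ⟨-r⁻¹, by rw [abs_neg, abs_of_pos hr_inv], by rw [hj]; ring⟩
    · exact ⟨r⁻¹, abs_of_pos hr_inv, by rw [hj]; ring⟩
  have hkernel := (IsFourierRep.fdiff_PfullG a s k₀ k₁ n).abs_le (one_pos.trans_le hr)
    (fun θ hθ => hsymbol n hr hrn hs hθ) j
  rw [hjs] at hkernel
  convert hkernel using 1
  ring

lemma exists_abs_fdiff_PfullG_one_le_of_nonpos (k₀ k₁ : ℕ) :
    ∃ B : ℝ, 0 ≤ B ∧ ∀ m ≤ (0 : ℤ), ∀ j : ℤ,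
      |fdiff 1 k₀ k₁ (PfullG a 1) m j| ≤ B * (rexp m * rexp (-|(j : ℝ)|)) := by
  refine exists_abs_fdiff_le_exp_of_nonpos (f := PfullG a 1) (g := fun j => rexp (-|(j : ℝ)|))
    (fun j => (Real.exp_pos _).le) (fun m hm j => if_neg hm.not_ge) k₁ (fun k₀ => ?_) k₀
  obtain ⟨B, hB, hbound⟩ := exists_abs_fdiff_PfullG_one_le ha_symm ha0 ha2 ha_four k₀ k₁
  exact ⟨B, hB, fun j => by simpa using hbound 0 j le_rfl (by simp)⟩

lemma exists_abs_fdiff_PfullG_one_mul_snormE_pow_le (k₀ k₁ : ℕ) :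
    ∃ B : ℝ, ∀ m j : ℤ,
      |fdiff 1 k₀ k₁ (PfullG a 1) m j| * snormE 1 m j ^ (2 * k₀ + k₁ + 1) ≤ B := by
  obtain ⟨B, hB, hpos⟩ := exists_abs_fdiff_PfullG_one_le ha_symm ha0 ha2 ha_four k₀ k₁
  obtain ⟨B', -, hneg⟩ := exists_abs_fdiff_PfullG_one_le_of_nonpos ha_symm ha0 ha2 ha_four k₀ k₁
  refine ⟨max B B' * ((2 * k₀ + k₁ + 1).factorial * rexp 1), fun m j => ?_⟩
  have hρ : 0 ≤ snormE 1 m j := zero_le_one.trans (one_le_snormE_one m j)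
  have hmax : 0 ≤ max B B' := hB.trans (le_max_left _ _)
  rcases le_total m 0 with hm | hm
  · have hm_abs : |(m : ℝ)| = -m := abs_of_nonpos (mod_cast hm)
    have hm_nonneg : 0 ≤ -(m : ℝ) := hm_abs ▸ abs_nonneg _
    refine mul_pow_le_of_le_exp_neg (x := |(j : ℝ)| - m) hmax one_pos
      (by linarith [abs_nonneg (j : ℝ)]) hρ ?_ ?_
    · refine (snormE_one_le (r := 1 - m) (by linarith) ?_ j).trans_eq (by ring)
      rw [hm_abs]
      nlinarith
    · refine (hneg m hm j).trans ?_
      rw [← Real.exp_add, inv_one, one_pow, mul_one, neg_sub, ← sub_eq_add_neg]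
      gcongr
      exact le_max_right _ _
  · lift m to ℕ using hm
    have hr : 1 ≤ √((m : ℝ) + 1) := Real.one_le_sqrt.2 (by linarith [Nat.cast_nonneg (α := ℝ) m])
    have hr_sq : √((m : ℝ) + 1) ^ 2 = m + 1 := Real.sq_sqrt (by positivity)
    refine mul_pow_le_of_le_exp_neg (r := √(m + 1)) (x := |(j : ℝ)| / √(m + 1)) hmax (by positivity)
      (by positivity) hρ ?_ ?_
    · refine (snormE_one_le hr ?_ j).trans_eq (by field_simp)
      simp [hr_sq]
    · refine (hpos m j hr hr_sq).trans ?_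
      gcongr
      exact le_max_left _ _

end KernelBounds

lemma abs_fdiff_PfullG_mul_snormE_pow (a : ℤ →₀ ℝ) {ε : ℝ} (hε : 0 < ε) (k₀ k₁ : ℕ) (m j : ℤ) :
    |fdiff ε k₀ k₁ (PfullG a ε) m j| * snormE ε m j ^ (2 * k₀ + k₁ + 1) =
      |fdiff 1 k₀ k₁ (PfullG a 1) m j| * snormE 1 m j ^ (2 * k₀ + k₁ + 1) := by
  have hscale : PfullG a ε = fun m j => ε⁻¹ * PfullG a 1 m j := by
    ext
    simp [PfullG]
  rw [hscale, fdiff_const_mul, snormE_eq_mul_snormE_one hε, abs_mul,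
    abs_of_pos (by positivity : 0 < ε⁻¹ * ε⁻¹ ^ (2 * k₀ + k₁)), ← pow_succ', mul_pow, inv_pow]
  field_simp

theorem statement8_general (a : ℤ →₀ ℝ)
    (ha_symm : ∀ k : ℤ, a (-k) = a k)
    (ha0 : ∑ k ∈ a.support, a k = 0)
    (ha2 : ∑ k ∈ a.support, ((k : ℝ)) ^ 2 * a k = 2)
    (ha_four : ∀ θ : ℝ, nuHat a θ = 0 → ∃ z : ℤ, θ = (z : ℝ)) (m : ℕ) :
    ∃ C : ℝ, 0 < C ∧ ∀ ε : ℝ, 0 < ε → SingBound ε (-1) m C (PfullG a ε) := by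
  choose B hB using exists_abs_fdiff_PfullG_one_mul_snormE_pow_le ha_symm ha0 ha2 ha_four
  obtain ⟨C, hC⟩ :=
    ((Finset.range (m + 1) ×ˢ Finset.range (m + 1)).image fun k => B k.1 k.2).exists_le
  refine ⟨max C 1, by positivity, fun ε hε k₀ k₁ hk tm j => ?_⟩
  have hBC : B k₀ k₁ ≤ max C 1 := by
    refine (hC _ <| Finset.mem_image.2 ⟨(k₀, k₁), ?_, rfl⟩).trans (le_max_left _ _)
    simp only [Finset.mem_product, Finset.mem_range]
    lia
  have hρ : 0 < snormE ε tm j := hε.trans_le (le_max_right _ _)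
  have hexponent : (-1 - (2 * (k₀ : ℝ) + k₁)) = -((2 * k₀ + k₁ + 1 : ℕ) : ℝ) := by
    push_cast
    ring
  rw [hexponent, Real.rpow_neg hρ.le, Real.rpow_natCast, ← div_eq_mul_inv,
    le_div_iff₀ (by positivity), abs_fdiff_PfullG_mul_snormE_pow a hε]
  exact (hB k₀ k₁ tm j).trans hBC

/-- the discrete heat kernel is, on the parabolic unit ball, a
discrete singular kernel of order `-1`, uniformly in `ε`. -/
theorem statement8 (a : ℤ →₀ ℝ)
    (ha_symm : ∀ k : ℤ, a (-k) = a k)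
    (ha0 : ∑ k ∈ a.support, a k = 0)
    (ha2 : ∑ k ∈ a.support, ((k : ℝ)) ^ 2 * a k = 2)
    (ha_four : ∀ θ : ℝ, nuHat a θ = 0 → ∃ z : ℤ, θ = (z : ℝ)) :
    ∀ m : ℕ, ∃ C : ℝ, 0 < C ∧
      ∀ (N : ℕ) (ε : ℝ), ε = ((2 : ℝ) ^ N)⁻¹ →
      ∀ k₀ k₁ : ℕ, 2 * k₀ + k₁ ≤ m →
      ∀ tm j : ℤ, snorm ε tm j ≤ 1 →
        |fdiff ε k₀ k₁ (PfullG a ε) tm j| ≤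
          C * snormE ε tm j ^ (-1 - (2 * (k₀ : ℝ) + (k₁ : ℝ))) := by
  intro m
  obtain ⟨C, hC, hsing⟩ := statement8_general a ha_symm ha0 ha2 ha_four m
  exact ⟨C, hC, fun N ε hε k₀ k₁ hk tm j _ => hsing ε (hε ▸ by positivity) k₀ k₁ hk tm j⟩
end
end
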